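/- Let $K$ be an algebraically closed field and let $\Gamma$ be a finite tree with a cyclic ordering of the edges around every vertex (a Brauer tree of multiplicity one). The vertices of its Brauer quiver $Q$ are the edges of $\Gamma$; for every edge $i$ and every end point $v$ of $i$ there is an arrow $i\to j$, where $j$ is the successor of $i$ in the cyclic ordering around $v$ (a loop if $v$ has valency one). So $Q$ is a union of oriented cycles, one for each vertex of $\Gamma$, and each vertex of $Q$ lies on two of them. Let $A=KQ/I$ be the basic Brauer tree algebra, where $I$ is generated by the products of two consecutive arrows from different cycles and, for each vertex $x$ of $Q$, by the difference of the two closed paths at $x$ that run once around the two cycles through $x$. Modules are left modules, and in $KQ$ the product $ab$ means first $a$, then $b$. An $A$-cycle is a maximal ordered set of nonrepeating arrows of $Q$ such that the product in $A$ of any two neighbouring arrows is nonzero. Let $T=(P_0\xrightarrow{f}P_1)$, with $P_0=\bigoplus_{i\in I}Ae_i$ in degree $0$ and $P_1=\bigoplus_{j\in J}Ae_j$ in degree $1$ for sets $I,J$ of vertices of $Q$, be an indecomposable partial tilting complex (that is, $\mathrm{Hom}_{D^b(A)}(T,T[k])=0$ for all $k\ne0$) that is the minimal projective presentation of an indecomposable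 non-projective module which is not isomorphic to $P/\mathrm{soc}(P)$ for any indecomposable projective module $P$. The diagram of $T$ is the following part of $Q$: the vertices in $I\cup J$, called marked, together with, for all $i\in I$, $j\in J$ such that the component $Ae_i\to Ae_j$ of $f$ is nonzero, all arrows and vertices of the path from $i$ to $j$ inside the oriented cycle of $Q$ containing both. For two such complexes $T_i,T_j$ the restriction of $T_i$ with respect to $T_j$ is the intersection of the diagram of $T_i$ with the union of those $A$-cycles that contain at least one marked vertex of $T_j$. Let $T_i$ and $T_j$ be two such complexes. Assume that the intersection of their diagrams (the common vertices and common arrows) has exactly one connected component, that it contains more than one vertex, and that one end point of it is a sink and the other one is a source (an end point is a vertex incident to exactly one arrow of the intersection). Then $$\mathrm{Hom}_{D^b(A)}(T_i,T_j[-1])=0=\mathrm{Hom}_{D^b(A)}(T_j,T_i[-1])$$ if and only if the restriction of $T_i$ with respect to $T_j$ is contained in the restriction of $T_j$ with respect to $T_i$, or vice versa. -/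

import Mathlib

open CategoryTheory CategoryTheory.Limits

universe u v w

/-- A Brauer tree (of multiplicity one) on the vertex set `V`: a tree together with a cyclic
ordering of the edges around every vertex.  A dart `d` is an edge `d.edge` seen from its
end point `d.fst`; `next d` is the edge following `d.edge` in the cyclic ordering around `d.fst`. -/
structure BrauerTree (V : Type v) where
  graph : SimpleGraph V
  isTree : graph.IsTree
  next : Equiv.Perm graph.Dart
  next_fst : ∀ d, (next d).fst = d.fst
  next_sameCycle : ∀ d d' : graph.Dart, d.fst = d'.fst → next.SameCycle d d'

namespace BrauerTree

variable {V : Type v} (Γ : BrauerTree V)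

/-- The edges of `Γ`, which are the vertices of the Brauer quiver. -/
abbrev Edge : Type v := Γ.graph.edgeSet

/-- The arrows of the Brauer quiver: every dart `d` gives the arrow from `d.edge` to
`(next d).edge`.  (At an end vertex of the tree this is a loop.) -/
abbrev Arrow : Type v := Γ.graph.Dart

/-- The source of an arrow of the Brauer quiver. -/
def src (d : Γ.Arrow) : Γ.Edge := ⟨d.edge, d.edge_mem⟩

/-- The target of an arrow of the Brauer quiver. -/
def tgt (d : Γ.Arrow) : Γ.Edge := Γ.src (Γ.next d)

noncomputable instance [Fintype V] : Fintype Γ.Edge := Fintype.ofFinite _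

/-! ### The algebra -/

/-- Generators of the path algebra of the Brauer quiver: trivial paths and arrows. -/
inductive Gen : Type v
  | idem (x : Γ.Edge) : Gen
  | arrow (d : Γ.Arrow) : Gen

variable (K : Type u) [Field K]

/-- The trivial path at `x`, in the free algebra. -/
def freeIdem (x : Γ.Edge) : FreeAlgebra K Γ.Gen := FreeAlgebra.ι K (Gen.idem x)

/-- The arrow `d`, in the free algebra. -/
def freeArrow (d : Γ.Arrow) : FreeAlgebra K Γ.Gen := FreeAlgebra.ι K (Gen.arrow d)

/-- The closed path starting with the arrow `d` and running once through the oriented cycle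
of the quiver that contains `d`. -/
noncomputable def freeCycle (d : Γ.Arrow) : FreeAlgebra K Γ.Gen :=
  ((List.range (Function.minimalPeriod Γ.next d)).map
    fun k => Γ.freeArrow K (Γ.next^[k] d)).prod

/-- The defining relations of the Brauer tree algebra.  The first five families are those of
the path algebra of the quiver (a product `a * b` means first `a`, then `b`); the last two are
the Brauer relations: the product of two consecutive arrows of different cycles is zero, and the
two cycles through a vertex of the quiver are equal.  The two arrows starting at a given vertex
of the quiver are `d` and `d.symm`. -/
inductive Rel [Fintype V] : FreeAlgebra K Γ.Gen → FreeAlgebra K Γ.Gen → Prop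
  | idem_mul_self (x : Γ.Edge) : Rel (Γ.freeIdem K x * Γ.freeIdem K x) (Γ.freeIdem K x)
  | idem_mul_idem (x y : Γ.Edge) (h : x ≠ y) : Rel (Γ.freeIdem K x * Γ.freeIdem K y) 0
  | sum_idem : Rel (∑ x : Γ.Edge, Γ.freeIdem K x) 1
  | src_mul (d : Γ.Arrow) : Rel (Γ.freeIdem K (Γ.src d) * Γ.freeArrow K d) (Γ.freeArrow K d)
  | mul_tgt (d : Γ.Arrow) : Rel (Γ.freeArrow K d * Γ.freeIdem K (Γ.tgt d)) (Γ.freeArrow K d)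
  | arrow_mul_arrow (d : Γ.Arrow) :
      Rel (Γ.freeArrow K d * Γ.freeArrow K (Γ.next d).symm) 0
  | cycle_eq (d : Γ.Arrow) : Rel (Γ.freeCycle K d) (Γ.freeCycle K d.symm)

variable [Fintype V]

/-- The basic Brauer tree algebra `A` of `Γ` over `K`, with multiplicity one. -/
def Alg : Type (max u v) := RingQuot (Γ.Rel K)

noncomputable instance : Ring (Γ.Alg K) := inferInstanceAs (Ring (RingQuot (Γ.Rel K)))

noncomputable instance : Algebra K (Γ.Alg K) := inferInstanceAs (Algebra K (RingQuot (Γ.Rel K)))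

/-- The quotient map onto `A`. -/
noncomputable def toAlg : FreeAlgebra K Γ.Gen →ₐ[K] Γ.Alg K := RingQuot.mkAlgHom K (Γ.Rel K)

/-- The primitive idempotent of `A` at a vertex of the quiver. -/
noncomputable def idem (x : Γ.Edge) : Γ.Alg K := Γ.toAlg K (Γ.freeIdem K x)

/-- The class of an arrow in `A`. -/
noncomputable def arrow (d : Γ.Arrow) : Γ.Alg K := Γ.toAlg K (Γ.freeArrow K d)

/-- The indecomposable projective left module `A e_x`. -/
noncomputable abbrev proj (x : Γ.Edge) : Submodule (Γ.Alg K) (Γ.Alg K) :=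
  Submodule.span (Γ.Alg K) {Γ.idem K x}

/-- A nonempty ordered set of nonrepeating arrows such that the product of any two
neighbouring arrows is nonzero in `A`. -/
def IsArrowChain (l : List Γ.Arrow) : Prop :=
  l ≠ [] ∧ l.Nodup ∧ l.IsChain fun d d' => Γ.arrow K d * Γ.arrow K d' ≠ 0

/-- An `A`-cycle: a maximal ordered set of nonrepeating arrows such that the product of any two
neighbouring arrows is nonzero. -/
def IsACycle (l : List Γ.Arrow) : Prop :=
  Γ.IsArrowChain K l ∧ ∀ l', Γ.IsArrowChain K l' → l <:+: l' → l' = l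

/-! ### Subquivers -/

/-- A set of vertices and a set of arrows of the Brauer quiver. -/
@[ext] structure Part where
  verts : Set Γ.Edge
  arrows : Set Γ.Arrow

namespace Part

variable {Γ}

/-- `D` is contained in `D'`. -/
def Contained (D D' : Γ.Part) : Prop := D.verts ⊆ D'.verts ∧ D.arrows ⊆ D'.arrows

/-- The intersection of `D` and `D'`. -/
def inter (D D' : Γ.Part) : Γ.Part := ⟨D.verts ∩ D'.verts, D.arrows ∩ D'.arrows⟩

/-- `D` has exactly one connected component: it is nonempty and any two of its vertices are
joined by an unoriented path of arrows of `D`. -/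
def Connected (D : Γ.Part) : Prop :=
  D.verts.Nonempty ∧ ∀ x ∈ D.verts, ∀ y ∈ D.verts,
    Relation.EqvGen (fun x y => ∃ d ∈ D.arrows, Γ.src d = x ∧ Γ.tgt d = y) x y

/-- `x` is an end point of `D` (it is incident to exactly one arrow of `D`) and a sink. -/
def IsSinkEnd (D : Γ.Part) (x : Γ.Edge) : Prop :=
  ∃ d ∈ D.arrows, Γ.tgt d = x ∧ ∀ d' ∈ D.arrows, Γ.src d' = x ∨ Γ.tgt d' = x → d' = d

/-- `x` is an end point of `D` (it is incident to exactly one arrow of `D`) and a source. -/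
def IsSourceEnd (D : Γ.Part) (x : Γ.Edge) : Prop :=
  ∃ d ∈ D.arrows, Γ.src d = x ∧ ∀ d' ∈ D.arrows, Γ.src d' = x ∨ Γ.tgt d' = x → d' = d

end Part

/-- The arrow `d` lies on the path of the quiver from `x` to `y`, that is, on the path that
starts at `x`, stays in one oriented cycle of the quiver and stops when it first reaches `y`.
For `x ≠ y` there is at most one such path, since `Γ` is a tree. -/
def OnPath (x y : Γ.Edge) (d : Γ.Arrow) : Prop :=
  ∃ (d₀ : Γ.Arrow) (r : ℕ), Γ.src d₀ = x ∧ Γ.src (Γ.next^[r] d₀) = y ∧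
    (∀ k < r, Γ.src (Γ.next^[k] d₀) ≠ y) ∧ ∃ k < r, d = Γ.next^[k] d₀

end BrauerTree

/-! ### Modules -/

/-- The socle of a module: the sum of its simple submodules. -/
def moduleSocle (R : Type u) (M : Type v) [Ring R] [AddCommGroup M] [Module R M] :
    Submodule R M :=
  sSup {N | IsSimpleModule R N}

/-- A submodule `N` of `M` is superfluous if `N + L = M` only for `L = M`. -/
def Submodule.IsSuperfluous {R : Type u} {M : Type v} [Ring R] [AddCommGroup M] [Module R M]
    (N : Submodule R M) : Prop :=
  ∀ L : Submodule R M, N ⊔ L = ⊤ → L = ⊤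

/-! ### Two-term complexes and their diagrams -/

/-- A two-term complex `P₀ → P₁` of projective modules over the Brauer tree algebra of `Γ`, where
`P₀ = ⨁_{i ∈ I} A e_i` and `P₁ = ⨁_{j ∈ J} A e_j` for sets `I`, `J` of vertices of the quiver. -/
structure TwoTermComplex {V : Type v} [Fintype V] (Γ : BrauerTree V) (K : Type u) [Field K] where
  I : Finset Γ.Edge
  J : Finset Γ.Edge
  f : (∀ i : I, Γ.proj K i) →ₗ[Γ.Alg K] (∀ j : J, Γ.proj K j)

namespace TwoTermComplex

variable {V : Type v} [Fintype V] {Γ : BrauerTree V} {K : Type u} [Field K]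

/-- The cochain complex with `P₀` in degree `0` and `P₁` in degree `1`. -/
noncomputable def complex (T : TwoTermComplex Γ K) :
    CochainComplex (ModuleCat.{max u v} (Γ.Alg K)) ℤ :=
  HomologicalComplex.double (ModuleCat.ofHom T.f)
    (show (ComplexShape.up ℤ).Rel 0 1 from rfl)

/-- The complex as an object of the derived category. -/
noncomputable def obj (T : TwoTermComplex Γ K)
    [HasDerivedCategory.{w} (ModuleCat.{max u v} (Γ.Alg K))] :
    DerivedCategory (ModuleCat.{max u v} (Γ.Alg K)) :=
  DerivedCategory.Q.obj T.complex

/-- `Hom(S, T[k]) = 0` in the derived category. -/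
def HomZero (S T : TwoTermComplex Γ K) (k : ℤ)
    [HasDerivedCategory.{w} (ModuleCat.{max u v} (Γ.Alg K))] : Prop :=
  ∀ g : S.obj ⟶ T.obj⟦k⟧, g = 0

/-- `T` is an indecomposable partial tilting complex. -/
def IsIndecPartialTilting (T : TwoTermComplex Γ K)
    [HasDerivedCategory.{w} (ModuleCat.{max u v} (Γ.Alg K))] : Prop :=
  Indecomposable T.obj ∧ ∀ k : ℤ, k ≠ 0 → T.HomZero T k

/-- The module presented by `T`, namely the cokernel of `P₀ → P₁`. -/
abbrev Cok (T : TwoTermComplex Γ K) : Type (max u v) :=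
  (∀ j : T.J, Γ.proj K j) ⧸ LinearMap.range T.f

/-- `T` is the minimal projective presentation of its cokernel `M`: both `P₁ → M` and
`P₀ → Im f = Ker (P₁ → M)` are projective covers. -/
def IsMinimal (T : TwoTermComplex Γ K) : Prop :=
  (LinearMap.range T.f).IsSuperfluous ∧ (LinearMap.ker T.f).IsSuperfluous

/-- `T` is the minimal projective presentation of an indecomposable non-projective module which
is not isomorphic to `P / soc P` for any indecomposable projective module `P`. -/
def IsPresentation (T : TwoTermComplex Γ K) : Prop :=
  T.IsMinimal ∧
  Indecomposable (ModuleCat.of (Γ.Alg K) T.Cok) ∧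
  ¬ Module.Projective (Γ.Alg K) T.Cok ∧
  ∀ P : ModuleCat.{max u v} (Γ.Alg K), Indecomposable P → Module.Projective (Γ.Alg K) P →
    IsEmpty (T.Cok ≃ₗ[Γ.Alg K] (P ⧸ moduleSocle (Γ.Alg K) P))

open scoped Classical in
/-- The component `A e_i → A e_j` of the differential. -/
noncomputable def comp (T : TwoTermComplex Γ K) (i : T.I) (j : T.J) :
    Γ.proj K i →ₗ[Γ.Alg K] Γ.proj K j :=
  LinearMap.proj j ∘ₗ T.f ∘ₗ LinearMap.single (Γ.Alg K) (fun i : T.I => Γ.proj K i) i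

/-- The marked vertices of the diagram of `T`. -/
def marked (T : TwoTermComplex Γ K) : Set Γ.Edge := {x | x ∈ T.I ∨ x ∈ T.J}

/-- The arrows of the diagram of `T`: those on the path from `i ∈ I` to `j ∈ J`, whenever the
differential has a nonzero component from `A e_i` to `A e_j`. -/
def diagramArrows (T : TwoTermComplex Γ K) : Set Γ.Arrow :=
  {d | ∃ (i : T.I) (j : T.J), T.comp i j ≠ 0 ∧ Γ.OnPath i j d}

/-- The diagram of `T` on the quiver of `A`. -/
def diagram (T : TwoTermComplex Γ K) : Γ.Part where
  verts := T.marked ∪ {x | ∃ d ∈ T.diagramArrows, Γ.src d = x ∨ Γ.tgt d = x}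
  arrows := T.diagramArrows

/-- The restriction of `S` with respect to `T`: the intersection of the diagram of `S` with the
union of the `A`-cycles that contain at least one marked vertex of `T`. -/
def restriction (S T : TwoTermComplex Γ K) : Γ.Part where
  verts := {x | x ∈ S.diagram.verts ∧ ∃ l, Γ.IsACycle K l ∧
    (∃ d ∈ l, Γ.src d ∈ T.marked) ∧ ∃ d ∈ l, Γ.src d = x}
  arrows := {a | a ∈ S.diagram.arrows ∧ ∃ l, Γ.IsACycle K l ∧
    (∃ d ∈ l, Γ.src d ∈ T.marked) ∧ a ∈ l}

end TwoTermComplex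

set_option linter.unusedSectionVars false

/-! ### Morphisms between two-term complexes of projective objects -/

namespace TwoTerm

variable {C : Type u} [Category.{v} C] [Abelian C]

/-- The two-term cochain complex in degrees `0` and `1`. -/
noncomputable abbrev cx {X₀ X₁ : C} (f : X₀ ⟶ X₁) : CochainComplex C ℤ :=
  HomologicalComplex.double f (show (ComplexShape.up ℤ).Rel 0 1 from rfl)

lemma isKProjective_cx {X₀ X₁ : C} (f : X₀ ⟶ X₁) [Projective X₀] [Projective X₁] :
    (cx f).IsKProjective := by
  have hle : (cx f).IsStrictlyLE 1 := by
    rw [CochainComplex.isStrictlyLE_iff]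
    intro i hi
    exact HomologicalComplex.isZero_double_X _ _ _ (by lia) (by lia)
  have hproj : ∀ n : ℤ, Projective ((cx f).X n) := by
    intro n
    by_cases h0 : n = 0
    · subst h0
      exact Projective.of_iso (HomologicalComplex.doubleXIso₀ f _).symm inferInstance
    by_cases h1 : n = 1
    · subst h1
      exact Projective.of_iso (HomologicalComplex.doubleXIso₁ f _ (by lia)).symm inferInstance
    · have := HomologicalComplex.isZero_double_X f
        (show (ComplexShape.up ℤ).Rel 0 1 from rfl) n h0 h1
      exact Projective.of_iso this.isoZero.symm inferInstance
  exact CochainComplex.isKProjective_of_projective _ 1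

/-- Vanishing of shifted morphisms in the derived category is vanishing up to homotopy. -/
lemma homZero_iff_homotopy [HasDerivedCategory.{w} C] (X Y : CochainComplex C ℤ)
    [X.IsKProjective] (k : ℤ) :
    (∀ g : DerivedCategory.Q.obj X ⟶ (DerivedCategory.Q.obj Y)⟦k⟧, g = 0) ↔
      ∀ g : X ⟶ Y⟦k⟧, Nonempty (Homotopy g 0) := by
  let e : (DerivedCategory.Q.obj (Y⟦k⟧)) ≅ (DerivedCategory.Q.obj Y)⟦k⟧ :=
    (DerivedCategory.Q.commShiftIso k).app Y
  let iX := (DerivedCategory.quotientCompQhIso C).app X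
  let iY := (DerivedCategory.quotientCompQhIso C).app (Y⟦k⟧)
  have hb := CochainComplex.IsKProjective.Qh_map_bijective X
    ((HomotopyCategory.quotient _ _).obj (Y⟦k⟧))
  constructor
  · intro h g
    have h1 := h (iX.inv ≫ DerivedCategory.Qh.map ((HomotopyCategory.quotient _ _).map g) ≫
      iY.hom ≫ e.hom)
    have h2 : DerivedCategory.Qh.map ((HomotopyCategory.quotient _ _).map g) = 0 := by
      rw [← cancel_epi iX.inv, ← cancel_mono (iY.hom ≫ e.hom)]
      simpa using h1
    have h3 : (HomotopyCategory.quotient C (ComplexShape.up ℤ)).map g = 0 :=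
      hb.1 (by rw [h2, Functor.map_zero])
    exact ⟨HomotopyCategory.homotopyOfEq _ _ (by rw [h3, Functor.map_zero])⟩
  · intro h g
    obtain ⟨g', hg'⟩ := hb.2 (iX.hom ≫ g ≫ e.inv ≫ iY.inv)
    obtain ⟨g'', rfl⟩ := (HomotopyCategory.quotient C (ComplexShape.up ℤ)).map_surjective g'
    obtain ⟨ho⟩ := h g''
    rw [HomotopyCategory.eq_of_homotopy _ _ ho, Functor.map_zero, Functor.map_zero] at hg'
    rw [← cancel_epi iX.hom, ← cancel_mono (e.inv ≫ iY.inv)]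
    simpa using hg'.symm

lemma exists_shift_isos {Y₀ Y₁ : C} (g : Y₀ ⟶ Y₁) (k a b : ℤ) (ha : a + k = 0) (hb : b + k = 1) :
    ∃ (j₀ : ((cx g)⟦k⟧).X a ≅ Y₀) (j₁ : ((cx g)⟦k⟧).X b ≅ Y₁),
      ((cx g)⟦k⟧).d a b = k.negOnePow • (j₀.hom ≫ g ≫ j₁.inv) := by
  have r01 : (ComplexShape.up ℤ).Rel 0 1 := rfl
  refine ⟨(cx g).shiftFunctorObjXIso k a 0 ha.symm ≪≫ HomologicalComplex.doubleXIso₀ g r01,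
    (cx g).shiftFunctorObjXIso k b 1 hb.symm ≪≫ HomologicalComplex.doubleXIso₁ g r01 (by lia), ?_⟩
  have h := HomologicalComplex.double_d g r01 (by lia)
  simp only [Iso.trans_hom, Iso.trans_inv, Category.assoc]
  rw [← reassoc_of% h]
  have e0 : a + k = 0 := ha
  obtain rfl : a = -k := by lia
  obtain rfl : b = -k + 1 := by lia
  rw [CochainComplex.shiftFunctor_obj_d']
  simp only [CochainComplex.shiftFunctorObjXIso]
  erw [HomologicalComplex.XIsoOfEq_hom_comp_d_assoc, HomologicalComplex.d_comp_XIsoOfEq_inv]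
  rfl

lemma isZero_shift_X {Y₀ Y₁ : C} (g : Y₀ ⟶ Y₁) (k n : ℤ) (h0 : n + k ≠ 0) (h1 : n + k ≠ 1) :
    IsZero (((cx g)⟦k⟧).X n) :=
  HomologicalComplex.isZero_double_X g (show (ComplexShape.up ℤ).Rel 0 1 from rfl) (n + k) h0 h1

lemma homZero_neg_one_iff [HasDerivedCategory.{w} C] {X₀ X₁ Y₀ Y₁ : C} (f : X₀ ⟶ X₁)
    (g : Y₀ ⟶ Y₁) [Projective X₀] [Projective X₁] :
    (∀ h : DerivedCategory.Q.obj (cx f) ⟶ (DerivedCategory.Q.obj (cx g))⟦(-1 : ℤ)⟧, h = 0) ↔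
      ∀ φ : X₁ ⟶ Y₀, φ ≫ g = 0 → f ≫ φ = 0 → φ = 0 := by
  have := isKProjective_cx f
  rw [homZero_iff_homotopy]
  have r01 : (ComplexShape.up ℤ).Rel 0 1 := rfl
  have r12 : (ComplexShape.up ℤ).Rel 1 2 := rfl
  obtain ⟨j₀, j₁, hd⟩ := exists_shift_isos g (-1) 1 2 (by lia) (by lia)
  have hz := isZero_shift_X g (-1) 0 (by lia) (by lia)
  generalize (cx g)⟦(-1 : ℤ)⟧ = L at j₀ j₁ hd hz
  simp only [Int.negOnePow_neg, Int.negOnePow_one, Units.neg_smul, one_smul] at hd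
  let i₀ := HomologicalComplex.doubleXIso₀ f r01
  let i₁ := HomologicalComplex.doubleXIso₁ f r01 (by lia)
  constructor
  · intro h φ h1 h2
    let F : cx f ⟶ L := HomologicalComplex.mkHomFromDouble r01 (by lia) 0 (φ ≫ j₀.inv)
      (by rw [zero_comp, reassoc_of% h2, zero_comp])
      (by
        intro k hk
        obtain rfl : k = 2 := by simp at hk; lia
        rw [hd]
        simp [reassoc_of% h1])
    obtain ⟨H⟩ := h F
    have hc := H.comm 1
    rw [dNext_eq _ r12, prevD_eq _ r01] at hc
    have z1 : H.hom 2 1 = 0 :=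
      (HomologicalComplex.isZero_double_X f r01 2 (by lia) (by lia)).eq_of_src _ _
    have z2 : H.hom 1 0 = 0 := hz.eq_of_tgt _ _
    rw [z1, z2] at hc
    simp only [comp_zero, zero_comp, add_zero, HomologicalComplex.zero_f, F,
      HomologicalComplex.mkHomFromDouble_f₁] at hc
    rw [← cancel_mono j₀.inv, zero_comp, ← cancel_epi i₁.hom, comp_zero]
    exact hc
  · intro h F
    have e0 : F.f 0 = 0 := hz.eq_of_tgt _ _
    have key := h (i₁.inv ≫ F.f 1 ≫ j₀.hom) (by
        have := F.comm 1 2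
        rw [HomologicalComplex.double_d_eq_zero₀ f r01 1 2 (by lia), zero_comp, hd,
          Preadditive.comp_neg, neg_eq_zero] at this
        rw [← cancel_mono j₁.inv]
        simp [this]) (by
        have := F.comm 0 1
        rw [e0, zero_comp, HomologicalComplex.double_d f r01 (by lia)] at this
        rw [← cancel_epi i₀.hom, comp_zero]
        have h2 := congrArg (fun x => x ≫ j₀.hom) this
        simpa using h2.symm)
    have e1 : F.f 1 = 0 := by
      rw [← cancel_epi i₁.inv, comp_zero, ← cancel_mono j₀.hom, zero_comp, Category.assoc]
      exact key
    have : F = 0 := HomologicalComplex.from_double_hom_ext e0 e1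
    rw [this]
    exact ⟨Homotopy.refl 0⟩

lemma exists_homotopy_of_homZero_one [HasDerivedCategory.{w} C] {X₀ X₁ : C} (f : X₀ ⟶ X₁)
    [Projective X₀] [Projective X₁]
    (h : ∀ h : DerivedCategory.Q.obj (cx f) ⟶ (DerivedCategory.Q.obj (cx f))⟦(1 : ℤ)⟧, h = 0)
    (g : X₀ ⟶ X₁) : ∃ (h₀ : X₀ ⟶ X₀) (h₁ : X₁ ⟶ X₁), g = h₀ ≫ f + f ≫ h₁ := by
  have := isKProjective_cx f
  rw [homZero_iff_homotopy] at h
  have r01 : (ComplexShape.up ℤ).Rel 0 1 := rfl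
  have rm : (ComplexShape.up ℤ).Rel (-1) 0 := rfl
  obtain ⟨j₀, j₁, hd⟩ := exists_shift_isos f 1 (-1) 0 (by lia) (by lia)
  have hz := isZero_shift_X f 1 1 (by lia) (by lia)
  generalize (cx f)⟦(1 : ℤ)⟧ = L at j₀ j₁ hd hz h
  simp only [Int.negOnePow_one, Units.neg_smul, one_smul] at hd
  let i₀ := HomologicalComplex.doubleXIso₀ f r01
  let i₁ := HomologicalComplex.doubleXIso₁ f r01 (by lia)
  let F : cx f ⟶ L := HomologicalComplex.mkHomFromDouble r01 (by lia) (g ≫ j₁.inv) 0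
      (hz.eq_of_tgt _ _) (fun k hk => by rw [zero_comp])
  obtain ⟨H⟩ := h F
  have hc := H.comm 0
  rw [dNext_eq _ r01, prevD_eq _ rm, hd, HomologicalComplex.double_d f r01 (by lia)] at hc
  simp only [HomologicalComplex.zero_f, add_zero, F, HomologicalComplex.mkHomFromDouble_f₀] at hc
  refine ⟨-(i₀.inv ≫ H.hom 0 (-1) ≫ j₀.hom), i₁.inv ≫ H.hom 1 0 ≫ j₁.hom, ?_⟩
  have h2 := congrArg (fun x => i₀.inv ≫ x ≫ j₁.hom) hc
  simp [i₀] at h2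
  rw [h2, add_comm]
  simp [i₀, i₁]

end TwoTerm

/-! ### The cyclic orderings -/

namespace BrauerTree

variable {V : Type v} (Γ : BrauerTree V)

lemma iterate_next_fst (d : Γ.Arrow) (k : ℕ) : (Γ.next^[k] d).fst = d.fst := by
  induction k with
  | zero => rfl
  | succ k ih => rw [Function.iterate_succ_apply', Γ.next_fst, ih]

lemma dart_eq {a b : Γ.Arrow} (h₁ : a.fst = b.fst) (h₂ : a.snd = b.snd) : a = b := by
  ext <;> assumption

lemma src_eq_src_iff {a b : Γ.Arrow} : Γ.src a = Γ.src b ↔ a = b ∨ a = b.symm := by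
  rw [src, src, Subtype.mk.injEq, SimpleGraph.dart_edge_eq_iff]

lemma src_symm (a : Γ.Arrow) : Γ.src a.symm = Γ.src a := by
  rw [Γ.src_eq_src_iff]; right; rfl

lemma eq_of_src_eq {a b : Γ.Arrow} (h : Γ.src a = Γ.src b) (h' : a.fst = b.fst) : a = b := by
  rcases Γ.src_eq_src_iff.1 h with h | h
  · exact h
  · subst h
    exact absurd h'.symm b.fst_ne_snd

lemma symm_fst_ne (a : Γ.Arrow) : a.symm.fst ≠ a.fst := fun h => a.fst_ne_snd h.symm

lemma ne_symm (a : Γ.Arrow) : a ≠ a.symm := fun h => Γ.symm_fst_ne a (by rw [← h])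

lemma exists_src_eq (x : Γ.Edge) : ∃ d : Γ.Arrow, Γ.src d = x := by
  obtain ⟨x, hx⟩ := x
  induction x using Sym2.ind with
  | _ a b => exact ⟨⟨(a, b), hx⟩, rfl⟩

/-- The vertex `v` of the tree is an end point of the edge `x`. -/
def Inc (v : V) (x : Γ.Edge) : Prop := v ∈ x.1

lemma inc_iff {v : V} {x : Γ.Edge} : Γ.Inc v x ↔ ∃ d : Γ.Arrow, d.fst = v ∧ Γ.src d = x := by
  constructor
  · intro h
    obtain ⟨d, rfl⟩ := Γ.exists_src_eq x
    rcases Sym2.mem_iff.1 (show v ∈ s(d.fst, d.snd) from h) with h | h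
    · exact ⟨d, h.symm, rfl⟩
    · exact ⟨d.symm, h.symm, Γ.src_symm d⟩
  · rintro ⟨d, rfl, rfl⟩
    exact Sym2.mem_mk_left _ _

lemma inc_fst (d : Γ.Arrow) : Γ.Inc d.fst (Γ.src d) := Γ.inc_iff.2 ⟨d, rfl, rfl⟩

lemma inc_tgt (d : Γ.Arrow) : Γ.Inc d.fst (Γ.tgt d) :=
  Γ.inc_iff.2 ⟨Γ.next d, Γ.next_fst d, rfl⟩

lemma inc_src_iff {d : Γ.Arrow} {v : V} : Γ.Inc v (Γ.src d) ↔ v = d.fst ∨ v = d.snd :=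
  Sym2.mem_iff

variable [Fintype V]

noncomputable instance : Finite Γ.Arrow := by
  classical
  exact Finite.of_injective (fun d : Γ.Arrow => d.toProd) (fun a b h => SimpleGraph.Dart.ext _ _ h)

/-- The number of arrows of the oriented cycle through `d`. -/
noncomputable def per (d : Γ.Arrow) : ℕ := Function.minimalPeriod Γ.next d

lemma iterate_per (d : Γ.Arrow) : Γ.next^[Γ.per d] d = d := Function.iterate_minimalPeriod

lemma per_pos (d : Γ.Arrow) : 0 < Γ.per d :=
  Function.minimalPeriod_pos_of_mem_periodicPts
    (Function.Injective.mem_periodicPts Γ.next.injective d)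

lemma exists_iterate_eq {a b : Γ.Arrow} (h : a.fst = b.fst) :
    ∃ k < Γ.per a, Γ.next^[k] a = b := by
  obtain ⟨k, hk⟩ := (Γ.next_sameCycle a b h).exists_nat_pow_eq
  refine ⟨k % Γ.per a, Nat.mod_lt _ (Γ.per_pos a), ?_⟩
  rw [per, Function.iterate_mod_minimalPeriod_eq, ← hk, Equiv.Perm.iterate_eq_pow]

lemma per_eq {a b : Γ.Arrow} (h : a.fst = b.fst) : Γ.per a = Γ.per b := by
  obtain ⟨k, _, rfl⟩ := Γ.exists_iterate_eq h
  exact (Function.minimalPeriod_apply_iterate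
    (Function.Injective.mem_periodicPts Γ.next.injective a) k).symm

/-- The number of steps from `a` to `b` along the oriented cycle of the quiver. -/
noncomputable def gap (a b : Γ.Arrow) : ℕ := sInf {k | Γ.next^[k] a = b}

lemma iterate_gap {a b : Γ.Arrow} (h : a.fst = b.fst) : Γ.next^[Γ.gap a b] a = b := by
  obtain ⟨k, _, hk⟩ := Γ.exists_iterate_eq h
  exact Nat.sInf_mem (s := {k | Γ.next^[k] a = b}) ⟨k, hk⟩

lemma gap_lt_per {a b : Γ.Arrow} (h : a.fst = b.fst) : Γ.gap a b < Γ.per a := by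
  obtain ⟨k, hk, hk'⟩ := Γ.exists_iterate_eq h
  exact lt_of_le_of_lt (Nat.sInf_le hk') hk

lemma gap_iterate (a : Γ.Arrow) (k : ℕ) : Γ.gap a (Γ.next^[k] a) = k % Γ.per a := by
  have h : a.fst = (Γ.next^[k] a).fst := (Γ.iterate_next_fst a k).symm
  refine (Function.iterate_eq_iterate_iff_of_lt_minimalPeriod
    (Γ.gap_lt_per h) (Nat.mod_lt _ (Γ.per_pos a))).1 ?_
  rw [Γ.iterate_gap h]
  exact (Function.iterate_mod_minimalPeriod_eq).symm

lemma gap_self (a : Γ.Arrow) : Γ.gap a a = 0 := by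
  simpa using Γ.gap_iterate a 0

lemma gap_eq_zero {a b : Γ.Arrow} (h : a.fst = b.fst) : Γ.gap a b = 0 ↔ a = b := by
  constructor
  · intro h0
    simpa [h0] using Γ.iterate_gap h
  · rintro rfl
    exact Γ.gap_self a

lemma gap_inj {a b c : Γ.Arrow} (hb : a.fst = b.fst) (hc : a.fst = c.fst)
    (h : Γ.gap a b = Γ.gap a c) : b = c := by
  rw [← Γ.iterate_gap hb, ← Γ.iterate_gap hc, h]

lemma gap_add_gap {a b c : Γ.Arrow} (hab : a.fst = b.fst) (hbc : b.fst = c.fst) :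
    Γ.gap a b + Γ.gap b c = Γ.gap a c ∨ Γ.gap a b + Γ.gap b c = Γ.gap a c + Γ.per a := by
  have h1 := Γ.gap_iterate a (Γ.gap b c + Γ.gap a b)
  rw [Function.iterate_add_apply, Γ.iterate_gap hab, Γ.iterate_gap hbc] at h1
  have h2 := Γ.gap_lt_per hab
  have h3 := Γ.gap_lt_per hbc
  rw [← Γ.per_eq hab] at h3
  rw [h1, add_comm]
  by_cases h : Γ.gap b c + Γ.gap a b < Γ.per a
  · left; rw [Nat.mod_eq_of_lt h]
  · right
    rw [Nat.mod_eq_sub_mod (by omega), Nat.mod_eq_of_lt (by omega)]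
    omega

lemma gap_add_gap_self {a b : Γ.Arrow} (hab : a.fst = b.fst) (hne : a ≠ b) :
    Γ.gap a b + Γ.gap b a = Γ.per a := by
  have h := Γ.gap_add_gap hab hab.symm
  have h0 := (Γ.gap_eq_zero hab).not.2 hne
  rw [Γ.gap_self] at h
  omega

lemma gap_next {a d : Γ.Arrow} (h : a.fst = d.fst) (h1 : Γ.next d ≠ a) :
    Γ.gap a (Γ.next d) = Γ.gap a d + 1 := by
  have h2 := Γ.gap_iterate a (Γ.gap a d + 1)
  rw [Function.iterate_succ_apply', Γ.iterate_gap h] at h2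
  have h3 := Γ.gap_lt_per h
  rcases Nat.lt_or_ge (Γ.gap a d + 1) (Γ.per a) with h4 | h4
  · rw [h2, Nat.mod_eq_of_lt h4]
  · have : Γ.gap a d + 1 = Γ.per a := by omega
    rw [this, Nat.mod_self, Γ.gap_eq_zero (by rw [Γ.next_fst, h])] at h2
    exact absurd h2.symm h1

lemma gap_of_next_eq {a d : Γ.Arrow} (h : Γ.next d = a) : Γ.gap a d + 1 = Γ.per a := by
  have hf : a.fst = d.fst := by rw [← h, Γ.next_fst]
  have h2 := Γ.gap_iterate a (Γ.gap a d + 1)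
  rw [Function.iterate_succ_apply', Γ.iterate_gap hf, h, Γ.gap_self] at h2
  have h3 := Γ.gap_lt_per hf
  have := Nat.dvd_of_mod_eq_zero h2.symm
  have := Nat.le_of_dvd (by omega) this
  omega

end BrauerTree

/-! ### The Brauer tree algebra -/

namespace BrauerTree

variable {V : Type v} (Γ : BrauerTree V) (K : Type u) [Field K] [Fintype V]

lemma toAlg_rel {a b : FreeAlgebra K Γ.Gen} (h : Γ.Rel K a b) : Γ.toAlg K a = Γ.toAlg K b :=
  RingQuot.mkAlgHom_rel K h

lemma idem_mul_self (x : Γ.Edge) : Γ.idem K x * Γ.idem K x = Γ.idem K x := by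
  simpa [idem] using Γ.toAlg_rel K (Rel.idem_mul_self x)

lemma idem_mul_idem {x y : Γ.Edge} (h : x ≠ y) : Γ.idem K x * Γ.idem K y = 0 := by
  simpa [idem] using Γ.toAlg_rel K (Rel.idem_mul_idem x y h)

lemma sum_idem : ∑ x : Γ.Edge, Γ.idem K x = 1 := by
  simpa [idem] using Γ.toAlg_rel K (Rel.sum_idem)

lemma idem_mul_arrow (d : Γ.Arrow) : Γ.idem K (Γ.src d) * Γ.arrow K d = Γ.arrow K d := by
  simpa [idem, arrow] using Γ.toAlg_rel K (Rel.src_mul d)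

lemma arrow_mul_idem (d : Γ.Arrow) : Γ.arrow K d * Γ.idem K (Γ.tgt d) = Γ.arrow K d := by
  simpa [idem, arrow] using Γ.toAlg_rel K (Rel.mul_tgt d)

lemma arrow_mul_arrow_symm (d : Γ.Arrow) : Γ.arrow K d * Γ.arrow K (Γ.next d).symm = 0 := by
  simpa [idem, arrow] using Γ.toAlg_rel K (Rel.arrow_mul_arrow d)

lemma arrow_mul_arrow_eq_zero {d d' : Γ.Arrow} (h : d' ≠ Γ.next d) :
    Γ.arrow K d * Γ.arrow K d' = 0 := by
  by_cases h1 : Γ.tgt d = Γ.src d'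
  · rcases Γ.src_eq_src_iff.1 h1.symm with h2 | h2
    · exact absurd h2 h
    · rw [h2, Γ.arrow_mul_arrow_symm]
  · rw [← Γ.arrow_mul_idem, ← Γ.idem_mul_arrow K d', mul_assoc, ← mul_assoc (Γ.idem K _),
      Γ.idem_mul_idem K h1, zero_mul, mul_zero]

/-- The path of length `k` starting with the arrow `d`, inside one oriented cycle. -/
noncomputable def run (d : Γ.Arrow) : ℕ → Γ.Alg K
  | 0 => Γ.idem K (Γ.src d)
  | k + 1 => run d k * Γ.arrow K (Γ.next^[k] d)

@[simp] lemma run_zero (d : Γ.Arrow) : Γ.run K d 0 = Γ.idem K (Γ.src d) := rfl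

lemma run_succ (d : Γ.Arrow) (k : ℕ) :
    Γ.run K d (k + 1) = Γ.run K d k * Γ.arrow K (Γ.next^[k] d) := rfl

lemma run_one (d : Γ.Arrow) : Γ.run K d 1 = Γ.arrow K d := Γ.idem_mul_arrow K d

lemma idem_mul_run (d : Γ.Arrow) (k : ℕ) : Γ.idem K (Γ.src d) * Γ.run K d k = Γ.run K d k := by
  induction k with
  | zero => exact Γ.idem_mul_self K _
  | succ k ih => rw [run_succ, ← mul_assoc, ih]

lemma run_mul_idem (d : Γ.Arrow) (k : ℕ) :
    Γ.run K d k * Γ.idem K (Γ.src (Γ.next^[k] d)) = Γ.run K d k := by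
  cases k with
  | zero => exact Γ.idem_mul_self K _
  | succ k =>
    rw [run_succ, mul_assoc, Function.iterate_succ_apply']
    exact congrArg _ (Γ.arrow_mul_idem K _)

lemma run_add (d : Γ.Arrow) (k l : ℕ) :
    Γ.run K d (k + l) = Γ.run K d k * Γ.run K (Γ.next^[k] d) l := by
  induction l with
  | zero => rw [run_zero, run_mul_idem, add_zero]
  | succ l ih =>
    rw [← add_assoc, run_succ, ih, run_succ, mul_assoc, ← Function.iterate_add_apply, add_comm l k]

lemma run_eq_idem_mul_prod (d : Γ.Arrow) (k : ℕ) : Γ.run K d k =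
    Γ.idem K (Γ.src d) * ((List.range k).map fun l => Γ.arrow K (Γ.next^[l] d)).prod := by
  induction k with
  | zero => simp
  | succ k ih => rw [run_succ, ih, List.range_succ]; simp [mul_assoc]

lemma toAlg_freeCycle (d : Γ.Arrow) : Γ.toAlg K (Γ.freeCycle K d) = Γ.run K d (Γ.per d) := by
  rw [run_eq_idem_mul_prod, freeCycle, map_list_prod, List.map_map]
  change ((List.range (Γ.per d)).map fun l => Γ.arrow K (Γ.next^[l] d)).prod = _
  obtain ⟨k, hk⟩ := Nat.exists_eq_succ_of_ne_zero (Γ.per_pos d).ne'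
  rw [hk, List.range_succ_eq_map, List.map_cons, List.prod_cons, ← mul_assoc]
  congr 1
  exact (Γ.idem_mul_arrow K d).symm

lemma run_per_symm (d : Γ.Arrow) :
    Γ.run K d.symm (Γ.per d.symm) = Γ.run K d (Γ.per d) := by
  rw [← toAlg_freeCycle, ← toAlg_freeCycle]
  exact (Γ.toAlg_rel K (Rel.cycle_eq d)).symm

lemma run_mul_arrow_eq_zero {d d' : Γ.Arrow} {k : ℕ} (hk : 0 < k) (h : d' ≠ Γ.next^[k] d) :
    Γ.run K d k * Γ.arrow K d' = 0 := by
  obtain ⟨k, rfl⟩ := Nat.exists_eq_succ_of_ne_zero hk.ne'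
  rw [run_succ, mul_assoc, Γ.arrow_mul_arrow_eq_zero K, mul_zero]
  rwa [Function.iterate_succ_apply'] at h

lemma run_eq_zero {d : Γ.Arrow} {k : ℕ} (h : Γ.per d < k) : Γ.run K d k = 0 := by
  obtain ⟨l, rfl⟩ := Nat.exists_eq_add_of_lt h
  rw [add_right_comm, run_add, run_succ, Γ.iterate_per, ← run_per_symm,
    Γ.run_mul_arrow_eq_zero K (Γ.per_pos _), zero_mul]
  rw [Γ.iterate_per]
  exact Γ.ne_symm d

lemma run_mul_run_eq_zero {a b : Γ.Arrow} {k l : ℕ} (hk : 0 < k) (hl : 0 < l)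
    (h : b ≠ Γ.next^[k] a) : Γ.run K a k * Γ.run K b l = 0 := by
  obtain ⟨l, rfl⟩ := Nat.exists_eq_succ_of_ne_zero hl.ne'
  rw [Nat.succ_eq_add_one, add_comm, run_add, run_one, ← mul_assoc,
    Γ.run_mul_arrow_eq_zero K hk h, zero_mul]

/-! #### Nonvanishing -/

section Model

open scoped Classical

variable (d₀ : Γ.Arrow)

/-- The vector space underlying the right module `e_x A`, with `none` spanning the socle
and `some d₀` the top. -/
abbrev Model : Type (max u v) := Option Γ.Arrow →₀ K

/-- The basis vector reached by a path arriving at `d`. -/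
noncomputable def arrive (d : Γ.Arrow) : Γ.Model K :=
  Finsupp.single (if d = d₀ ∨ d = d₀.symm then none else some d) 1

/-- The basis index from which the arrow `d` starts. -/
noncomputable def depart (d : Γ.Arrow) : Γ.Arrow := if d = d₀.symm then d₀ else d

/-- The action of an arrow on the model. -/
noncomputable def actArrow (d : Γ.Arrow) : Module.End K (Γ.Model K) :=
  Finsupp.linearCombination K fun s =>
    if s = some (Γ.depart d₀ d) ∧ (d.fst = d₀.fst ∨ d.fst = d₀.snd) then
      Γ.arrive K d₀ (Γ.next d) else 0

/-- The vertex of the quiver at which a basis vector sits. -/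
noncomputable def place (s : Option Γ.Arrow) : Γ.Edge := Γ.src (s.getD d₀)

/-- The action of an idempotent on the model. -/
noncomputable def actIdem (x : Γ.Edge) : Module.End K (Γ.Model K) :=
  Finsupp.linearCombination K fun s => if Γ.place d₀ s = x then Finsupp.single s 1 else 0

lemma actIdem_single (x : Γ.Edge) (s : Option Γ.Arrow) : Γ.actIdem K d₀ x (Finsupp.single s 1) =
    if Γ.place d₀ s = x then Finsupp.single s 1 else 0 := by
  simp [actIdem]

lemma actArrow_single (d : Γ.Arrow) (s : Option Γ.Arrow) :
    Γ.actArrow K d₀ d (Finsupp.single s 1) =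
      if s = some (Γ.depart d₀ d) ∧ (d.fst = d₀.fst ∨ d.fst = d₀.snd) then
        Γ.arrive K d₀ (Γ.next d) else 0 := by
  simp [actArrow]

lemma place_depart (d : Γ.Arrow) : Γ.place d₀ (some (Γ.depart d₀ d)) = Γ.src d := by
  unfold place depart
  split_ifs with h
  · simp [h, src_symm]
  · rfl

lemma actIdem_arrive (d : Γ.Arrow) (x : Γ.Edge) :
    Γ.actIdem K d₀ x (Γ.arrive K d₀ d) = if Γ.src d = x then Γ.arrive K d₀ d else 0 := by
  unfold arrive
  rw [actIdem_single]
  have : Γ.place d₀ (if d = d₀ ∨ d = d₀.symm then none else some d) = Γ.src d := by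
    split_ifs with h
    · rcases h with rfl | rfl
      · rfl
      · rw [src_symm]; rfl
    · rfl
  rw [this]

lemma actArrow_arrive (d d' : Γ.Arrow) (h : d' ≠ d) :
    Γ.actArrow K d₀ d' (Γ.arrive K d₀ d) = 0 := by
  unfold arrive
  rw [actArrow_single, if_neg]
  rintro ⟨h1, -⟩
  unfold depart at h1
  split_ifs at h1 with h2 h3
  · simp only [Option.some.injEq] at h1; tauto
  · simp only [Option.some.injEq] at h1; tauto

/-- The action of the free algebra on the model. -/
noncomputable def actFree : FreeAlgebra K Γ.Gen →ₐ[K] (Module.End K (Γ.Model K))ᵐᵒᵖ :=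
  FreeAlgebra.lift K fun
    | Gen.idem x => MulOpposite.op (Γ.actIdem K d₀ x)
    | Gen.arrow d => MulOpposite.op (Γ.actArrow K d₀ d)

lemma actFree_idem (x : Γ.Edge) :
    Γ.actFree K d₀ (Γ.freeIdem K x) = MulOpposite.op (Γ.actIdem K d₀ x) := by
  simp [actFree, freeIdem]

lemma actFree_arrow (d : Γ.Arrow) :
    Γ.actFree K d₀ (Γ.freeArrow K d) = MulOpposite.op (Γ.actArrow K d₀ d) := by
  simp [actFree, freeArrow]

/-- The action of a path on the model. -/
noncomputable def actRun (d : Γ.Arrow) : ℕ → Module.End K (Γ.Model K)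
  | 0 => 1
  | k + 1 => Γ.actArrow K d₀ (Γ.next^[k] d) * actRun d k

lemma actFree_prod (d : Γ.Arrow) (k : ℕ) :
    Γ.actFree K d₀ ((List.range k).map fun l => Γ.freeArrow K (Γ.next^[l] d)).prod =
      MulOpposite.op (Γ.actRun K d₀ d k) := by
  induction k with
  | zero => simp [actRun]
  | succ k ih =>
    rw [List.range_succ, List.map_append, List.prod_append, map_mul, ih]
    simp [actRun, actFree_arrow]

lemma actRun_eq_zero_of_le (d : Γ.Arrow) {k l : ℕ} (hkl : k ≤ l) (m : Γ.Model K)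
    (h : Γ.actRun K d₀ d k m = 0) : Γ.actRun K d₀ d l m = 0 := by
  induction l, hkl using Nat.le_induction with
  | base => exact h
  | succ l _ ih => simp [actRun, ih]

lemma actRun_single_eq_zero (d : Γ.Arrow) {k : ℕ} (hk : 0 < k) (s : Option Γ.Arrow)
    (h : ¬ (s = some (Γ.depart d₀ d) ∧ (d.fst = d₀.fst ∨ d.fst = d₀.snd))) :
    Γ.actRun K d₀ d k (Finsupp.single s 1) = 0 := by
  refine Γ.actRun_eq_zero_of_le K d₀ d (Nat.succ_le_of_lt hk) _ ?_
  simp [actRun, actArrow_single, h]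

lemma actRun_depart (d : Γ.Arrow) (hd : d.fst = d₀.fst ∨ d.fst = d₀.snd) (k : ℕ)
    (h : ∀ l, 0 < l → l ≤ k → Γ.next^[l] d ≠ d₀ ∧ Γ.next^[l] d ≠ d₀.symm) :
    Γ.actRun K d₀ d (k + 1) (Finsupp.single (some (Γ.depart d₀ d)) 1) =
      Γ.arrive K d₀ (Γ.next^[k + 1] d) := by
  induction k with
  | zero => simp [actRun, actArrow_single, hd]
  | succ k ih =>
    rw [actRun, Module.End.mul_apply, ih (fun l h1 h2 => h l h1 (by omega))]
    have h1 := h (k + 1) (by omega) le_rfl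
    rw [arrive, if_neg (by tauto), actArrow_single, if_pos, ← Function.iterate_succ_apply' Γ.next]
    refine ⟨?_, ?_⟩
    · rw [depart, if_neg h1.2]
    · rwa [Γ.iterate_next_fst]

lemma actRun_per (d : Γ.Arrow) (s : Option Γ.Arrow) :
    Γ.actRun K d₀ d (Γ.per d) (Finsupp.single s 1) =
      if s = some d₀ ∧ (d = d₀ ∨ d = d₀.symm) then Finsupp.single none 1 else 0 := by
  by_cases h : s = some (Γ.depart d₀ d) ∧ (d.fst = d₀.fst ∨ d.fst = d₀.snd)
  swap
  · rw [Γ.actRun_single_eq_zero K d₀ d (Γ.per_pos d) s h, if_neg]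
    rintro ⟨h1, h2⟩
    apply h
    rcases h2 with rfl | rfl
    · rw [depart, if_neg (Γ.ne_symm d)]; simp [h1]
    · rw [depart, if_pos rfl]; exact ⟨h1, Or.inr rfl⟩
  obtain ⟨rfl, hf⟩ := h
  obtain ⟨d₁, hd₁, hd₁f⟩ : ∃ d₁ : Γ.Arrow, (d₁ = d₀ ∨ d₁ = d₀.symm) ∧ d.fst = d₁.fst := by
    rcases hf with hf | hf
    · exact ⟨d₀, Or.inl rfl, hf⟩
    · exact ⟨d₀.symm, Or.inr rfl, hf⟩
  have hd' : ∀ e : Γ.Arrow, e.fst = d.fst → (e = d₀ ∨ e = d₀.symm) → e = d₁ := by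
    intro e he h
    refine Γ.eq_of_src_eq ?_ (he.trans hd₁f)
    have : ∀ e : Γ.Arrow, (e = d₀ ∨ e = d₀.symm) → Γ.src e = Γ.src d₀ := by
      rintro e (rfl | rfl)
      · rfl
      · exact Γ.src_symm _
    rw [this e h, this d₁ hd₁]
  by_cases hd : d = d₁
  · subst hd
    obtain ⟨k, hk⟩ := Nat.exists_eq_succ_of_ne_zero (Γ.per_pos d).ne'
    have hdep : Γ.depart d₀ d = d₀ := by
      unfold depart; split_ifs with h
      · rfl
      · tauto
    rw [hk, Nat.succ_eq_add_one, Γ.actRun_depart K d₀ d hf]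
    · rw [← Nat.succ_eq_add_one, ← hk, Γ.iterate_per, arrive, if_pos hd₁, if_pos ⟨by rw [hdep], hd₁⟩]
    · intro l hl hlk
      by_contra hcon
      have h2 : Γ.next^[l] d = d := hd' _ (Γ.iterate_next_fst d l) (by tauto)
      have := Γ.gap_iterate d l
      rw [h2, Γ.gap_self, Nat.mod_eq_of_lt (by omega)] at this
      omega
  · have hg := Γ.gap_lt_per hd₁f
    have hg0 := (Γ.gap_eq_zero hd₁f).not.2 hd
    obtain ⟨k, hk⟩ := Nat.exists_eq_succ_of_ne_zero hg0
    have h1 : Γ.actRun K d₀ d (k + 1) (Finsupp.single (some (Γ.depart d₀ d)) 1) =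
        Finsupp.single none 1 := by
      rw [Γ.actRun_depart K d₀ d hf]
      · rw [← Nat.succ_eq_add_one, ← hk, Γ.iterate_gap hd₁f, arrive, if_pos hd₁]
      · intro l hl hlk
        by_contra hcon
        have h2 : Γ.next^[l] d = d₁ := hd' _ (Γ.iterate_next_fst d l) (by tauto)
        have := Γ.gap_iterate d l
        rw [h2, Nat.mod_eq_of_lt (by omega)] at this
        omega
    rw [if_neg (fun h => hd (hd' d rfl h.2))]
    refine Γ.actRun_eq_zero_of_le K d₀ d (k := k + 1 + 1) (by omega) _ ?_
    rw [actRun, Module.End.mul_apply, h1, actArrow_single, if_neg (by simp)]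

lemma actFree_rel {a b : FreeAlgebra K Γ.Gen} (h : Γ.Rel K a b) :
    Γ.actFree K d₀ a = Γ.actFree K d₀ b := by
  apply MulOpposite.unop_injective
  induction h with
  | idem_mul_self x =>
    ext s : 2
    simp only [map_mul, actFree_idem, MulOpposite.unop_mul, MulOpposite.unop_op]
    simp only [LinearMap.comp_apply, Finsupp.lsingle_apply, Module.End.mul_apply, actIdem_single,
      apply_ite (Γ.actIdem K d₀ x), map_zero]
    split_ifs <;> rfl
  | idem_mul_idem x y h =>
    ext s : 2
    simp only [map_mul, actFree_idem, MulOpposite.unop_mul, MulOpposite.unop_op, map_zero]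
    simp only [LinearMap.comp_apply, Finsupp.lsingle_apply, Module.End.mul_apply, actIdem_single,
      apply_ite (Γ.actIdem K d₀ y), map_zero]
    split_ifs with h1 h2
    · exact absurd (h1.symm.trans h2) h
    · simp
    · simp
  | sum_idem =>
    ext s : 2
    simp only [map_sum, actFree_idem, Finset.unop_sum, MulOpposite.unop_op, map_one]
    simp [actIdem_single]
  | src_mul d =>
    ext s : 2
    simp only [map_mul, actFree_idem, actFree_arrow, MulOpposite.unop_mul, MulOpposite.unop_op]
    simp only [LinearMap.comp_apply, Finsupp.lsingle_apply, Module.End.mul_apply, actIdem_single,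
      apply_ite (Γ.actArrow K d₀ d), map_zero]
    split_ifs with h
    · rfl
    · rw [actArrow_single, if_neg]
      rintro ⟨rfl, -⟩
      exact h (Γ.place_depart d₀ d)
  | mul_tgt d =>
    ext s : 2
    simp only [map_mul, actFree_idem, actFree_arrow, MulOpposite.unop_mul, MulOpposite.unop_op]
    simp only [LinearMap.comp_apply, Finsupp.lsingle_apply, Module.End.mul_apply, actArrow_single,
      apply_ite (Γ.actIdem K d₀ (Γ.tgt d)), map_zero, actIdem_arrive]
    simp [tgt]
  | arrow_mul_arrow d =>
    ext s : 2
    simp only [map_mul, actFree_arrow, MulOpposite.unop_mul, MulOpposite.unop_op, map_zero]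
    simp only [LinearMap.comp_apply, Finsupp.lsingle_apply, Module.End.mul_apply, actArrow_single,
      apply_ite (Γ.actArrow K d₀ (Γ.next d).symm), map_zero,
      Γ.actArrow_arrive K d₀ (Γ.next d) _ (Γ.ne_symm _).symm]
    simp
  | cycle_eq d =>
    ext s : 2
    unfold freeCycle
    rw [actFree_prod, actFree_prod]
    simp only [MulOpposite.unop_op, LinearMap.comp_apply, Finsupp.lsingle_apply]
    have h1 := Γ.actRun_per K d₀ d s
    have h2 := Γ.actRun_per K d₀ d.symm s
    unfold per at h1 h2
    rw [h1, h2]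
    have : (d.symm = d₀ ∨ d.symm = d₀.symm) ↔ (d = d₀ ∨ d = d₀.symm) := by
      have h3 : d.symm = d₀ ↔ d = d₀.symm := by
        constructor
        · rintro rfl; rfl
        · rintro rfl; rfl
      have h4 : d.symm = d₀.symm ↔ d = d₀ := by
        constructor
        · intro h; have := congrArg SimpleGraph.Dart.symm h; simpa using this
        · rintro rfl; rfl
      rw [h3, h4, or_comm]
    simp only [this]

lemma run_per_ne_zero (d : Γ.Arrow) : Γ.run K d (Γ.per d) ≠ 0 := by
  intro h0
  rw [← toAlg_freeCycle] at h0
  let Θ : Γ.Alg K →ₐ[K] (Module.End K (Γ.Model K))ᵐᵒᵖ :=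
    RingQuot.liftAlgHom K ⟨Γ.actFree K d, fun _ _ h => Γ.actFree_rel K d h⟩
  have h1 : Θ (Γ.toAlg K (Γ.freeCycle K d)) = Γ.actFree K d (Γ.freeCycle K d) :=
    RingQuot.liftAlgHom_mkAlgHom_apply _ _ _ _
  rw [h0, map_zero, freeCycle, actFree_prod] at h1
  have h2 := congrArg (fun t : (Module.End K (Γ.Model K))ᵐᵒᵖ =>
    MulOpposite.unop t (Finsupp.single (some d) 1)) h1
  have h3 := Γ.actRun_per K d d (some d)
  unfold per at h3
  simp only [MulOpposite.unop_op] at h2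
  rw [h3, if_pos ⟨rfl, Or.inl rfl⟩] at h2
  exact one_ne_zero (Finsupp.single_eq_zero.1 h2.symm)

end Model

lemma run_ne_zero (d : Γ.Arrow) {k : ℕ} (hk : k ≤ Γ.per d) : Γ.run K d k ≠ 0 := by
  intro h
  obtain ⟨l, hl⟩ := Nat.exists_eq_add_of_le hk
  apply Γ.run_per_ne_zero K d
  rw [hl, run_add, h, zero_mul]

end BrauerTree

/-! ### Morphisms between indecomposable projective modules -/

namespace BrauerTree

variable {V : Type v} (Γ : BrauerTree V) (K : Type u) [Field K] [Fintype V]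

/-- The augmentation of the Brauer tree algebra at a vertex of the quiver. -/
lemma exists_augmentation (x : Γ.Edge) : ∃ ε : Γ.Alg K →ₐ[K] K,
    ε (Γ.idem K x) = 1 ∧ ∀ y, y ≠ x → ε (Γ.idem K y) = 0 := by
  classical
  let ε₀ : FreeAlgebra K Γ.Gen →ₐ[K] K := FreeAlgebra.lift K fun
    | Gen.idem y => if y = x then 1 else 0
    | Gen.arrow _ => 0
  have hi : ∀ y, ε₀ (Γ.freeIdem K y) = if y = x then 1 else 0 := fun y => by
    simp [ε₀, freeIdem]
  have ha : ∀ d, ε₀ (Γ.freeArrow K d) = 0 := fun d => by simp [ε₀, freeArrow]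
  have hc : ∀ d, ε₀ (Γ.freeCycle K d) = 0 := by
    intro d
    rw [freeCycle, map_list_prod, List.map_map]
    refine List.prod_eq_zero ?_
    rw [List.mem_map]
    exact ⟨0, List.mem_range.2 (Γ.per_pos d), by simp [ha]⟩
  have hrel : ∀ a b, Γ.Rel K a b → ε₀ a = ε₀ b := by
    intro a b h
    induction h with
    | idem_mul_self y => simp [hi]
    | idem_mul_idem y z h =>
      simp only [map_mul, hi, map_zero]
      split_ifs with h1 h2
      · exact absurd (h1.trans h2.symm) h
      all_goals simp
    | sum_idem => simp [hi]
    | src_mul d => simp [ha]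
    | mul_tgt d => simp [ha]
    | arrow_mul_arrow d => simp [ha]
    | cycle_eq d => rw [hc, hc]
  let ε : Γ.Alg K →ₐ[K] K := RingQuot.liftAlgHom K ⟨ε₀, fun _ _ h => hrel _ _ h⟩
  have hε : ∀ y, ε (Γ.idem K y) = if y = x then 1 else 0 := by
    intro y
    rw [← hi]
    exact RingQuot.liftAlgHom_mkAlgHom_apply _ _ _ _
  exact ⟨ε, by simp [hε], fun y hy => by simp [hε, hy]⟩

lemma mem_span_run (z : Γ.Alg K) :
    z ∈ Submodule.span K {z | ∃ (d : Γ.Arrow) (k : ℕ), z = Γ.run K d k} := by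
  set S := Submodule.span K {z | ∃ (d : Γ.Arrow) (k : ℕ), z = Γ.run K d k} with hS
  have mem : ∀ d k, Γ.run K d k ∈ S := fun d k => Submodule.subset_span ⟨d, k, rfl⟩
  have hgen : ∀ (g : Γ.Gen) (s : Γ.Alg K), s ∈ S → s * Γ.toAlg K (FreeAlgebra.ι K g) ∈ S := by
    intro g s hs
    induction hs using Submodule.span_induction with
    | mem s hs =>
      obtain ⟨d, k, rfl⟩ := hs
      cases g with
      | idem x =>
        change Γ.run K d k * Γ.idem K x ∈ S
        by_cases h : Γ.src (Γ.next^[k] d) = x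
        · rw [← h, run_mul_idem]; exact mem _ _
        · rw [← run_mul_idem, mul_assoc, Γ.idem_mul_idem K h, mul_zero]; exact S.zero_mem
      | arrow d' =>
        change Γ.run K d k * Γ.arrow K d' ∈ S
        by_cases h : d' = Γ.next^[k] d
        · rw [h, ← run_succ]; exact mem _ _
        · rcases Nat.eq_zero_or_pos k with rfl | hk
          · by_cases h' : Γ.src d = Γ.src d'
            · rw [run_zero, h']
              exact mem d' 1
            · rw [← Γ.idem_mul_arrow K d', ← mul_assoc, run_zero, Γ.idem_mul_idem K h', zero_mul]
              exact S.zero_mem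
          · rw [Γ.run_mul_arrow_eq_zero K hk h]; exact S.zero_mem
    | zero => rw [zero_mul]; exact S.zero_mem
    | add a b _ _ ha hb => rw [add_mul]; exact S.add_mem ha hb
    | smul c a _ ha => rw [smul_mul_assoc]; exact S.smul_mem c ha
  have hall : ∀ (a : FreeAlgebra K Γ.Gen) (s : Γ.Alg K), s ∈ S → s * Γ.toAlg K a ∈ S := by
    intro a
    induction a using FreeAlgebra.induction with
    | grade0 r =>
      intro s hs
      rw [AlgHom.commutes, ← Algebra.commutes, ← Algebra.smul_def]
      exact S.smul_mem r hs
    | grade1 g => exact hgen g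
    | mul a b ha hb => intro s hs; rw [map_mul, ← mul_assoc]; exact hb _ (ha _ hs)
    | add a b ha hb => intro s hs; rw [map_add, mul_add]; exact S.add_mem (ha _ hs) (hb _ hs)
  obtain ⟨a, rfl⟩ := RingQuot.mkAlgHom_surjective K (Γ.Rel K) z
  have h1 : (1 : Γ.Alg K) ∈ S := by
    rw [← Γ.sum_idem K]
    refine S.sum_mem fun x _ => ?_
    obtain ⟨d, rfl⟩ := Γ.exists_src_eq x
    exact mem d 0
  have := hall a 1 h1
  rwa [one_mul] at this

/-- `z ∈ e_x A e_y`, that is, `z` defines a morphism `A e_x → A e_y`. -/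
def IsHom (x y : Γ.Edge) (z : Γ.Alg K) : Prop :=
  Γ.idem K x * z = z ∧ z * Γ.idem K y = z

variable {K}

lemma isHom_zero (x y : Γ.Edge) : Γ.IsHom K x y 0 := ⟨mul_zero _, zero_mul _⟩

lemma IsHom.smul {Γ : BrauerTree V} {x y : Γ.Edge} {z : Γ.Alg K} (h : Γ.IsHom K x y z) (c : K) :
    Γ.IsHom K x y (c • z) :=
  ⟨by rw [mul_smul_comm, h.1], by rw [smul_mul_assoc, h.2]⟩

lemma isHom_mem_span {x y : Γ.Edge} {z : Γ.Alg K} (h : Γ.IsHom K x y z) :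
    z ∈ Submodule.span K {z | ∃ (d : Γ.Arrow) (k : ℕ), Γ.src d = x ∧ Γ.src (Γ.next^[k] d) = y ∧
      k ≤ Γ.per d ∧ z = Γ.run K d k} := by
  have key : ∀ s ∈ Submodule.span K {z | ∃ (d : Γ.Arrow) (k : ℕ), z = Γ.run K d k},
      Γ.idem K x * s * Γ.idem K y ∈ Submodule.span K {z | ∃ (d : Γ.Arrow) (k : ℕ), Γ.src d = x ∧
        Γ.src (Γ.next^[k] d) = y ∧ k ≤ Γ.per d ∧ z = Γ.run K d k} := by
    intro s hs
    induction hs using Submodule.span_induction with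
    | mem s hs =>
      obtain ⟨d, k, rfl⟩ := hs
      by_cases h1 : x = Γ.src d
      · by_cases h2 : Γ.src (Γ.next^[k] d) = y
        · rw [h1, idem_mul_run, ← h2, run_mul_idem]
          rcases le_or_gt k (Γ.per d) with h3 | h3
          · exact Submodule.subset_span ⟨d, k, rfl, rfl, h3, rfl⟩
          · rw [Γ.run_eq_zero K h3]; exact Submodule.zero_mem _
        · rw [← run_mul_idem, mul_assoc, mul_assoc, Γ.idem_mul_idem K h2, mul_zero, mul_zero]
          exact Submodule.zero_mem _
      · rw [← idem_mul_run, ← mul_assoc, Γ.idem_mul_idem K h1, zero_mul, zero_mul]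
        exact Submodule.zero_mem _
    | zero => rw [mul_zero, zero_mul]; exact Submodule.zero_mem _
    | add a b _ _ ha hb => rw [mul_add, add_mul]; exact Submodule.add_mem _ ha hb
    | smul c a _ ha => rw [mul_smul_comm, smul_mul_assoc]; exact Submodule.smul_mem _ c ha
  have := key z (Γ.mem_span_run K z)
  rwa [h.1, h.2] at this

variable (K) in
/-- The shortest path from `a` to `b` inside one oriented cycle. -/
noncomputable def path (a b : Γ.Arrow) : Γ.Alg K := Γ.run K a (Γ.gap a b)

lemma isHom_path {a b : Γ.Arrow} (h : a.fst = b.fst) :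
    Γ.IsHom K (Γ.src a) (Γ.src b) (Γ.path K a b) := by
  refine ⟨Γ.idem_mul_run K _ _, ?_⟩
  have := Γ.run_mul_idem K a (Γ.gap a b)
  rwa [Γ.iterate_gap h] at this

lemma path_ne_zero {a b : Γ.Arrow} (h : a.fst = b.fst) : Γ.path K a b ≠ 0 :=
  Γ.run_ne_zero K a (Γ.gap_lt_per h).le

lemma isHom_eq_smul {a b : Γ.Arrow} (hf : a.fst = b.fst) (hne : a ≠ b) {z : Γ.Alg K}
    (h : Γ.IsHom K (Γ.src a) (Γ.src b) z) : ∃ c : K, z = c • Γ.path K a b := by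
  have h1 := Γ.isHom_mem_span h
  have h2 : {z | ∃ (d : Γ.Arrow) (k : ℕ), Γ.src d = Γ.src a ∧ Γ.src (Γ.next^[k] d) = Γ.src b ∧
      k ≤ Γ.per d ∧ z = Γ.run K d k} ⊆ {Γ.path K a b} := by
    rintro z ⟨d, k, h1, h2, h3, rfl⟩
    rcases Γ.src_eq_src_iff.1 h1 with rfl | rfl
    · have h4 : Γ.next^[k] d = b := Γ.eq_of_src_eq h2 (by rw [Γ.iterate_next_fst, hf])
      have h5 := Γ.gap_iterate d k
      rw [h4] at h5
      rcases h3.lt_or_eq with h3 | h3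
      · rw [Nat.mod_eq_of_lt h3] at h5
        rw [← h5]; rfl
      · rw [h3, Γ.iterate_per] at h4
        exact absurd h4 hne
    · exfalso
      have h4 : a.snd = (Γ.next^[k] a.symm).fst := (Γ.iterate_next_fst a.symm k).symm
      have h5 := Γ.inc_fst (Γ.next^[k] a.symm)
      rw [h2, ← h4, Γ.inc_src_iff, ← hf] at h5
      rcases h5 with h5 | h5
      · exact a.fst_ne_snd h5.symm
      · exact hne (Γ.dart_eq hf h5)
  obtain ⟨c, hc⟩ := Submodule.mem_span_singleton.1 (Submodule.span_mono h2 h1)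
  exact ⟨c, hc.symm⟩

lemma exists_darts_of_isHom_ne_zero {x y : Γ.Edge} {z : Γ.Alg K} (h : Γ.IsHom K x y z)
    (hz : z ≠ 0) : ∃ a b : Γ.Arrow, a.fst = b.fst ∧ Γ.src a = x ∧ Γ.src b = y := by
  by_contra hcon
  have h1 := Γ.isHom_mem_span h
  have h2 : {z | ∃ (d : Γ.Arrow) (k : ℕ), Γ.src d = x ∧ Γ.src (Γ.next^[k] d) = y ∧
      k ≤ Γ.per d ∧ z = Γ.run K d k} = ∅ := by
    rw [Set.eq_empty_iff_forall_notMem]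
    rintro z ⟨d, k, h1, h2, -, -⟩
    exact hcon ⟨d, Γ.next^[k] d, (Γ.iterate_next_fst d k).symm, h1, h2⟩
  rw [h2, Submodule.span_empty, Submodule.mem_bot] at h1
  exact hz h1

lemma path_mul_path {a b c : Γ.Arrow} (h : a.fst = b.fst) :
    Γ.path K a b * Γ.path K b c = Γ.run K a (Γ.gap a b + Γ.gap b c) := by
  rw [run_add, Γ.iterate_gap h]; rfl

lemma path_mul_path_of_le {a b c : Γ.Arrow} (h : a.fst = b.fst) (h' : b.fst = c.fst)
    (hle : Γ.gap a b + Γ.gap b c < Γ.per a) : Γ.path K a b * Γ.path K b c = Γ.path K a c := by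
  rw [Γ.path_mul_path h, path]
  rcases Γ.gap_add_gap h h' with h1 | h1
  · rw [h1]
  · omega

lemma path_mul_path_eq_zero {a b c : Γ.Arrow} (h : a.fst = b.fst) (h' : b.fst = c.fst)
    (hac : a ≠ c) (hle : Γ.per a ≤ Γ.gap a b + Γ.gap b c) :
    Γ.path K a b * Γ.path K b c = 0 := by
  rw [Γ.path_mul_path h]
  apply Γ.run_eq_zero K
  have h0 := (Γ.gap_eq_zero (h.trans h')).not.2 hac
  have := Γ.gap_lt_per (h.trans h')
  rcases Γ.gap_add_gap h h' with h1 | h1 <;> omega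

lemma path_mul_path_self {a b : Γ.Arrow} (h : a.fst = b.fst) (hne : a ≠ b) :
    Γ.path K a b * Γ.path K b a = Γ.run K a (Γ.per a) := by
  rw [Γ.path_mul_path h, Γ.gap_add_gap_self h hne]

lemma path_mul_path_of_ne {a b c d : Γ.Arrow} (hab : a.fst = b.fst) (hcd : c.fst = d.fst)
    (h1 : a ≠ b) (h2 : c ≠ d) (hbc : c ≠ b) : Γ.path K a b * Γ.path K c d = 0 := by
  apply Γ.run_mul_run_eq_zero K
  · exact Nat.pos_of_ne_zero ((Γ.gap_eq_zero hab).not.2 h1)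
  · exact Nat.pos_of_ne_zero ((Γ.gap_eq_zero hcd).not.2 h2)
  · rwa [Γ.iterate_gap hab]

/-- The product of two morphisms between three projectives is zero, unless the three vertices of
the quiver lie on a common oriented cycle. -/
lemma exists_darts_of_mul_ne_zero {x y w : Γ.Edge} {z z' : Γ.Alg K} (hxy : x ≠ y) (hyw : y ≠ w)
    (h : Γ.IsHom K x y z) (h' : Γ.IsHom K y w z') (h0 : z * z' ≠ 0) :
    ∃ a b c : Γ.Arrow, a.fst = b.fst ∧ b.fst = c.fst ∧ Γ.src a = x ∧ Γ.src b = y ∧ Γ.src c = w := by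
  obtain ⟨a, b, hab, rfl, rfl⟩ := Γ.exists_darts_of_isHom_ne_zero h (left_ne_zero_of_mul h0)
  obtain ⟨b', c, hbc, hb', rfl⟩ := Γ.exists_darts_of_isHom_ne_zero h' (right_ne_zero_of_mul h0)
  by_cases hb : b' = b
  · subst hb
    exact ⟨a, b', c, hab, hbc, rfl, rfl, rfl⟩
  · have h1 : a ≠ b := fun h => hxy (by rw [h])
    have h2 : b' ≠ c := fun h => hyw (by rw [← h, hb'])
    obtain ⟨s, rfl⟩ := Γ.isHom_eq_smul hab h1 h
    rw [← hb'] at h'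
    obtain ⟨t, rfl⟩ := Γ.isHom_eq_smul hbc h2 h'
    exact absurd (by rw [smul_mul_smul_comm, Γ.path_mul_path_of_ne hab hbc h1 h2 hb, smul_zero]) h0

/-! ### The `A`-cycles -/

lemma arrow_mul_arrow_ne_zero_iff {d d' : Γ.Arrow} :
    Γ.arrow K d * Γ.arrow K d' ≠ 0 ↔ d' = Γ.next d ∧ d' ≠ d := by
  constructor
  · intro h
    have h1 : d' = Γ.next d := by
      by_contra h1
      exact h (Γ.arrow_mul_arrow_eq_zero K h1)
    refine ⟨h1, fun h2 => h ?_⟩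
    have hper : Γ.per d = 1 :=
      Function.minimalPeriod_eq_one_iff_isFixedPt.2 (h1.symm.trans h2)
    have := Γ.run_eq_zero K (d := d) (k := 2) (by omega)
    rw [run_succ, run_one] at this
    rwa [h1]
  · rintro ⟨rfl, h⟩
    have := Γ.run_ne_zero K d (k := 2) (by
      have h1 := Γ.per_pos d
      have h2 : Γ.per d ≠ 1 := fun h2 => h (Function.minimalPeriod_eq_one_iff_isFixedPt.1 h2)
      omega)
    rw [run_succ, run_one] at this
    exact this

lemma isChain_fst_eq {l : List Γ.Arrow}
    (h : l.IsChain fun d d' => Γ.arrow K d * Γ.arrow K d' ≠ 0) :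
    ∀ d ∈ l, ∀ d' ∈ l, d.fst = d'.fst := by
  induction l with
  | nil => simp
  | cons a l ih =>
    rw [List.isChain_cons] at h
    have key : ∀ d ∈ l, a.fst = d.fst := by
      intro d hd
      cases l with
      | nil => simp at hd
      | cons b l =>
        have h1 := h.1 b (by simp)
        have h2 := (Γ.arrow_mul_arrow_ne_zero_iff.1 h1).1
        rw [ih h.2 d hd b (by simp), h2, Γ.next_fst]
    intro d hd d' hd'
    rcases List.mem_cons.1 hd with h1 | h1 <;> rcases List.mem_cons.1 hd' with h2 | h2
    · rw [h1, h2]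
    · rw [h1, key d' h2]
    · rw [h2, key d h1]
    · exact ih h.2 d h1 d' h2

lemma IsACycle.fst_eq {Γ : BrauerTree V} {l : List Γ.Arrow} (h : Γ.IsACycle K l) {d d' : Γ.Arrow}
    (hd : d ∈ l) (hd' : d' ∈ l) : d.fst = d'.fst :=
  Γ.isChain_fst_eq h.1.2.2 d hd d' hd'

lemma isChain_map_range {α : Type*} {R : α → α → Prop} (f : ℕ → α) (n : ℕ)
    (h : ∀ k, k + 1 < n → R (f k) (f (k + 1))) : ((List.range n).map f).IsChain R := by
  rw [List.isChain_iff_getElem]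
  intro i hi
  simp only [List.length_map, List.length_range] at hi
  simpa using h i hi

lemma exists_isACycle (d : Γ.Arrow) :
    ∃ l, Γ.IsACycle K l ∧ ∀ d' : Γ.Arrow, d'.fst = d.fst → d' ∈ l := by
  classical
  refine ⟨(List.range (Γ.per d)).map fun k => Γ.next^[k] d, ⟨⟨?_, ?_, ?_⟩, ?_⟩, ?_⟩
  · simpa using (Γ.per_pos d).ne'
  · refine (List.nodup_map_iff_inj_on List.nodup_range).2 ?_
    intro k hk l hl h
    rw [List.mem_range] at hk hl
    exact (Function.iterate_eq_iterate_iff_of_lt_minimalPeriod hk hl).1 h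
  · refine isChain_map_range _ _ fun k hk => ?_
    rw [Γ.arrow_mul_arrow_ne_zero_iff]
    refine ⟨Function.iterate_succ_apply' _ _ _, fun h => ?_⟩
    have := (Function.iterate_eq_iterate_iff_of_lt_minimalPeriod
      (f := Γ.next) (x := d) hk (k.lt_succ_self.trans hk)).1 h
    omega
  · intro l' hl' hinf
    have hfst : ∀ d' ∈ l', d'.fst = d.fst := by
      have hd : d ∈ l' := by
        refine hinf.subset ?_
        rw [List.mem_map]
        exact ⟨0, List.mem_range.2 (Γ.per_pos d), rfl⟩
      exact fun d' hd' => Γ.isChain_fst_eq hl'.2.2 d' hd' d hd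
    have hsub : l' ⊆ (List.range (Γ.per d)).map fun k => Γ.next^[k] d := by
      intro d' hd'
      obtain ⟨k, hk, hk'⟩ := Γ.exists_iterate_eq (hfst d' hd').symm
      rw [List.mem_map]
      exact ⟨k, List.mem_range.2 hk, hk'⟩
    exact (hinf.sublist.eq_of_length_le (hl'.2.1.subperm hsub).length_le).symm
  · intro d' hd'
    obtain ⟨k, hk, hk'⟩ := Γ.exists_iterate_eq hd'.symm
    rw [List.mem_map]
    exact ⟨k, List.mem_range.2 hk, hk'⟩

end BrauerTree

/-! ### Matrices of linear maps between projective modules -/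

namespace BrauerTree

variable {V : Type v} (Γ : BrauerTree V) (K : Type u) [Field K] [Fintype V]

/-- The direct sum of the modules `A e_x` for `x ∈ I`. -/
abbrev Sum (I : Finset Γ.Edge) : Type (max u v) := ∀ i : I, Γ.proj K i

variable {K}

lemma mem_proj {x : Γ.Edge} {z : Γ.Alg K} : z ∈ Γ.proj K x ↔ z * Γ.idem K x = z := by
  rw [Submodule.mem_span_singleton]
  constructor
  · rintro ⟨a, rfl⟩
    rw [smul_eq_mul, mul_assoc, idem_mul_self]
  · intro h
    exact ⟨z, h⟩

lemma coe_mul_idem {x : Γ.Edge} (z : Γ.proj K x) : (z : Γ.Alg K) * Γ.idem K x = z :=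
  Γ.mem_proj.1 z.2

/-- The generator of `A e_x`. -/
noncomputable def gen (x : Γ.Edge) : Γ.proj K x := ⟨Γ.idem K x, Submodule.mem_span_singleton_self _⟩

instance (I : Finset Γ.Edge) : Module.Projective (Γ.Alg K) (Γ.Sum K I) := by
  let i : Γ.Sum K I →ₗ[Γ.Alg K] (I → Γ.Alg K) :=
    { toFun := fun u j => u j
      map_add' := fun _ _ => rfl
      map_smul' := fun _ _ => rfl }
  let s : (I → Γ.Alg K) →ₗ[Γ.Alg K] Γ.Sum K I :=
    { toFun := fun w j => ⟨w j * Γ.idem K j, Γ.mem_proj.2 (by rw [mul_assoc, idem_mul_self])⟩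
      map_add' := fun a b => by ext j; simp [add_mul]
      map_smul' := fun a b => by ext j; simp [mul_assoc] }
  refine Module.Projective.of_split i s ?_
  ext u j
  exact Γ.coe_mul_idem (u j)

open scoped Classical

variable {I J L : Finset Γ.Edge}

/-- The entries of the matrix of a linear map. -/
noncomputable def entry (f : Γ.Sum K I →ₗ[Γ.Alg K] Γ.Sum K J) (x y : Γ.Edge) : Γ.Alg K :=
  if h : x ∈ I ∧ y ∈ J then (f (Pi.single ⟨x, h.1⟩ (Γ.gen x)) ⟨y, h.2⟩ : Γ.Alg K) else 0

lemma entry_of_mem (f : Γ.Sum K I →ₗ[Γ.Alg K] Γ.Sum K J) (x : I) (y : J) :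
    Γ.entry f x y = (f (Pi.single x (Γ.gen x)) y : Γ.Alg K) := by
  rw [entry, dif_pos ⟨x.2, y.2⟩]

lemma isHom_entry (f : Γ.Sum K I →ₗ[Γ.Alg K] Γ.Sum K J) (x y : Γ.Edge) :
    Γ.IsHom K x y (Γ.entry f x y) := by
  unfold entry
  split_ifs with h
  · refine ⟨?_, Γ.coe_mul_idem _⟩
    have h1 : Γ.idem K x • (Pi.single (⟨x, h.1⟩ : I) (Γ.gen x) : Γ.Sum K I) =
        Pi.single (⟨x, h.1⟩ : I) (Γ.gen x) := by
      rw [← Pi.single_smul]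
      congr 1
      exact Subtype.ext (Γ.idem_mul_self K x)
    conv_rhs => rw [← h1, map_smul]
    rfl
  · exact Γ.isHom_zero x y

lemma apply_eq_sum (f : Γ.Sum K I →ₗ[Γ.Alg K] Γ.Sum K J) (u : Γ.Sum K I) (y : J) :
    (f u y : Γ.Alg K) = ∑ x : I, (u x : Γ.Alg K) * Γ.entry f x y := by
  have h : u = ∑ x : I, (u x : Γ.Alg K) • (Pi.single x (Γ.gen x) : Γ.Sum K I) := by
    conv_lhs => rw [← Finset.univ_sum_single u]
    refine Finset.sum_congr rfl fun x _ => ?_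
    rw [← Pi.single_smul]
    congr 1
    exact Subtype.ext (Γ.coe_mul_idem (u x)).symm
  conv_lhs => rw [h, map_sum, Finset.sum_apply]
  rw [AddSubmonoidClass.coe_finsetSum]
  refine Finset.sum_congr rfl fun x _ => ?_
  rw [map_smul, entry_of_mem]
  rfl

lemma ext_entry {f g : Γ.Sum K I →ₗ[Γ.Alg K] Γ.Sum K J}
    (h : ∀ x ∈ I, ∀ y ∈ J, Γ.entry f x y = Γ.entry g x y) : f = g := by
  refine LinearMap.ext fun u => funext fun y => Subtype.ext ?_
  rw [apply_eq_sum, apply_eq_sum]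
  exact Finset.sum_congr rfl fun x _ => by rw [h x x.2 y y.2]

lemma entry_comp (f : Γ.Sum K I →ₗ[Γ.Alg K] Γ.Sum K J) (g : Γ.Sum K J →ₗ[Γ.Alg K] Γ.Sum K L)
    {x y : Γ.Edge} (hx : x ∈ I) (hy : y ∈ L) :
    Γ.entry (g ∘ₗ f) x y = ∑ z ∈ J, Γ.entry f x z * Γ.entry g z y := by
  rw [← Finset.sum_coe_sort J, Γ.entry_of_mem (g ∘ₗ f) ⟨x, hx⟩ ⟨y, hy⟩, LinearMap.comp_apply,
    apply_eq_sum]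
  exact Finset.sum_congr rfl fun z _ => by rw [← Γ.entry_of_mem f ⟨x, hx⟩ z]

lemma entry_add (f g : Γ.Sum K I →ₗ[Γ.Alg K] Γ.Sum K J) (x y : Γ.Edge) :
    Γ.entry (f + g) x y = Γ.entry f x y + Γ.entry g x y := by
  unfold entry
  split_ifs <;> simp

lemma entry_zero (x y : Γ.Edge) : Γ.entry (0 : Γ.Sum K I →ₗ[Γ.Alg K] Γ.Sum K J) x y = 0 := by
  unfold entry
  split_ifs <;> simp

lemma entry_id {x y : Γ.Edge} (hx : x ∈ I) (hy : y ∈ I) :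
    Γ.entry (LinearMap.id : Γ.Sum K I →ₗ[Γ.Alg K] Γ.Sum K I) x y =
      if x = y then Γ.idem K x else 0 := by
  rw [entry, dif_pos ⟨hx, hy⟩]
  split_ifs with h
  · subst h; simp [gen]
  · rw [LinearMap.id_apply, Pi.single_eq_of_ne]
    · rfl
    · exact fun h' => h (congrArg Subtype.val h').symm

/-- The linear map with a given matrix. -/
lemma exists_entry_eq (M : Γ.Edge → Γ.Edge → Γ.Alg K)
    (hM : ∀ x ∈ I, ∀ y ∈ J, Γ.IsHom K x y (M x y)) :
    ∃ f : Γ.Sum K I →ₗ[Γ.Alg K] Γ.Sum K J, ∀ x ∈ I, ∀ y ∈ J, Γ.entry f x y = M x y := by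
  refine ⟨{ toFun := fun u y => ⟨∑ x : I, (u x : Γ.Alg K) * M x y, Submodule.sum_mem _ fun x _ =>
              Γ.mem_proj.2 (by rw [mul_assoc, (hM x x.2 y y.2).2])⟩
            map_add' := fun a b => by ext y; simp [add_mul, Finset.sum_add_distrib]
            map_smul' := fun a b => by ext y; simp [mul_assoc, Finset.mul_sum] }, ?_⟩
  intro x hx y hy
  rw [entry, dif_pos ⟨hx, hy⟩]
  change ∑ z : I, ((Pi.single (⟨x, hx⟩ : I) (Γ.gen x) : Γ.Sum K I) z : Γ.Alg K) * M z y = M x y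
  rw [Finset.sum_eq_single_of_mem (⟨x, hx⟩ : I) (Finset.mem_univ _)]
  · rw [Pi.single_eq_same]
    exact (hM x hx y hy).1
  · intro z _ hz
    rw [Pi.single_eq_of_ne hz]
    simp

end BrauerTree

namespace TwoTermComplex

variable {V : Type v} [Fintype V] {Γ : BrauerTree V} {K : Type u} [Field K]

/-- The matrix of the differential. -/
noncomputable def mat (T : TwoTermComplex Γ K) (x y : Γ.Edge) : Γ.Alg K := Γ.entry T.f x y

lemma isHom_mat (T : TwoTermComplex Γ K) (x y : Γ.Edge) : Γ.IsHom K x y (T.mat x y) :=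
  Γ.isHom_entry T.f x y

lemma comp_ne_zero_iff (T : TwoTermComplex Γ K) (i : T.I) (j : T.J) :
    T.comp i j ≠ 0 ↔ T.mat i j ≠ 0 := by
  classical
  have key : ∀ z : Γ.proj K i, (T.comp i j z : Γ.Alg K) = z * T.mat i j := by
    intro z
    have h : T.comp i j z = T.f (Pi.single i z) j := by
      unfold comp
      simp only [LinearMap.comp_apply, LinearMap.proj_apply, LinearMap.single_apply]
    rw [h, BrauerTree.apply_eq_sum, Finset.sum_eq_single_of_mem i (Finset.mem_univ _)]
    · rw [Pi.single_eq_same]; rfl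
    · intro x _ hx
      rw [Pi.single_eq_of_ne hx]
      simp
  rw [not_iff_not]
  constructor
  · intro h
    have h1 := key (Γ.gen i)
    rw [h] at h1
    rw [← (T.isHom_mat i j).1]
    exact h1.symm
  · intro h
    ext z
    rw [key, h, mul_zero]
    rfl

section Derived

variable [HasDerivedCategory.{w} (ModuleCat.{max u v} (Γ.Alg K))]

instance projective_of_sum (I : Finset Γ.Edge) :
    Projective (ModuleCat.of (Γ.Alg K) (Γ.Sum K I)) :=
  (IsProjective.iff_projective _).1 inferInstance

lemma homZero_neg_one_iff (S T : TwoTermComplex Γ K) : S.HomZero T (-1) ↔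
    ∀ φ : Γ.Sum K S.J →ₗ[Γ.Alg K] Γ.Sum K T.I, T.f ∘ₗ φ = 0 → φ ∘ₗ S.f = 0 → φ = 0 := by
  refine (TwoTerm.homZero_neg_one_iff (ModuleCat.ofHom S.f) (ModuleCat.ofHom T.f)).trans ?_
  constructor
  · intro h φ h1 h2
    have := h (ModuleCat.ofHom φ) (by rw [← ModuleCat.ofHom_comp, h1]; rfl)
      (by rw [← ModuleCat.ofHom_comp, h2]; rfl)
    exact congrArg ModuleCat.Hom.hom this
  · intro h φ h1 h2
    have := h φ.hom (congrArg ModuleCat.Hom.hom h1) (congrArg ModuleCat.Hom.hom h2)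
    exact ModuleCat.hom_ext this

lemma exists_homotopy (T : TwoTermComplex Γ K) (h : T.HomZero T 1)
    (g : Γ.Sum K T.I →ₗ[Γ.Alg K] Γ.Sum K T.J) :
    ∃ (h₀ : Γ.Sum K T.I →ₗ[Γ.Alg K] Γ.Sum K T.I) (h₁ : Γ.Sum K T.J →ₗ[Γ.Alg K] Γ.Sum K T.J),
      g = T.f ∘ₗ h₀ + h₁ ∘ₗ T.f := by
  obtain ⟨h₀, h₁, hh⟩ := TwoTerm.exists_homotopy_of_homZero_one (ModuleCat.ofHom T.f) h
    (ModuleCat.ofHom g)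
  exact ⟨h₀.hom, h₁.hom, congrArg ModuleCat.Hom.hom hh⟩

/-- Vanishing of `Hom(S, T[-1])` in terms of matrices. -/
lemma homZero_neg_one_iff_matrix (S T : TwoTermComplex Γ K) : S.HomZero T (-1) ↔
    ∀ M : Γ.Edge → Γ.Edge → Γ.Alg K, (∀ y ∈ S.J, ∀ x ∈ T.I, Γ.IsHom K y x (M y x)) →
      (∀ y ∈ S.J, ∀ y' ∈ T.J, ∑ x ∈ T.I, M y x * T.mat x y' = 0) →
      (∀ x ∈ S.I, ∀ x' ∈ T.I, ∑ y ∈ S.J, S.mat x y * M y x' = 0) →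
      ∀ y ∈ S.J, ∀ x ∈ T.I, M y x = 0 := by
  rw [homZero_neg_one_iff]
  constructor
  · intro h M hM h1 h2 y hy x hx
    obtain ⟨φ, hφ⟩ := Γ.exists_entry_eq M hM
    have h0 := h φ (Γ.ext_entry fun y hy y' hy' => by
        rw [Γ.entry_comp _ _ hy hy', Γ.entry_zero, ← h1 y hy y' hy']
        exact Finset.sum_congr rfl fun x hx => by rw [hφ y hy x hx]; rfl)
      (Γ.ext_entry fun x hx x' hx' => by
        rw [Γ.entry_comp _ _ hx hx', Γ.entry_zero, ← h2 x hx x' hx']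
        exact Finset.sum_congr rfl fun y hy => by rw [hφ y hy x' hx']; rfl)
    rw [← hφ y hy x hx, h0, Γ.entry_zero]
  · intro h φ h1 h2
    refine Γ.ext_entry fun y hy x hx => ?_
    rw [Γ.entry_zero]
    refine h (Γ.entry φ) (fun y _ x _ => Γ.isHom_entry φ y x) ?_ ?_ y hy x hx
    · intro y hy y' hy'
      have := Γ.entry_comp φ T.f hy hy'
      rw [h1, Γ.entry_zero] at this
      exact this.symm
    · intro x hx x' hx'
      have := Γ.entry_comp S.f φ hx hx'
      rw [h2, Γ.entry_zero] at this
      exact this.symm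

lemma exists_homotopy_matrix (T : TwoTermComplex Γ K) (h : T.HomZero T 1)
    (M : Γ.Edge → Γ.Edge → Γ.Alg K) (hM : ∀ x ∈ T.I, ∀ y ∈ T.J, Γ.IsHom K x y (M x y)) :
    ∃ H₀ H₁ : Γ.Edge → Γ.Edge → Γ.Alg K, (∀ x y, Γ.IsHom K x y (H₀ x y)) ∧
      (∀ x y, Γ.IsHom K x y (H₁ x y)) ∧ ∀ x ∈ T.I, ∀ y ∈ T.J,
        M x y = ∑ z ∈ T.I, H₀ x z * T.mat z y + ∑ z ∈ T.J, T.mat x z * H₁ z y := by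
  obtain ⟨g, hg⟩ := Γ.exists_entry_eq M hM
  obtain ⟨h₀, h₁, hh⟩ := T.exists_homotopy h g
  refine ⟨Γ.entry h₀, Γ.entry h₁, Γ.isHom_entry h₀, Γ.isHom_entry h₁, fun x hx y hy => ?_⟩
  rw [← hg x hx y hy, hh, Γ.entry_add, Γ.entry_comp _ _ hx hy, Γ.entry_comp _ _ hx hy]
  rfl

end Derived

/-! ### Idempotent endomorphisms -/

lemma eq_zero_of_range_le_superfluous {R : Type*} {M : Type*} [Ring R] [AddCommGroup M]
    [Module R M] {N : Submodule R M} (hN : N.IsSuperfluous) {p : M →ₗ[R] M}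
    (hp : IsIdempotentElem p) (h : LinearMap.range p ≤ N) : p = 0 := by
  have h1 := hN (LinearMap.ker p) (by
    rw [eq_top_iff, ← (LinearMap.IsIdempotentElem.isCompl hp).sup_eq_top]
    exact sup_le_sup_right h _)
  exact LinearMap.ker_eq_top.1 h1

lemma isIdempotentElem_eq_zero_or_one {R : Type u} {M : Type w} [Ring R] [AddCommGroup M]
    [Module R M] (hM : Indecomposable (ModuleCat.of R M)) {p : M →ₗ[R] M}
    (hp : IsIdempotentElem p) : p = 0 ∨ p = 1 := by
  let e := Submodule.prodEquivOfIsCompl _ _ (LinearMap.IsIdempotentElem.isCompl hp)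
  have i : ModuleCat.of R M ≅ ModuleCat.of R (LinearMap.range p) ⊞
      ModuleCat.of R (LinearMap.ker p) :=
    e.symm.toModuleIso ≪≫ (ModuleCat.biprodIsoProd (ModuleCat.of R (LinearMap.range p))
      (ModuleCat.of R (LinearMap.ker p))).symm
  rcases hM.2 _ _ i with h | h
  · left
    rw [ModuleCat.isZero_of_iff_subsingleton, Submodule.subsingleton_iff_eq_bot] at h
    exact LinearMap.range_eq_bot.1 h
  · right
    rw [ModuleCat.isZero_of_iff_subsingleton, Submodule.subsingleton_iff_eq_bot,
      LinearMap.ker_eq_bot] at h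
    ext x
    exact h (congrArg (fun q : M →ₗ[R] M => q x) hp)

lemma eq_zero_of_idempotent (T : TwoTermComplex Γ K) (hT : T.IsMinimal)
    {p₀ : Γ.Sum K T.I →ₗ[Γ.Alg K] Γ.Sum K T.I} {p₁ : Γ.Sum K T.J →ₗ[Γ.Alg K] Γ.Sum K T.J}
    (h₀ : IsIdempotentElem p₀) (h₁ : IsIdempotentElem p₁) (hc : T.f ∘ₗ p₀ = p₁ ∘ₗ T.f)
    (hr : LinearMap.range p₁ ≤ LinearMap.range T.f) : p₀ = 0 ∧ p₁ = 0 := by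
  have h1 := eq_zero_of_range_le_superfluous hT.1 h₁ hr
  refine ⟨eq_zero_of_range_le_superfluous hT.2 h₀ ?_, h1⟩
  rw [h1, LinearMap.zero_comp] at hc
  exact LinearMap.range_le_ker_iff.2 hc

lemma idempotent_trivial (T : TwoTermComplex Γ K) (hT : T.IsMinimal)
    (hM : Indecomposable (ModuleCat.of (Γ.Alg K) T.Cok))
    {p₀ : Γ.Sum K T.I →ₗ[Γ.Alg K] Γ.Sum K T.I} {p₁ : Γ.Sum K T.J →ₗ[Γ.Alg K] Γ.Sum K T.J}
    (h₀ : IsIdempotentElem p₀) (h₁ : IsIdempotentElem p₁) (hc : T.f ∘ₗ p₀ = p₁ ∘ₗ T.f) :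
    (p₀ = 0 ∧ p₁ = 0) ∨ (p₀ = 1 ∧ p₁ = 1) := by
  have hle : LinearMap.range T.f ≤ (LinearMap.range T.f).comap p₁ := by
    rintro _ ⟨z, rfl⟩
    exact ⟨p₀ z, congrArg (fun q : _ →ₗ[Γ.Alg K] _ => q z) hc⟩
  let p : T.Cok →ₗ[Γ.Alg K] T.Cok := Submodule.mapQ _ _ p₁ hle
  have hp : IsIdempotentElem p := by
    refine LinearMap.ext fun z => ?_
    obtain ⟨z, rfl⟩ := Submodule.mkQ_surjective _ z
    exact congrArg (fun q : _ →ₗ[Γ.Alg K] _ => Submodule.mkQ (LinearMap.range T.f) (q z)) h₁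
  rcases isIdempotentElem_eq_zero_or_one hM hp with h | h
  · left
    refine T.eq_zero_of_idempotent hT h₀ h₁ hc ?_
    rintro _ ⟨z, rfl⟩
    rw [← Submodule.Quotient.mk_eq_zero]
    exact congrArg (fun q : T.Cok →ₗ[Γ.Alg K] T.Cok => q (Submodule.Quotient.mk z)) h
  · right
    have := T.eq_zero_of_idempotent hT h₀.one_sub h₁.one_sub
      (by rw [LinearMap.comp_sub, LinearMap.sub_comp, hc]; rfl) (by
        rintro _ ⟨z, rfl⟩
        rw [← Submodule.Quotient.mk_eq_zero]
        have h2 := congrArg (fun q : T.Cok →ₗ[Γ.Alg K] T.Cok => q (Submodule.Quotient.mk z)) h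
        have h3 : (Submodule.Quotient.mk (p₁ z) : T.Cok) = Submodule.Quotient.mk z := h2
        rw [LinearMap.sub_apply, Submodule.Quotient.mk_sub, h3]
        exact sub_self _)
    exact ⟨(sub_eq_zero.1 this.1).symm, (sub_eq_zero.1 this.2).symm⟩

open scoped Classical in
/-- Compatible idempotent matrices on a minimal presentation of an indecomposable module have
constant diagonal. -/
lemma idempotent_matrix_trivial (T : TwoTermComplex Γ K) (hT : T.IsMinimal)
    (hM : Indecomposable (ModuleCat.of (Γ.Alg K) T.Cok))
    {E₀ E₁ : Γ.Edge → Γ.Edge → Γ.Alg K}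
    (hE₀ : ∀ x ∈ T.I, ∀ y ∈ T.I, Γ.IsHom K x y (E₀ x y))
    (hE₁ : ∀ x ∈ T.J, ∀ y ∈ T.J, Γ.IsHom K x y (E₁ x y))
    (h₀ : ∀ x ∈ T.I, ∀ y ∈ T.I, ∑ z ∈ T.I, E₀ x z * E₀ z y = E₀ x y)
    (h₁ : ∀ x ∈ T.J, ∀ y ∈ T.J, ∑ z ∈ T.J, E₁ x z * E₁ z y = E₁ x y)
    (hc : ∀ x ∈ T.I, ∀ y ∈ T.J,
      ∑ z ∈ T.I, E₀ x z * T.mat z y = ∑ z ∈ T.J, T.mat x z * E₁ z y) :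
    ((∀ x ∈ T.I, E₀ x x = 0) ∧ ∀ x ∈ T.J, E₁ x x = 0) ∨
      ((∀ x ∈ T.I, E₀ x x = Γ.idem K x) ∧ ∀ x ∈ T.J, E₁ x x = Γ.idem K x) := by
  obtain ⟨p₀, hp₀⟩ := Γ.exists_entry_eq E₀ hE₀
  obtain ⟨p₁, hp₁⟩ := Γ.exists_entry_eq E₁ hE₁
  have i₀ : IsIdempotentElem p₀ := Γ.ext_entry fun x hx y hy => by
    rw [Module.End.mul_eq_comp, Γ.entry_comp _ _ hx hy, hp₀ x hx y hy, ← h₀ x hx y hy]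
    exact Finset.sum_congr rfl fun z hz => by rw [hp₀ x hx z hz, hp₀ z hz y hy]
  have i₁ : IsIdempotentElem p₁ := Γ.ext_entry fun x hx y hy => by
    rw [Module.End.mul_eq_comp, Γ.entry_comp _ _ hx hy, hp₁ x hx y hy, ← h₁ x hx y hy]
    exact Finset.sum_congr rfl fun z hz => by rw [hp₁ x hx z hz, hp₁ z hz y hy]
  have c : T.f ∘ₗ p₀ = p₁ ∘ₗ T.f := Γ.ext_entry fun x hx y hy => by
    rw [Γ.entry_comp _ _ hx hy, Γ.entry_comp _ _ hx hy]
    refine Eq.trans ?_ ((hc x hx y hy).trans ?_)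
    · exact Finset.sum_congr rfl fun z hz => by rw [hp₀ x hx z hz]; rfl
    · exact Finset.sum_congr rfl fun z hz => by rw [hp₁ z hz y hy]; rfl
  rcases T.idempotent_trivial hT hM i₀ i₁ c with ⟨rfl, rfl⟩ | ⟨rfl, rfl⟩
  · left
    exact ⟨fun x hx => by rw [← hp₀ x hx x hx, Γ.entry_zero],
      fun x hx => by rw [← hp₁ x hx x hx, Γ.entry_zero]⟩
  · right
    exact ⟨fun x hx => by rw [← hp₀ x hx x hx, Module.End.one_eq_id, Γ.entry_id hx hx, if_pos rfl],
      fun x hx => by rw [← hp₁ x hx x hx, Module.End.one_eq_id, Γ.entry_id hx hx, if_pos rfl]⟩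

end TwoTermComplex

/-! ### Branches of the tree at a vertex -/

namespace BrauerTree

variable {V : Type v} (Γ : BrauerTree V)

/-- The tree with the edges at `v` removed. -/
def without (v : V) : SimpleGraph V where
  Adj u w := Γ.graph.Adj u w ∧ u ≠ v ∧ w ≠ v
  symm := ⟨fun _ _ h => ⟨h.1.symm, h.2.2, h.2.1⟩⟩
  loopless := ⟨fun _ h => h.1.ne rfl⟩

lemma not_reachable_without {v w : V} (hw : w ≠ v) : ¬ (Γ.without v).Reachable v w := by
  rintro ⟨p⟩
  cases p with
  | nil => exact hw rfl
  | cons h _ => exact h.2.1 rfl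

/-- The edge `z` lies on the branch at `a.fst` that starts with the dart `a`. -/
def Branch (a : Γ.Arrow) (z : Γ.Edge) : Prop :=
  ∃ u, Γ.Inc u z ∧ (Γ.without a.fst).Reachable u a.snd

lemma inc_eq_of_ne {z : Γ.Edge} {u w : V} (hu : Γ.Inc u z) (hw : Γ.Inc w z) (h : u ≠ w) :
    ∃ d : Γ.Arrow, Γ.src d = z ∧ d.fst = u ∧ d.snd = w := by
  obtain ⟨d, rfl, rfl⟩ := Γ.inc_iff.1 hu
  rcases Γ.inc_src_iff.1 hw with h1 | h1
  · exact absurd h1.symm h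
  · exact ⟨d, rfl, rfl, h1.symm⟩

lemma branch_iff {a : Γ.Arrow} {z : Γ.Edge} {u : V} (hu : Γ.Inc u z) (hne : u ≠ a.fst) :
    Γ.Branch a z ↔ (Γ.without a.fst).Reachable u a.snd := by
  constructor
  · rintro ⟨w, hw, hr⟩
    by_cases h : u = w
    · rwa [h]
    · have hwv : w ≠ a.fst := by
        rintro rfl
        exact Γ.not_reachable_without a.fst_ne_snd.symm hr
      obtain ⟨d, -, rfl, rfl⟩ := Γ.inc_eq_of_ne hu hw h
      have hadj : (Γ.without a.fst).Adj d.fst d.snd := ⟨d.adj, hne, hwv⟩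
      exact hadj.reachable.trans hr
  · exact fun h => ⟨u, hu, h⟩

lemma branch_congr {a : Γ.Arrow} {z z' : Γ.Edge} {u : V} (hu : Γ.Inc u z) (hu' : Γ.Inc u z')
    (hne : u ≠ a.fst) : Γ.Branch a z ↔ Γ.Branch a z' := by
  rw [Γ.branch_iff hu hne, Γ.branch_iff hu' hne]

lemma branch_src_iff {a c : Γ.Arrow} (h : c.fst = a.fst) : Γ.Branch a (Γ.src c) ↔ c = a := by
  classical
  have hinc : Γ.Inc c.snd (Γ.src c) := Γ.inc_src_iff.2 (Or.inr rfl)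
  have hne : c.snd ≠ a.fst := by rw [← h]; exact c.fst_ne_snd.symm
  rw [Γ.branch_iff hinc hne]
  constructor
  · rintro ⟨p⟩
    refine Γ.dart_eq h ?_
    by_contra hsnd
    let q := p.toPath
    have hle : Γ.without a.fst ≤ Γ.graph := fun u w h => h.1
    have hq : (q.1.mapLe hle).IsPath := (SimpleGraph.Walk.isPath_mapLe hle).2 q.2
    have hc : Γ.graph.Adj c.snd a.fst := by rw [← h]; exact c.adj.symm
    let r : Γ.graph.Walk c.snd a.snd := .cons hc (.cons a.adj .nil)
    have hr : r.IsPath := by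
      simp [r, SimpleGraph.Walk.cons_isPath_iff, hne, hsnd, a.fst_ne_snd]
    have heq := (Γ.isTree.isAcyclic.subsingleton_path _ _).elim ⟨_, hq⟩ ⟨_, hr⟩
    have hmem : a.fst ∈ (q.1.mapLe hle).support := by
      rw [Subtype.mk.inj heq]; simp [r]
    rw [SimpleGraph.Walk.support_mapLe_eq_support] at hmem
    exact Γ.not_reachable_without hne (q.1.takeUntil _ hmem).reachable.symm
  · rintro rfl
    exact SimpleGraph.Reachable.refl _

lemma darts_unique {a b a' b' : Γ.Arrow} (h : a.fst = b.fst) (hne : a ≠ b)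
    (h' : a'.fst = b'.fst) (ha : Γ.src a' = Γ.src a) (hb : Γ.src b' = Γ.src b) :
    a' = a ∧ b' = b := by
  rcases Γ.src_eq_src_iff.1 ha with h1 | h1
  · subst h1
    exact ⟨rfl, Γ.eq_of_src_eq hb (by rw [← h', h])⟩
  · exfalso
    have h2 := Γ.inc_fst b'
    rw [hb, ← h', h1] at h2
    rcases Γ.inc_src_iff.1 h2 with h3 | h3
    · exact a.fst_ne_snd (by rw [h, ← h3]; rfl)
    · exact hne (Γ.dart_eq h h3)

/-- The subgraph of the tree formed by a set of edges. -/
def edgeGraph (M : Set Γ.Edge) : SimpleGraph V where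
  Adj u w := ∃ d : Γ.Arrow, Γ.src d ∈ M ∧ d.fst = u ∧ d.snd = w
  symm := ⟨fun _ _ ⟨d, h, h1, h2⟩ => ⟨d.symm, by rwa [src_symm], h2, h1⟩⟩
  loopless := ⟨fun _ ⟨d, _, h1, h2⟩ => d.fst_ne_snd (h1.trans h2.symm)⟩

/-- The vertices of the tree that are end points of an edge in `M`. -/
def ends (M : Set Γ.Edge) : Set V := {v | ∃ z ∈ M, Γ.Inc v z}

/-- The sets `I` and `J` of edges form an alternating path in the tree. -/
structure IsZigzag (I J : Finset Γ.Edge) : Prop where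
  disjoint : ∀ x ∈ I, x ∉ J
  unique_left : ∀ a b : Γ.Arrow, a.fst = b.fst → Γ.src a ∈ I → Γ.src b ∈ I → a = b
  unique_right : ∀ a b : Γ.Arrow, a.fst = b.fst → Γ.src a ∈ J → Γ.src b ∈ J → a = b
  reachable : ∀ u ∈ Γ.ends {x | x ∈ I ∨ x ∈ J}, ∀ w ∈ Γ.ends {x | x ∈ I ∨ x ∈ J},
    (Γ.edgeGraph {x | x ∈ I ∨ x ∈ J}).Reachable u w

end BrauerTree

/-! ### The structure of indecomposable partial tilting complexes -/

namespace TwoTermComplex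

variable {V : Type v} [Fintype V] {Γ : BrauerTree V} {K : Type u} [Field K]

lemma idem_ne_zero (x : Γ.Edge) : Γ.idem K x ≠ 0 := by
  obtain ⟨d, rfl⟩ := Γ.exists_src_eq x
  exact Γ.run_ne_zero K d (Nat.zero_le _)

lemma augmentation_mat_eq_zero (T : TwoTermComplex Γ K) (hT : T.IsMinimal) {x : Γ.Edge}
    (hI : x ∈ T.I) (hJ : x ∈ T.J) (ε : Γ.Alg K →ₐ[K] K) (hε : ε (Γ.idem K x) = 1) :
    ε (T.mat x x) = 0 := by
  classical
  by_contra hne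
  let L : Submodule (Γ.Alg K) (Γ.Sum K T.J) :=
    { carrier := {u | ε (u ⟨x, hJ⟩ : Γ.Alg K) = 0}
      add_mem' := fun {a b} ha hb => by
        simp only [Set.mem_ofPred_eq] at *
        simp [ha, hb]
      zero_mem' := by simp
      smul_mem' := fun c a ha => by
        simp only [Set.mem_ofPred_eq] at *
        simp [ha] }
  have htop := hT.1 L (by
    rw [eq_top_iff]
    intro u _
    let g : Γ.Sum K T.J := T.f (Pi.single ⟨x, hI⟩ (Γ.gen x))
    have hg : (g ⟨x, hJ⟩ : Γ.Alg K) = T.mat x x := (Γ.entry_of_mem T.f ⟨x, hI⟩ ⟨x, hJ⟩).symm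
    let c : Γ.Alg K := algebraMap K _ (ε (u ⟨x, hJ⟩ : Γ.Alg K) / ε (T.mat x x))
    rw [← add_sub_cancel (c • g) u]
    refine Submodule.add_mem_sup (Submodule.smul_mem _ _ ⟨_, rfl⟩) ?_
    change ε (u ⟨x, hJ⟩ - c * (g ⟨x, hJ⟩ : Γ.Alg K)) = 0
    rw [map_sub, map_mul, hg, AlgHom.commutes]
    simp [hne])
  have h1 : (Pi.single (⟨x, hJ⟩ : T.J) (Γ.gen x) : Γ.Sum K T.J) ∈ L := by
    rw [htop]; trivial
  change ε ((Pi.single (⟨x, hJ⟩ : T.J) (Γ.gen x) : Γ.Sum K T.J) ⟨x, hJ⟩ : Γ.Alg K) = 0 at h1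
  rw [Pi.single_eq_same] at h1
  exact one_ne_zero (hε.symm.trans h1)

section

variable [HasDerivedCategory.{w} (ModuleCat.{max u v} (Γ.Alg K))]

lemma disjoint_of_isMinimal (T : TwoTermComplex Γ K) (hT : T.IsMinimal) (h1 : T.HomZero T 1)
    {x : Γ.Edge} (hI : x ∈ T.I) : x ∉ T.J := by
  classical
  intro hJ
  obtain ⟨ε, hε, hε'⟩ := Γ.exists_augmentation K x
  obtain ⟨H₀, H₁, -, -, hh⟩ := T.exists_homotopy_matrix h1
    (fun a b => if a = x ∧ b = x then Γ.idem K x else 0) (by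
      intro a _ b _
      split_ifs with h
      · rw [h.1, h.2]; exact ⟨Γ.idem_mul_self K x, Γ.idem_mul_self K x⟩
      · exact Γ.isHom_zero _ _)
  have h2 := congrArg ε (hh x hI x hJ)
  have hmat := T.augmentation_mat_eq_zero hT hI hJ ε hε
  rw [if_pos ⟨rfl, rfl⟩, hε, map_add, map_sum, map_sum, Finset.sum_eq_zero, Finset.sum_eq_zero,
    add_zero] at h2
  · exact one_ne_zero h2
  · intro z _
    by_cases hz : z = x
    · rw [hz, map_mul, hmat, zero_mul]
    · rw [← (T.isHom_mat x z).2, map_mul, map_mul, hε' z hz, mul_zero, zero_mul]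
  · intro z _
    by_cases hz : z = x
    · rw [hz, map_mul, hmat, mul_zero]
    · rw [← (T.isHom_mat z x).1, map_mul, map_mul, hε' z hz, zero_mul, mul_zero]

/-- A component of the differential is nonzero if no marked vertex lies strictly between the two
vertices on their cycle. -/
lemma mat_ne_zero_of_closest (T : TwoTermComplex Γ K) (hT : T.IsMinimal) (h1 : T.HomZero T 1)
    {a b : Γ.Arrow} (hab : a.fst = b.fst) (ha : Γ.src a ∈ T.I) (hb : Γ.src b ∈ T.J)
    (hcl : ∀ c : Γ.Arrow, a.fst = c.fst → (Γ.src c ∈ T.I ∨ Γ.src c ∈ T.J) → c ≠ a → c ≠ b →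
      Γ.gap a b < Γ.gap a c) : T.mat (Γ.src a) (Γ.src b) ≠ 0 := by
  classical
  intro h0
  have hdisj : ∀ x ∈ T.I, x ∉ T.J := fun x hx => T.disjoint_of_isMinimal hT h1 hx
  have hsne : Γ.src a ≠ Γ.src b := fun h => hdisj _ ha (h ▸ hb)
  have hne : a ≠ b := fun h => hsne (by rw [h])
  obtain ⟨H₀, H₁, i₀, i₁, hh⟩ := T.exists_homotopy_matrix h1
    (fun x y => if x = Γ.src a ∧ y = Γ.src b then Γ.path K a b else 0) (by
      intro x _ y _
      split_ifs with h
      · rw [h.1, h.2]; exact Γ.isHom_path hab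
      · exact Γ.isHom_zero _ _)
  have key : ∀ (z : Γ.Edge), (z ∈ T.I ∨ z ∈ T.J) → z ≠ Γ.src a → z ≠ Γ.src b →
      ∀ p q : Γ.Alg K, Γ.IsHom K (Γ.src a) z p → Γ.IsHom K z (Γ.src b) q → p * q = 0 := by
    intro z hz hza hzb p q hp hq
    by_contra hpq
    obtain ⟨a', c, b', h2, h3, ha', rfl, hb'⟩ :=
      Γ.exists_darts_of_mul_ne_zero hza.symm hzb hp hq hpq
    obtain ⟨rfl, rfl⟩ := Γ.darts_unique hab hne (h2.trans h3) ha' hb'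
    have hca : a' ≠ c := fun h => hza (by rw [h])
    have hcb : c ≠ b' := fun h => hzb (by rw [h])
    obtain ⟨s, rfl⟩ := Γ.isHom_eq_smul h2 hca hp
    obtain ⟨t, rfl⟩ := Γ.isHom_eq_smul h3 hcb hq
    refine hpq ?_
    rw [smul_mul_smul_comm, Γ.path_mul_path_eq_zero h2 h3 hne, smul_zero]
    have h5 := hcl c h2 hz hca.symm hcb
    rcases Γ.gap_add_gap h2 h3 with h6 | h6 <;> omega
  have h2 := hh _ ha _ hb
  rw [if_pos ⟨rfl, rfl⟩, Finset.sum_eq_zero, Finset.sum_eq_zero, add_zero] at h2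
  · exact Γ.path_ne_zero hab h2
  · intro z hz
    by_cases hzb : z = Γ.src b
    · rw [hzb, h0, zero_mul]
    · exact key z (Or.inr hz) (fun h => hdisj _ ha (h ▸ hz)) hzb _ _ (T.isHom_mat _ _) (i₁ _ _)
  · intro z hz
    by_cases hza : z = Γ.src a
    · rw [hza, h0, mul_zero]
    · exact key z (Or.inl hz) hza (fun h => hdisj _ hz (h ▸ hb)) _ _ (i₀ _ _) (T.isHom_mat _ _)

end

lemma exists_inc_of_mat_ne_zero (T : TwoTermComplex Γ K) {x y : Γ.Edge} (h : T.mat x y ≠ 0) :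
    ∃ u, Γ.Inc u x ∧ Γ.Inc u y := by
  obtain ⟨a, b, hab, rfl, rfl⟩ := Γ.exists_darts_of_isHom_ne_zero (T.isHom_mat x y) h
  exact ⟨a.fst, Γ.inc_fst a, hab ▸ Γ.inc_fst b⟩

open scoped Classical in
/-- A set of marked vertices that is closed under the nonzero components of the differential
is empty or consists of all marked vertices. -/
lemma closed_trivial (T : TwoTermComplex Γ K) (hT : T.IsMinimal)
    (hM : Indecomposable (ModuleCat.of (Γ.Alg K) T.Cok)) (B : Γ.Edge → Prop)
    (hB : ∀ x ∈ T.I, ∀ y ∈ T.J, T.mat x y ≠ 0 → (B x ↔ B y))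
    {x y : Γ.Edge} (hx : x ∈ T.marked) (hy : y ∈ T.marked) (hBx : B x) : B y := by
  let E : Γ.Edge → Γ.Edge → Γ.Alg K := fun x y => if x = y ∧ B x then Γ.idem K x else 0
  have hE : ∀ x y, Γ.IsHom K x y (E x y) := by
    intro x y
    dsimp only [E]
    split_ifs with h
    · rw [← h.1]; exact ⟨Γ.idem_mul_self K x, Γ.idem_mul_self K x⟩
    · exact Γ.isHom_zero _ _
  have left : ∀ (S : Finset Γ.Edge) (M : Γ.Edge → Γ.Alg K) (x : Γ.Edge), x ∈ S →
      (Γ.idem K x * M x = M x) → ∑ z ∈ S, E x z * M z = if B x then M x else 0 := by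
    intro S M x hx hM
    rw [Finset.sum_eq_single_of_mem x hx]
    · simp only [E, true_and]
      split_ifs
      · exact hM
      · rw [zero_mul]
    · intro z _ hz
      simp only [E]
      rw [if_neg (fun h => hz h.1.symm), zero_mul]
  have right : ∀ (S : Finset Γ.Edge) (M : Γ.Edge → Γ.Alg K) (y : Γ.Edge), y ∈ S →
      (M y * Γ.idem K y = M y) → ∑ z ∈ S, M z * E z y = if B y then M y else 0 := by
    intro S M y hy hM
    rw [Finset.sum_eq_single_of_mem y hy]
    · simp only [E, true_and]
      split_ifs
      · exact hM
      · rw [mul_zero]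
    · intro z _ hz
      simp only [E]
      rw [if_neg (fun h => hz h.1), mul_zero]
  have hid : ∀ (S : Finset Γ.Edge), ∀ x ∈ S, ∀ y ∈ S, ∑ z ∈ S, E x z * E z y = E x y := by
    intro S x hx y hy
    rw [left S (fun z => E z y) x hx (hE x y).1]
    by_cases h : B x <;> simp [E, h]
  have key := T.idempotent_matrix_trivial hT hM (E₀ := E) (E₁ := E) (fun x _ y _ => hE x y)
    (fun x _ y _ => hE x y) (hid _) (hid _) (by
      intro x hx y hy
      rw [left T.I (fun z => T.mat z y) x hx (T.isHom_mat x y).1,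
        right T.J (fun z => T.mat x z) y hy (T.isHom_mat x y).2]
      by_cases h0 : T.mat x y = 0
      · simp [h0]
      · simp only [hB x hx y hy h0])
  have hEd : ∀ z, E z z = if B z then Γ.idem K z else 0 := fun z => by simp [E]
  have hEx : E x x ≠ 0 := by rw [hEd, if_pos hBx]; exact idem_ne_zero x
  rcases key with ⟨k₀, k₁⟩ | ⟨k₀, k₁⟩
  · rcases hx with hx | hx
    · exact absurd (k₀ x hx) hEx
    · exact absurd (k₁ x hx) hEx
  · have hEy : E y y = Γ.idem K y := hy.elim (k₀ y) (k₁ y)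
    by_contra hcon
    rw [hEd, if_neg hcon] at hEy
    exact idem_ne_zero y hEy.symm

lemma reachable_marked (T : TwoTermComplex Γ K) (hT : T.IsMinimal)
    (hM : Indecomposable (ModuleCat.of (Γ.Alg K) T.Cok)) {u w : V} (hu : u ∈ Γ.ends T.marked)
    (hw : w ∈ Γ.ends T.marked) : (Γ.edgeGraph T.marked).Reachable u w := by
  obtain ⟨x, hx, hux⟩ := hu
  obtain ⟨y, hy, hwy⟩ := hw
  have hadj : ∀ z ∈ T.marked, ∀ s t, Γ.Inc s z → Γ.Inc t z →
      (Γ.edgeGraph T.marked).Reachable s t := by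
    intro z hz s t hs ht
    by_cases h : s = t
    · rw [h]
    · obtain ⟨d, rfl, rfl, rfl⟩ := Γ.inc_eq_of_ne hs ht h
      exact SimpleGraph.Adj.reachable ⟨d, hz, rfl, rfl⟩
  obtain ⟨s, hs, hr⟩ := T.closed_trivial hT hM
    (fun z => ∃ s, Γ.Inc s z ∧ (Γ.edgeGraph T.marked).Reachable u s) (by
      intro z hz z' hz' h0
      obtain ⟨t, ht, ht'⟩ := T.exists_inc_of_mat_ne_zero h0
      constructor
      · rintro ⟨s, hs, hr⟩
        exact ⟨t, ht', hr.trans (hadj z (Or.inl hz) s t hs ht)⟩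
      · rintro ⟨s, hs, hr⟩
        exact ⟨t, ht, hr.trans (hadj z' (Or.inr hz') s t hs ht')⟩) hx hy
    ⟨u, hux, SimpleGraph.Reachable.refl u⟩
  exact hr.trans (hadj y hy s w hs hwy)

/-- Two marked vertices of the quiver on the cycle at `v` are linked by the differential at `v`
unless all marked vertices on this cycle have the same type. -/
lemma eq_of_same_type (T : TwoTermComplex Γ K) (hT : T.IsMinimal)
    (hM : Indecomposable (ModuleCat.of (Γ.Alg K) T.Cok)) {a b : Γ.Arrow} (hab : a.fst = b.fst)
    (ha : Γ.src a ∈ T.marked) (hb : Γ.src b ∈ T.marked)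
    (hno : ∀ c d : Γ.Arrow, c.fst = a.fst → d.fst = a.fst → Γ.src c ∈ T.I → Γ.src d ∈ T.J → False) :
    a = b := by
  have := T.closed_trivial hT hM (Γ.Branch a) (by
    intro x hx y hy h0
    obtain ⟨t, ht, ht'⟩ := T.exists_inc_of_mat_ne_zero h0
    by_cases h : t = a.fst
    · subst h
      obtain ⟨c, hc, rfl⟩ := Γ.inc_iff.1 ht
      obtain ⟨d, hd, rfl⟩ := Γ.inc_iff.1 ht'
      exact (hno c d hc hd hx hy).elim
    · exact Γ.branch_congr ht ht' h) ha hb ((Γ.branch_src_iff rfl).2 rfl)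
  exact ((Γ.branch_src_iff hab.symm).1 this).symm

end TwoTermComplex

namespace TwoTermComplex

variable {V : Type v} [Fintype V] {Γ : BrauerTree V} {K : Type u} [Field K]

open scoped Classical in
/-- If the differential is nonzero from `a` to a closest `b` on a cycle, then there is no other
marked vertex on this cycle. -/
lemma eq_or_eq_of_closest (T : TwoTermComplex Γ K) (hT : T.IsMinimal)
    (hM : Indecomposable (ModuleCat.of (Γ.Alg K) T.Cok)) (hdisj : ∀ x ∈ T.I, x ∉ T.J)
    {a b : Γ.Arrow} (hab : a.fst = b.fst) (ha : Γ.src a ∈ T.I) (hb : Γ.src b ∈ T.J)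
    (hcl : ∀ c : Γ.Arrow, a.fst = c.fst → (Γ.src c ∈ T.I ∨ Γ.src c ∈ T.J) → c ≠ a → c ≠ b →
      Γ.gap a b < Γ.gap a c) (hmat : T.mat (Γ.src a) (Γ.src b) ≠ 0)
    {c : Γ.Arrow} (hac : a.fst = c.fst) (hc : Γ.src c ∈ T.marked) : c = a ∨ c = b := by
  have hne : a ≠ b := by rintro rfl; exact hdisj _ ha hb
  have hgb := Γ.gap_lt_per hab
  obtain ⟨s, hs⟩ := Γ.isHom_eq_smul hab hne (T.isHom_mat _ _)
  have hs0 : s ≠ 0 := by rintro rfl; rw [zero_smul] at hs; exact hmat hs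
  -- the matrix entries of the two nilpotent parts
  have ex₀ : ∀ z : Γ.Edge, ∃ n : Γ.Alg K, Γ.IsHom K z (Γ.src a) n ∧
      ((z ∈ T.I ∧ Γ.Inc a.fst z ∧ z ≠ Γ.src a) →
        n * T.mat (Γ.src a) (Γ.src b) = T.mat z (Γ.src b)) ∧
      (¬ (z ∈ T.I ∧ Γ.Inc a.fst z ∧ z ≠ Γ.src a) → n = 0) := by
    intro z
    by_cases h : z ∈ T.I ∧ Γ.Inc a.fst z ∧ z ≠ Γ.src a
    · obtain ⟨hz, hinc, hza⟩ := h
      obtain ⟨i, hi, rfl⟩ := Γ.inc_iff.1 hinc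
      have hia : i ≠ a := fun h => hza (by rw [h])
      have hib : i ≠ b := by rintro rfl; exact hdisj _ hz hb
      obtain ⟨t, ht⟩ := Γ.isHom_eq_smul (hi.trans hab) hib (T.isHom_mat _ _)
      refine ⟨(t / s) • Γ.path K i a, (Γ.isHom_path hi).smul _, fun _ => ?_,
        fun h => absurd ⟨hz, hinc, hza⟩ h⟩
      have h1 := hcl i hi.symm (Or.inl hz) hia hib
      have h2 := Γ.gap_add_gap_self hi hia
      rw [hs, ht, smul_mul_smul_comm, Γ.path_mul_path_of_le hi hab (by omega),
        div_mul_cancel₀ _ hs0]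
    · exact ⟨0, Γ.isHom_zero _ _, fun h' => absurd h' h, fun _ => rfl⟩
  have ex₁ : ∀ z : Γ.Edge, ∃ n : Γ.Alg K, Γ.IsHom K (Γ.src b) z n ∧
      ((z ∈ T.J ∧ Γ.Inc a.fst z ∧ z ≠ Γ.src b) →
        T.mat (Γ.src a) (Γ.src b) * n = T.mat (Γ.src a) z) ∧
      (¬ (z ∈ T.J ∧ Γ.Inc a.fst z ∧ z ≠ Γ.src b) → n = 0) := by
    intro z
    by_cases h : z ∈ T.J ∧ Γ.Inc a.fst z ∧ z ≠ Γ.src b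
    · obtain ⟨hz, hinc, hzb⟩ := h
      obtain ⟨j, hj, rfl⟩ := Γ.inc_iff.1 hinc
      have hjb : j ≠ b := fun h => hzb (by rw [h])
      have hja : j ≠ a := by rintro rfl; exact hdisj _ ha hz
      obtain ⟨t, ht⟩ := Γ.isHom_eq_smul hj.symm hja.symm (T.isHom_mat _ _)
      have hbj : b.fst = j.fst := by rw [hj, hab]
      refine ⟨(t / s) • Γ.path K b j, (Γ.isHom_path hbj).smul _, fun _ => ?_,
        fun h => absurd ⟨hz, hinc, hzb⟩ h⟩
      have h1 := hcl j hj.symm (Or.inr hz) hja hjb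
      have h2 := Γ.gap_add_gap hab hbj
      have h3 := Γ.gap_lt_per hbj
      have h4 := Γ.gap_lt_per hj.symm
      rw [← Γ.per_eq hab] at h3
      rw [hs, ht, smul_mul_smul_comm, Γ.path_mul_path_of_le hab hbj (by omega),
        mul_div_cancel₀ _ hs0]
    · exact ⟨0, Γ.isHom_zero _ _, fun h' => absurd h' h, fun _ => rfl⟩
  choose n₀ hn₀ hn₀' hn₀'' using ex₀
  choose n₁ hn₁ hn₁' hn₁'' using ex₁
  let B : Γ.Edge → Prop := fun z => Γ.Branch a z ∨ Γ.Branch b z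
  have hBa : B (Γ.src a) := Or.inl ((Γ.branch_src_iff rfl).2 rfl)
  have hBb : B (Γ.src b) := Or.inr ((Γ.branch_src_iff rfl).2 rfl)
  have hB : ∀ d : Γ.Arrow, d.fst = a.fst → d ≠ a → d ≠ b → ¬ B (Γ.src d) := by
    rintro d hd hda hdb (h | h)
    · exact hda ((Γ.branch_src_iff hd).1 h)
    · exact hdb ((Γ.branch_src_iff (hd.trans hab)).1 h)
  have hBc : ∀ x y, T.mat x y ≠ 0 → (¬ Γ.Inc a.fst x ∨ ¬ Γ.Inc a.fst y) → (B x ↔ B y) := by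
    intro x y h0 hnot
    obtain ⟨t, ht, ht'⟩ := T.exists_inc_of_mat_ne_zero h0
    have hta : t ≠ a.fst := by rintro rfl; tauto
    exact or_congr (Γ.branch_congr ht ht' hta) (Γ.branch_congr ht ht' (hab ▸ hta))
  let E₀ : Γ.Edge → Γ.Edge → Γ.Alg K := fun x y =>
    (if x = y ∧ B x then Γ.idem K x else 0) + if y = Γ.src a then n₀ x else 0
  let E₁ : Γ.Edge → Γ.Edge → Γ.Alg K := fun x y =>
    (if x = y ∧ B x then Γ.idem K x else 0) + if x = Γ.src b then n₁ y else 0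
  have add_isHom : ∀ x y (z z' : Γ.Alg K), Γ.IsHom K x y z → Γ.IsHom K x y z' →
      Γ.IsHom K x y (z + z') := fun x y z z' h h' =>
    ⟨by rw [mul_add, h.1, h'.1], by rw [add_mul, h.2, h'.2]⟩
  have hE : ∀ x y, Γ.IsHom K x y (if x = y ∧ B x then Γ.idem K x else 0) := by
    intro x y
    split_ifs with h
    · rw [← h.1]; exact ⟨Γ.idem_mul_self K x, Γ.idem_mul_self K x⟩
    · exact Γ.isHom_zero _ _
  have hE₀ : ∀ x y, Γ.IsHom K x y (E₀ x y) := by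
    intro x y
    refine add_isHom _ _ _ _ (hE x y) ?_
    split_ifs with h
    · rw [h]; exact hn₀ x
    · exact Γ.isHom_zero _ _
  have hE₁ : ∀ x y, Γ.IsHom K x y (E₁ x y) := by
    intro x y
    refine add_isHom _ _ _ _ (hE x y) ?_
    split_ifs with h
    · rw [h]; exact hn₁ y
    · exact Γ.isHom_zero _ _
  have left : ∀ (M : Γ.Edge → Γ.Alg K), ∀ x ∈ T.I, Γ.idem K x * M x = M x →
      ∑ z ∈ T.I, E₀ x z * M z = (if B x then M x else 0) + n₀ x * M (Γ.src a) := by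
    intro M x hx hM
    simp only [E₀, add_mul, Finset.sum_add_distrib]
    congr 1
    · rw [Finset.sum_eq_single_of_mem x hx]
      · simp only [true_and]
        split_ifs
        · exact hM
        · rw [zero_mul]
      · intro z _ hz
        rw [if_neg (fun h => hz h.1.symm), zero_mul]
    · rw [Finset.sum_eq_single_of_mem _ ha, if_pos rfl]
      intro z _ hz
      rw [if_neg hz, zero_mul]
  have right : ∀ (M : Γ.Edge → Γ.Alg K), ∀ y ∈ T.J, M y * Γ.idem K y = M y →
      ∑ z ∈ T.J, M z * E₁ z y = (if B y then M y else 0) + M (Γ.src b) * n₁ y := by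
    intro M y hy hM
    simp only [E₁, mul_add, Finset.sum_add_distrib]
    congr 1
    · rw [Finset.sum_eq_single_of_mem y hy]
      · simp only [true_and]
        split_ifs
        · exact hM
        · rw [mul_zero]
      · intro z _ hz
        rw [if_neg (fun h => hz h.1), mul_zero]
    · rw [Finset.sum_eq_single_of_mem _ hb, if_pos rfl]
      intro z _ hz
      rw [if_neg hz, mul_zero]
  have hn₀a : n₀ (Γ.src a) = 0 := hn₀'' _ (fun h => h.2.2 rfl)
  have hn₁b : n₁ (Γ.src b) = 0 := hn₁'' _ (fun h => h.2.2 rfl)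
  have hBn₀ : ∀ x ∈ T.I, B x → n₀ x = 0 := by
    intro x hx hBx
    by_contra hcon
    have h := not_imp_comm.1 (hn₀'' x) hcon
    obtain ⟨i, hi, rfl⟩ := Γ.inc_iff.1 h.2.1
    exact hB i hi (fun h' => h.2.2 (by rw [h'])) (by rintro rfl; exact hdisj _ hx hb) hBx
  have hBn₁ : ∀ y ∈ T.J, B y → n₁ y = 0 := by
    intro y hy hBy
    by_contra hcon
    have h := not_imp_comm.1 (hn₁'' y) hcon
    obtain ⟨i, hi, rfl⟩ := Γ.inc_iff.1 h.2.1
    exact hB i hi (by rintro rfl; exact hdisj _ ha hy) (fun h' => h.2.2 (by rw [h'])) hBy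
  -- products of the nilpotent parts with entries away from the cycle vanish
  have inc_of : ∀ (x y z : Γ.Edge) (p q : Γ.Alg K) , x ≠ y → y ≠ z → Γ.Inc a.fst x →
      Γ.Inc a.fst y → Γ.IsHom K x y p → Γ.IsHom K y z q → p * q ≠ 0 → Γ.Inc a.fst z := by
    intro x y z p q hxy hyz hx hy hp hq hpq
    obtain ⟨i, j, k, h1, h2, rfl, rfl, rfl⟩ := Γ.exists_darts_of_mul_ne_zero hxy hyz hp hq hpq
    obtain ⟨i', hi', hi''⟩ := Γ.inc_iff.1 hx
    obtain ⟨j', hj', hj''⟩ := Γ.inc_iff.1 hy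
    have := Γ.darts_unique h1 (fun h => hxy (by rw [h])) (hi'.trans hj'.symm) hi'' hj''
    rw [← hj', this.2, h2]
    exact Γ.inc_fst k
  have inc_of' : ∀ (x y z : Γ.Edge) (p q : Γ.Alg K) , x ≠ y → y ≠ z → Γ.Inc a.fst y →
      Γ.Inc a.fst z → Γ.IsHom K x y p → Γ.IsHom K y z q → p * q ≠ 0 → Γ.Inc a.fst x := by
    intro x y z p q hxy hyz hy hz hp hq hpq
    obtain ⟨i, j, k, h1, h2, rfl, rfl, rfl⟩ := Γ.exists_darts_of_mul_ne_zero hxy hyz hp hq hpq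
    obtain ⟨k', hk', hk''⟩ := Γ.inc_iff.1 hz
    obtain ⟨j', hj', hj''⟩ := Γ.inc_iff.1 hy
    have := Γ.darts_unique h2 (fun h => hyz (by rw [h])) (hj'.trans hk'.symm) hj'' hk''
    rw [← hj', this.1, ← h1]
    exact Γ.inc_fst i
  have key := T.idempotent_matrix_trivial hT hM (E₀ := E₀) (E₁ := E₁) (fun x _ y _ => hE₀ x y)
    (fun x _ y _ => hE₁ x y) (by
      intro x hx y hy
      rw [left (fun z => E₀ z y) x hx (hE₀ x y).1]
      have h1 : E₀ (Γ.src a) y = if Γ.src a = y then Γ.idem K (Γ.src a) else 0 := by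
        simp only [E₀, hn₀a, hBa, and_true, ite_self, add_zero]
      rw [h1]
      by_cases hBx : B x
      · rw [if_pos hBx, hBn₀ x hx hBx, zero_mul, add_zero]
      · rw [if_neg hBx, zero_add]
        simp only [E₀, hBx, and_false, if_false, zero_add]
        by_cases hya : y = Γ.src a
        · rw [if_pos hya.symm, if_pos hya, (hn₀ x).2]
        · rw [if_neg (Ne.symm hya), if_neg hya, mul_zero])
    (by
      intro x hx y hy
      rw [right (fun z => E₁ x z) y hy (hE₁ x y).2]
      have h1 : E₁ x (Γ.src b) = if x = Γ.src b then Γ.idem K x else 0 := by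
        simp only [E₁, hn₁b, ite_self, add_zero]
        by_cases h : x = Γ.src b
        · rw [if_pos ⟨h, h ▸ hBb⟩, if_pos h]
        · rw [if_neg (fun h' => h h'.1), if_neg h]
      rw [h1]
      by_cases hBy : B y
      · rw [if_pos hBy, hBn₁ y hy hBy, mul_zero, add_zero]
      · rw [if_neg hBy, zero_add]
        have h2 : ¬ (x = y ∧ B x) := by rintro ⟨rfl, h⟩; exact hBy h
        simp only [E₁, if_neg h2, zero_add]
        by_cases hxb : x = Γ.src b
        · rw [if_pos hxb, if_pos hxb, hxb, (hn₁ y).1]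
        · rw [if_neg hxb, if_neg hxb, zero_mul])
    (by
      intro x hx y hy
      rw [left (fun z => T.mat z y) x hx (T.isHom_mat x y).1,
        right (fun z => T.mat x z) y hy (T.isHom_mat x y).2]
      have hxb : x ≠ Γ.src b := by rintro rfl; exact hdisj _ hx hb
      have hya : Γ.src a ≠ y := by rintro rfl; exact hdisj _ ha hy
      have hBcong : (¬ Γ.Inc a.fst x ∨ ¬ Γ.Inc a.fst y) →
          (if B x then T.mat x y else 0) = (if B y then T.mat x y else 0) := by
        intro h
        by_cases h0 : T.mat x y = 0
        · simp [h0]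
        · simp only [hBc x y h0 h]
      have hav : Γ.Inc a.fst (Γ.src a) := Γ.inc_fst a
      have hbv : Γ.Inc a.fst (Γ.src b) := hab ▸ Γ.inc_fst b
      by_cases hxv : Γ.Inc a.fst x
      · by_cases hyv : Γ.Inc a.fst y
        · by_cases hxa : x = Γ.src a
          · subst hxa
            rw [if_pos hBa, hn₀a, zero_mul, add_zero]
            by_cases hyb : y = Γ.src b
            · subst hyb
              rw [if_pos hBb, hn₁b, mul_zero, add_zero]
            · obtain ⟨j, hj, rfl⟩ := Γ.inc_iff.1 hyv
              rw [if_neg (hB j hj (fun h => hya (by rw [h])) (fun h => hyb (by rw [h]))), zero_add,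
                hn₁' _ ⟨hy, hyv, hyb⟩]
          · obtain ⟨i, hi, rfl⟩ := Γ.inc_iff.1 hxv
            rw [if_neg (hB i hi (fun h => hxa (by rw [h])) (fun h => hxb (by rw [h]))), zero_add,
              ← hn₀' _ ⟨hx, hxv, hxa⟩]
            by_cases hyb : y = Γ.src b
            · subst hyb
              rw [if_pos hBb, hn₁b, mul_zero, add_zero, hn₀' _ ⟨hx, hxv, hxa⟩]
            · obtain ⟨j, hj, rfl⟩ := Γ.inc_iff.1 hyv
              rw [if_neg (hB j hj (fun h => hya (by rw [h])) (fun h => hyb (by rw [h]))), zero_add,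
                mul_assoc, hn₁' _ ⟨hy, hyv, hyb⟩]
        · have h1 : n₀ x * T.mat (Γ.src a) y = 0 := by
            by_contra h
            by_cases hxa : x = Γ.src a
            · rw [hxa, hn₀a, zero_mul] at h; exact h rfl
            · exact hyv (inc_of _ _ _ _ _ hxa hya hxv hav (hn₀ x) (T.isHom_mat _ _) h)
          rw [h1, hn₁'' y (fun h => hyv h.2.1), mul_zero, hBcong (Or.inr hyv)]
      · have h1 : T.mat x (Γ.src b) * n₁ y = 0 := by
          by_contra h
          have h2 := not_imp_comm.1 (hn₁'' y) (right_ne_zero_of_mul h)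
          exact hxv (inc_of' _ _ _ _ _ hxb h2.2.2.symm hbv h2.2.1 (T.isHom_mat _ _) (hn₁ y) h)
        rw [h1, hn₀'' x (fun h => hxv h.2.1), zero_mul, hBcong (Or.inl hxv)])
  have hEa : E₀ (Γ.src a) (Γ.src a) = Γ.idem K (Γ.src a) := by
    simp only [E₀, hBa, and_self, if_true, hn₀a, add_zero]
  by_contra hcon
  push Not at hcon
  have hBnc : ¬ B (Γ.src c) := hB c hac.symm hcon.1 hcon.2
  rcases key with ⟨k₀, -⟩ | ⟨k₀, k₁⟩
  · exact idem_ne_zero (K := K) (Γ.src a) (hEa ▸ k₀ _ ha)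
  · rcases hc with hc | hc
    · have h2 := k₀ _ hc
      have h3 : Γ.src c ≠ Γ.src a := fun h => hcon.1 (Γ.eq_of_src_eq h hac.symm)
      simp only [E₀, hBnc, and_false, if_false, h3, add_zero] at h2
      exact idem_ne_zero _ h2.symm
    · have h2 := k₁ _ hc
      have h3 : Γ.src c ≠ Γ.src b := fun h => hcon.2 (Γ.eq_of_src_eq h (hac.symm.trans hab))
      simp only [E₁, hBnc, and_false, if_false, h3, add_zero] at h2
      exact idem_ne_zero _ h2.symm

section

variable [HasDerivedCategory.{w} (ModuleCat.{max u v} (Γ.Alg K))]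

/-- If both types occur on the cycle at a vertex of the tree, then exactly one vertex of each
type occurs, and the differential links them. -/
lemma exists_pair (T : TwoTermComplex Γ K) (hT : T.IsMinimal) (h1 : T.HomZero T 1)
    (hM : Indecomposable (ModuleCat.of (Γ.Alg K) T.Cok)) {c d : Γ.Arrow} (hcd : c.fst = d.fst)
    (hc : Γ.src c ∈ T.I) (hd : Γ.src d ∈ T.J) :
    T.mat (Γ.src c) (Γ.src d) ≠ 0 ∧
      ∀ e : Γ.Arrow, e.fst = c.fst → Γ.src e ∈ T.marked → e = c ∨ e = d := by
  classical
  have hdisj : ∀ x ∈ T.I, x ∉ T.J := fun x hx => T.disjoint_of_isMinimal hT h1 hx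
  let P : ℕ → Prop := fun n => ∃ a b : Γ.Arrow, a.fst = c.fst ∧ b.fst = c.fst ∧ Γ.src a ∈ T.I ∧
    Γ.src b ∈ T.J ∧ Γ.gap a b = n
  have hP : ∃ n, P n := ⟨_, c, d, rfl, hcd.symm, hc, hd, rfl⟩
  obtain ⟨a, b, ha, hb, haI, hbJ, hg⟩ := Nat.find_spec hP
  have hmin : ∀ a' b' : Γ.Arrow, a'.fst = c.fst → b'.fst = c.fst → Γ.src a' ∈ T.I →
      Γ.src b' ∈ T.J → Γ.gap a b ≤ Γ.gap a' b' := by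
    intro a' b' h1 h2 h3 h4
    rw [hg]
    exact Nat.find_min' hP ⟨a', b', h1, h2, h3, h4, rfl⟩
  have hab : a.fst = b.fst := ha.trans hb.symm
  have hcl : ∀ e : Γ.Arrow, a.fst = e.fst → (Γ.src e ∈ T.I ∨ Γ.src e ∈ T.J) → e ≠ a → e ≠ b →
      Γ.gap a b < Γ.gap a e := by
    intro e hae he hea heb
    have hne : Γ.gap a e ≠ Γ.gap a b := fun h => heb (Γ.gap_inj hae hab h)
    rcases he with he | he
    · have h2 := hmin e b (hae.symm.trans ha) hb he hbJ
      have h3 := Γ.gap_add_gap hae (hae.symm.trans hab)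
      have h4 := (Γ.gap_eq_zero hae).not.2 hea.symm
      have h5 := Γ.gap_lt_per (hae.symm.trans hab)
      rw [← Γ.per_eq hae] at h5
      omega
    · have h2 := hmin a e ha (hae.symm.trans ha) haI he
      omega
  have hmat := T.mat_ne_zero_of_closest hT h1 hab haI hbJ hcl
  have hall : ∀ e : Γ.Arrow, a.fst = e.fst → Γ.src e ∈ T.marked → e = a ∨ e = b :=
    fun e he he' => T.eq_or_eq_of_closest hT hM hdisj hab haI hbJ hcl hmat he he'
  have hca : c = a := by
    rcases hall c ha (Or.inl hc) with h | h
    · exact h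
    · exact absurd hbJ (h ▸ hdisj _ hc)
  have hdb : d = b := by
    rcases hall d (ha.trans hcd) (Or.inr hd) with h | h
    · exact absurd hd (h ▸ hdisj _ haI)
    · exact h
  subst hca hdb
  exact ⟨hmat, fun e he => hall e he.symm⟩

theorem isZigzag (T : TwoTermComplex Γ K) (hT : T.IsMinimal) (h1 : T.HomZero T 1)
    (hM : Indecomposable (ModuleCat.of (Γ.Alg K) T.Cok)) : Γ.IsZigzag T.I T.J where
  disjoint x hx := T.disjoint_of_isMinimal hT h1 hx
  unique_left a b hab ha hb := by
    by_cases hno : ∃ d : Γ.Arrow, a.fst = d.fst ∧ Γ.src d ∈ T.J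
    · obtain ⟨d, hd, hdJ⟩ := hno
      rcases (T.exists_pair hT h1 hM hd ha hdJ).2 b hab.symm (Or.inl hb) with h | h
      · exact h.symm
      · exact absurd hdJ (h ▸ T.disjoint_of_isMinimal hT h1 hb)
    · push Not at hno
      exact T.eq_of_same_type hT hM hab (Or.inl ha) (Or.inl hb)
        fun c d _ hd _ hdJ => hno d hd.symm hdJ
  unique_right a b hab ha hb := by
    by_cases hno : ∃ d : Γ.Arrow, d.fst = a.fst ∧ Γ.src d ∈ T.I
    · obtain ⟨d, hd, hdI⟩ := hno
      rcases (T.exists_pair hT h1 hM hd hdI ha).2 b (hab.symm.trans hd.symm) (Or.inr hb) with h | h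
      · exact absurd hb (h ▸ T.disjoint_of_isMinimal hT h1 hdI)
      · exact h.symm
    · push Not at hno
      exact T.eq_of_same_type hT hM hab (Or.inr ha) (Or.inr hb)
        fun c d hc _ hcI _ => hno c hc hcI
  reachable u hu w hw := T.reachable_marked hT hM hu hw

lemma mat_ne_zero (T : TwoTermComplex Γ K) (hT : T.IsMinimal) (h1 : T.HomZero T 1)
    (hM : Indecomposable (ModuleCat.of (Γ.Alg K) T.Cok)) {c d : Γ.Arrow} (hcd : c.fst = d.fst)
    (hc : Γ.src c ∈ T.I) (hd : Γ.src d ∈ T.J) : T.mat (Γ.src c) (Γ.src d) ≠ 0 :=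
  (T.exists_pair hT h1 hM hcd hc hd).1

end

end TwoTermComplex

/-! ### The common part of two subtrees -/

namespace BrauerTree

variable {V : Type v} (Γ : BrauerTree V)

lemma edgeGraph_le (M : Set Γ.Edge) : Γ.edgeGraph M ≤ Γ.graph := by
  rintro u w ⟨d, -, rfl, rfl⟩
  exact d.adj

lemma edgeGraph_adj {M : Set Γ.Edge} {d : Γ.Arrow} :
    (Γ.edgeGraph M).Adj d.fst d.snd ↔ Γ.src d ∈ M := by
  constructor
  · rintro ⟨d', h, h1, h2⟩
    rwa [← Γ.dart_eq h1 h2]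
  · exact fun h => ⟨d, h, rfl, rfl⟩

lemma path_unique {u w : V} {p q : Γ.graph.Walk u w} (hp : p.IsPath) (hq : q.IsPath) : p = q :=
  Subtype.mk.inj ((Γ.isTree.isAcyclic.subsingleton_path u w).elim ⟨p, hp⟩ ⟨q, hq⟩)

lemma src_mem_of_mem_path {M : Set Γ.Edge} {u w : V} (h : (Γ.edgeGraph M).Reachable u w)
    {p : Γ.graph.Walk u w} (hp : p.IsPath) : ∀ d ∈ p.darts, Γ.src d ∈ M := by
  classical
  obtain ⟨q⟩ := h
  have hq : (q.toPath.1.mapLe (Γ.edgeGraph_le M)).IsPath :=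
    (SimpleGraph.Walk.isPath_mapLe _).2 q.toPath.2
  rw [Γ.path_unique hp hq]
  intro d hd
  have hd' : d.edge ∈ (q.toPath.1.mapLe (Γ.edgeGraph_le M)).edges := List.mem_map.2 ⟨d, hd, rfl⟩
  rw [SimpleGraph.Walk.edges_mapLe_eq_edges] at hd'
  have := SimpleGraph.Walk.edges_subset_edgeSet _ hd'
  exact Γ.edgeGraph_adj.1 this

lemma reachable_of_src_mem {M : Set Γ.Edge} {u w : V} (p : Γ.graph.Walk u w)
    (hp : ∀ d ∈ p.darts, Γ.src d ∈ M) : (Γ.edgeGraph M).Reachable u w := by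
  induction p with
  | nil => exact SimpleGraph.Reachable.refl _
  | cons h p ih =>
    have h1 : (Γ.edgeGraph M).Adj _ _ := Γ.edgeGraph_adj.2 (hp ⟨(_, _), h⟩ (by simp))
    exact h1.reachable.trans (ih fun d hd => hp d (by simp [hd]))

/-- The set of edges `M` is connected. -/
def EdgeConnected (M : Set Γ.Edge) : Prop :=
  ∀ u ∈ Γ.ends M, ∀ w ∈ Γ.ends M, (Γ.edgeGraph M).Reachable u w

variable {Γ} {M N : Set Γ.Edge}

lemma EdgeConnected.reachable_inter (hM : Γ.EdgeConnected M) (hN : Γ.EdgeConnected N) {u w : V}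
    (hu : u ∈ Γ.ends M ∩ Γ.ends N) (hw : w ∈ Γ.ends M ∩ Γ.ends N) :
    (Γ.edgeGraph (M ∩ N)).Reachable u w := by
  obtain ⟨p, hp, -⟩ := Γ.isTree.existsUnique_path u w
  exact Γ.reachable_of_src_mem p fun d hd =>
    ⟨Γ.src_mem_of_mem_path (hM u hu.1 w hw.1) hp d hd,
      Γ.src_mem_of_mem_path (hN u hu.2 w hw.2) hp d hd⟩

/-- An edge joining two vertices of a connected set of edges belongs to it. -/
lemma EdgeConnected.src_mem (hM : Γ.EdgeConnected M) {d : Γ.Arrow} (h1 : d.fst ∈ Γ.ends M)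
    (h2 : d.snd ∈ Γ.ends M) : Γ.src d ∈ M := by
  have hp : (SimpleGraph.Walk.cons d.adj .nil : Γ.graph.Walk d.fst d.snd).IsPath := by
    simp [SimpleGraph.Walk.cons_isPath_iff, d.fst_ne_snd]
  exact Γ.src_mem_of_mem_path (hM _ h1 _ h2) hp d (by simp)

/-- Two connected sets of edges with a common vertex have no edge between their remaining
parts. -/
lemma EdgeConnected.mem_ends_of_adj (hM : Γ.EdgeConnected M) (hN : Γ.EdgeConnected N)
    {c : V} (hc : c ∈ Γ.ends M ∩ Γ.ends N) {d : Γ.Arrow} (h1 : d.fst ∈ Γ.ends M)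
    (h2 : d.snd ∈ Γ.ends N) (h3 : d.snd ∉ Γ.ends M) : d.fst ∈ Γ.ends N := by
  classical
  obtain ⟨p, hp, -⟩ := Γ.isTree.existsUnique_path d.fst c
  have hpM := Γ.src_mem_of_mem_path (hM _ h1 _ hc.1) hp
  have hsup : d.snd ∉ p.support := by
    intro hmem
    by_cases hnil : p.Nil
    · rw [SimpleGraph.Walk.nil_iff_support_eq.1 hnil] at hmem
      exact d.fst_ne_snd (List.mem_singleton.1 hmem).symm
    · rw [SimpleGraph.Walk.mem_support_iff_exists_mem_edges_of_not_nil hnil] at hmem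
      obtain ⟨e, he, hme⟩ := hmem
      obtain ⟨d', hd', rfl⟩ := List.mem_map.1 he
      exact h3 ⟨Γ.src d', hpM d' hd', hme⟩
  have hq : (SimpleGraph.Walk.cons d.adj.symm p).IsPath :=
    (SimpleGraph.Walk.cons_isPath_iff _ _).2 ⟨hp, hsup⟩
  have := Γ.src_mem_of_mem_path (hN _ h2 _ hc.2) hq d.symm
    (by rw [SimpleGraph.Walk.darts_cons]; exact List.mem_cons_self)
  exact ⟨_, this, Γ.inc_src_iff.2 (Or.inr rfl)⟩

variable (M N) in
/-- The tree formed by the edges common to `M` and `N`. -/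
def commonGraph : SimpleGraph ↥(Γ.ends M ∩ Γ.ends N) :=
  (Γ.edgeGraph (M ∩ N)).induce (Γ.ends M ∩ Γ.ends N)

lemma EdgeConnected.isTree_commonGraph (hM : Γ.EdgeConnected M) (hN : Γ.EdgeConnected N)
    (hne : (Γ.ends M ∩ Γ.ends N).Nonempty) : (commonGraph M N).IsTree := by
  refine ⟨?_, (Γ.isTree.isAcyclic.anti (Γ.edgeGraph_le _)).induce _⟩
  have : Nonempty ↥(Γ.ends M ∩ Γ.ends N) := hne.to_subtype
  refine SimpleGraph.Connected.mk ?_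
  rintro ⟨u, hu⟩ ⟨w, hw⟩
  obtain ⟨p⟩ := hM.reachable_inter hN hu hw
  induction p with
  | nil => exact SimpleGraph.Reachable.refl _
  | cons h p ih =>
    rename_i a b c
    have hb : b ∈ Γ.ends M ∩ Γ.ends N := by
      obtain ⟨d, hd, rfl, rfl⟩ := h
      exact ⟨⟨_, hd.1, Γ.inc_src_iff.2 (Or.inr rfl)⟩, ⟨_, hd.2, Γ.inc_src_iff.2 (Or.inr rfl)⟩⟩
    have hadj : (commonGraph M N).Adj ⟨a, hu⟩ ⟨b, hb⟩ := h
    exact hadj.reachable.trans (ih hb hw)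

lemma EdgeConnected.induction_common (hM : Γ.EdgeConnected M) (hN : Γ.EdgeConnected N)
    {P : V → Prop} {u : V} (hu : u ∈ Γ.ends M ∩ Γ.ends N) (h0 : P u)
    (hstep : ∀ d : Γ.Arrow, Γ.src d ∈ M → Γ.src d ∈ N → P d.fst → P d.snd) :
    ∀ w ∈ Γ.ends M ∩ Γ.ends N, P w := by
  intro w hw
  obtain ⟨p⟩ := hM.reachable_inter hN hu hw
  clear hu hw
  induction p with
  | nil => exact h0
  | cons h p ih =>
    apply ih
    obtain ⟨d, hd, rfl, rfl⟩ := h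
    exact hstep d hd.1 hd.2 h0

variable [Fintype V]

open scoped Classical in
lemma EdgeConnected.card_lt (hM : Γ.EdgeConnected M) (hN : Γ.EdgeConnected N)
    (hne : (Γ.ends M ∩ Γ.ends N).Nonempty) :
    Fintype.card ↥(M ∩ N) < Fintype.card ↥(Γ.ends M ∩ Γ.ends N) := by
  have ht := (hM.isTree_commonGraph hN hne).card_edgeFinset
  rw [← ht, Nat.lt_succ_iff, SimpleGraph.edgeFinset_card]
  have hex : ∀ e : ↥(M ∩ N), ∃ e' : (commonGraph M N).edgeSet,
      Sym2.map Subtype.val e'.1 = e.1.1 := by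
    rintro ⟨e, he⟩
    obtain ⟨d, rfl⟩ := Γ.exists_src_eq e
    have h1 : ∀ v, Γ.Inc v (Γ.src d) → v ∈ Γ.ends M ∩ Γ.ends N :=
      fun v hv => ⟨⟨_, he.1, hv⟩, ⟨_, he.2, hv⟩⟩
    refine ⟨⟨s(⟨d.fst, h1 _ (Γ.inc_fst d)⟩, ⟨d.snd, h1 _ (Γ.inc_src_iff.2 (Or.inr rfl))⟩), ?_⟩, rfl⟩
    exact Γ.edgeGraph_adj.2 he
  choose g hg using hex
  refine Fintype.card_le_of_injective g fun e e' h => ?_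
  exact Subtype.ext (Subtype.ext (by rw [← hg e, ← hg e', h]))

open scoped Classical in
/-- If every vertex is on at most two common edges, then at most two vertices are on at most
one. -/
lemma EdgeConnected.no_three_leaves (hM : Γ.EdgeConnected M) (hN : Γ.EdgeConnected N)
    {c : V → Γ.Edge → Bool}
    (hc : ∀ d d' : Γ.Arrow, d.fst = d'.fst → Γ.src d ∈ M ∩ N → Γ.src d' ∈ M ∩ N →
      c d.fst (Γ.src d) = c d.fst (Γ.src d') → d = d')
    {s : Finset V} (hs : ∀ v ∈ s, v ∈ Γ.ends M ∩ Γ.ends N ∧ ∀ d d' : Γ.Arrow, d.fst = v →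
      d'.fst = v → Γ.src d ∈ M ∩ N → Γ.src d' ∈ M ∩ N → d = d') : s.card ≤ 2 := by
  rcases s.eq_empty_or_nonempty with rfl | ⟨v₀, hv₀⟩
  · simp
  have ht := (hM.isTree_commonGraph hN ⟨v₀, (hs v₀ hv₀).1⟩).card_edgeFinset
  have hsum := (commonGraph M N).sum_degrees_eq_twice_card_edges
  have hdart : ∀ u w, (commonGraph M N).Adj u w →
      ∃ d : Γ.Arrow, Γ.src d ∈ M ∩ N ∧ d.fst = u ∧ d.snd = w := fun u w h => h
  have hdeg : ∀ u, (commonGraph M N).degree u + (if u.1 ∈ s then 1 else 0) ≤ 2 := by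
    intro u
    split_ifs with hu
    · have : (commonGraph M N).degree u ≤ 1 := by
        rw [← SimpleGraph.card_neighborFinset_eq_degree, Finset.card_le_one]
        intro a ha b hb
        rw [SimpleGraph.mem_neighborFinset] at ha hb
        obtain ⟨d, hd, hdu, hda⟩ := hdart u a ha
        obtain ⟨d', hd', hdu', hdb⟩ := hdart u b hb
        have := (hs u hu).2 d d' hdu hdu' hd hd'
        exact Subtype.ext (by rw [← hda, ← hdb, this])
      omega
    · have hex : ∀ w, ∃ b : Bool, (commonGraph M N).Adj u w → ∃ d : Γ.Arrow, Γ.src d ∈ M ∩ N ∧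
          d.fst = u ∧ d.snd = w ∧ c u (Γ.src d) = b := by
        intro w
        by_cases h : (commonGraph M N).Adj u w
        · obtain ⟨d, h1, h2, h3⟩ := hdart u w h
          exact ⟨_, fun _ => ⟨d, h1, h2, h3, rfl⟩⟩
        · exact ⟨true, fun h' => absurd h' h⟩
      choose g hg using hex
      rw [add_zero, ← SimpleGraph.card_neighborFinset_eq_degree, ← Fintype.card_bool,
        ← Finset.card_univ]
      refine Finset.card_le_card_of_injOn g (fun _ _ => Finset.mem_coe.2 (Finset.mem_univ _)) ?_
      intro a ha b hb hab
      rw [Finset.mem_coe, SimpleGraph.mem_neighborFinset] at ha hb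
      obtain ⟨d, hd, hdu, hda, h1⟩ := hg a ha
      obtain ⟨d', hd', hdu', hdb, h2⟩ := hg b hb
      have := hc d d' (hdu.trans hdu'.symm) hd hd' (by rw [hdu, h1, h2, hab])
      exact Subtype.ext (by rw [← hda, ← hdb, this])
  have hcard : ∑ u : ↥(Γ.ends M ∩ Γ.ends N), (if u.1 ∈ s then 1 else 0) = s.card := by
    rw [← Finset.card_filter, ← Finset.card_map (Function.Embedding.subtype _)]
    congr 1
    ext v
    simp only [Finset.mem_map, Finset.mem_filter, Finset.mem_univ, true_and,
      Function.Embedding.coe_subtype, Subtype.exists, exists_and_left, exists_prop,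
      exists_eq_right_right]
    exact ⟨fun h => h.1, fun h => ⟨h, (hs v h).1⟩⟩
  have hle := Finset.sum_le_sum fun u (_ : u ∈ Finset.univ) => hdeg u
  rw [Finset.sum_add_distrib, hsum, hcard, Finset.sum_const, Finset.card_univ, smul_eq_mul] at hle
  omega

end BrauerTree

/-! ### Morphisms of degree `-1` between alternating paths -/

namespace TwoTermComplex

variable {V : Type v} [Fintype V] {Γ : BrauerTree V} {K : Type u} [Field K]

/-- At the vertex `v` of the tree there is a path from a sink of `S` to a source of `T` that is
annihilated by the differentials of `S` and `T` at `v`, up to socle elements. -/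
def Good (S T : TwoTermComplex Γ K) (v : V) : Prop :=
  ∃ y x' : Γ.Arrow, y.fst = v ∧ x'.fst = v ∧ Γ.src y ∈ S.J ∧ Γ.src x' ∈ T.I ∧
    (∀ x : Γ.Arrow, x.fst = v → Γ.src x ∈ S.I →
      x = x' ∨ Γ.per y ≤ Γ.gap x y + Γ.gap y x') ∧
    ∀ y' : Γ.Arrow, y'.fst = v → Γ.src y' ∈ T.J →
      y' = y ∨ Γ.per y ≤ Γ.gap y x' + Γ.gap x' y'

/-- The properties of the complexes in the theorem that enter the computation of morphisms. -/
structure IsString (T : TwoTermComplex Γ K) : Prop where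
  zigzag : Γ.IsZigzag T.I T.J
  mat_ne_zero : ∀ {c d : Γ.Arrow}, c.fst = d.fst → Γ.src c ∈ T.I → Γ.src d ∈ T.J →
    T.mat (Γ.src c) (Γ.src d) ≠ 0

lemma IsString.edgeConnected {T : TwoTermComplex Γ K} (h : T.IsString) :
    Γ.EdgeConnected T.marked := h.zigzag.reachable

lemma IsString.ne {T : TwoTermComplex Γ K} (h : T.IsString) {x y : Γ.Edge} (hx : x ∈ T.I)
    (hy : y ∈ T.J) : x ≠ y := fun hxy => h.zigzag.disjoint x hx (hxy ▸ hy)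

/-- The vertices of the tree that are end points of marked edges of both complexes. -/
def meet (S T : TwoTermComplex Γ K) : Set V := Γ.ends S.marked ∩ Γ.ends T.marked

variable {S T : TwoTermComplex Γ K}

lemma mem_ends {a : Γ.Arrow} (h : Γ.src a ∈ S.marked) : a.fst ∈ Γ.ends S.marked :=
  ⟨_, h, Γ.inc_fst a⟩

/-- The matrix `M` is zero at all pairs of marked vertices on the cycle at `v`. -/
lemma vanish_of_not_good (hS : S.IsString) (hT : T.IsString)
    (hopp : ∀ x ∈ S.J, x ∉ T.I) {M : Γ.Edge → Γ.Edge → Γ.Alg K}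
    (hM : ∀ y ∈ S.J, ∀ x ∈ T.I, Γ.IsHom K y x (M y x))
    (h1 : ∀ y ∈ S.J, ∀ y' ∈ T.J, ∑ x ∈ T.I, M y x * T.mat x y' = 0)
    (h2 : ∀ x ∈ S.I, ∀ x' ∈ T.I, ∑ y ∈ S.J, S.mat x y * M y x' = 0)
    {v : V} (hv : ¬ S.Good T v) {y x' : Γ.Arrow} (hy : y.fst = v) (hx' : x'.fst = v)
    (hyJ : Γ.src y ∈ S.J) (hxI : Γ.src x' ∈ T.I) : M (Γ.src y) (Γ.src x') = 0 := by
  have hne : y ≠ x' := by rintro rfl; exact hopp _ hyJ hxI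
  have hyx : y.fst = x'.fst := hy.trans hx'.symm
  obtain ⟨t, ht⟩ := Γ.isHom_eq_smul hyx hne (hM _ hyJ _ hxI)
  have hor : (∃ x : Γ.Arrow, x.fst = v ∧ Γ.src x ∈ S.I ∧ x ≠ x' ∧
      Γ.gap x y + Γ.gap y x' < Γ.per y) ∨ (∃ y' : Γ.Arrow, y'.fst = v ∧ Γ.src y' ∈ T.J ∧ y' ≠ y ∧
      Γ.gap y x' + Γ.gap x' y' < Γ.per y) := by
    by_contra hcon
    push Not at hcon
    refine hv ⟨y, x', hy, hx', hyJ, hxI, fun x hx hxI' => ?_, fun y' hy' hyJ' => ?_⟩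
    · by_cases h : x = x'
      · exact Or.inl h
      · exact Or.inr (hcon.1 x hx hxI' h)
    · by_cases h : y' = y
      · exact Or.inl h
      · exact Or.inr (hcon.2 y' hy' hyJ' h)
  rcases hor with ⟨x, hx, hxS, hxx', hgap⟩ | ⟨y', hy', hyT, hyy', hgap⟩
  · have hxy : x.fst = y.fst := hx.trans hy.symm
    have hxney : x ≠ y := fun h => hS.ne hxS hyJ (by rw [h])
    have hsum := h2 _ hxS _ hxI
    rw [Finset.sum_eq_single_of_mem _ hyJ] at hsum
    · obtain ⟨s, hs⟩ := Γ.isHom_eq_smul hxy hxney (S.isHom_mat _ _)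
      have hs0 : s ≠ 0 := by
        rintro rfl
        exact hS.mat_ne_zero hxy hxS hyJ (by rw [hs, zero_smul])
      rw [hs, ht, smul_mul_smul_comm,
        Γ.path_mul_path_of_le hxy hyx (by rw [Γ.per_eq hxy]; exact hgap)] at hsum
      have := (smul_eq_zero.1 hsum).resolve_right (Γ.path_ne_zero (hxy.trans hyx))
      rw [ht, (mul_eq_zero.1 this).resolve_left hs0, zero_smul]
    · intro z hz hzy
      by_contra h0
      obtain ⟨a, b, c, hab, hbc, ha, rfl, hc⟩ := Γ.exists_darts_of_mul_ne_zero
        (hS.ne hxS hz) (fun h => hopp _ hz (h ▸ hxI)) (S.isHom_mat _ _) (hM _ hz _ hxI) h0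
      obtain ⟨rfl, rfl⟩ := Γ.darts_unique (hxy.trans hyx) hxx' (hab.trans hbc) ha hc
      exact hzy (by rw [hS.zigzag.unique_right b y (hab.symm.trans hxy) hz hyJ])
  · have hxy : x'.fst = y'.fst := hx'.trans hy'.symm
    have hxney : x' ≠ y' := fun h => hT.ne hxI hyT (by rw [h])
    have hsum := h1 _ hyJ _ hyT
    rw [Finset.sum_eq_single_of_mem _ hxI] at hsum
    · obtain ⟨s, hs⟩ := Γ.isHom_eq_smul hxy hxney (T.isHom_mat _ _)
      have hs0 : s ≠ 0 := by
        rintro rfl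
        exact hT.mat_ne_zero hxy hxI hyT (by rw [hs, zero_smul])
      rw [hs, ht, smul_mul_smul_comm, Γ.path_mul_path_of_le hyx hxy hgap] at hsum
      have := (smul_eq_zero.1 hsum).resolve_right (Γ.path_ne_zero (hyx.trans hxy))
      rw [ht, (mul_eq_zero.1 this).resolve_right hs0, zero_smul]
    · intro z hz hzx
      by_contra h0
      obtain ⟨a, b, c, hab, hbc, ha, rfl, hc⟩ := Γ.exists_darts_of_mul_ne_zero
        (fun h : Γ.src y = z => hopp _ hyJ (h ▸ hz)) (hT.ne hz hyT) (hM _ hyJ _ hz) (T.isHom_mat _ _) h0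
      obtain ⟨rfl, rfl⟩ := Γ.darts_unique (hyx.trans hxy) hyy'.symm (hab.trans hbc) ha hc
      exact hzx (by rw [hT.zigzag.unique_left b x' (hab.symm.trans hyx) hz hxI])

/-- Vanishing on the cycle at one end of a common marked edge implies vanishing on the cycle at
the other end. -/
lemma vanish_step (hS : S.IsString) (hT : T.IsString)
    (hopp : ∀ x ∈ S.J, x ∉ T.I) (hopp' : ∀ x ∈ S.I, x ∉ T.J) {M : Γ.Edge → Γ.Edge → Γ.Alg K}
    (hM : ∀ y ∈ S.J, ∀ x ∈ T.I, Γ.IsHom K y x (M y x))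
    (h1 : ∀ y ∈ S.J, ∀ y' ∈ T.J, ∑ x ∈ T.I, M y x * T.mat x y' = 0)
    (h2 : ∀ x ∈ S.I, ∀ x' ∈ T.I, ∑ y ∈ S.J, S.mat x y * M y x' = 0)
    {d : Γ.Arrow} (hdS : Γ.src d ∈ S.marked) (hdT : Γ.src d ∈ T.marked)
    (hd : ∀ y x' : Γ.Arrow, y.fst = d.fst → x'.fst = d.fst → Γ.src y ∈ S.J → Γ.src x' ∈ T.I →
      M (Γ.src y) (Γ.src x') = 0)
    {y x' : Γ.Arrow} (hy : y.fst = d.snd) (hx' : x'.fst = d.snd)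
    (hyJ : Γ.src y ∈ S.J) (hxI : Γ.src x' ∈ T.I) : M (Γ.src y) (Γ.src x') = 0 := by
  have hne : y ≠ x' := by rintro rfl; exact hopp _ hyJ hxI
  have hyx : y.fst = x'.fst := hy.trans hx'.symm
  obtain ⟨t, ht⟩ := Γ.isHom_eq_smul hyx hne (hM _ hyJ _ hxI)
  have hsrc : Γ.src d.symm = Γ.src d := Γ.src_symm d
  rcases hdS with hdS | hdS <;> rcases hdT with hdT | hdT
  · have hxd : x' = d.symm := hT.zigzag.unique_left _ _ hx' hxI (hsrc ▸ hdT)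
    have hxd' : Γ.src x' = Γ.src d := by rw [hxd, hsrc]
    have hsum := h2 _ hdS _ hdT
    rw [Finset.sum_eq_single_of_mem _ hyJ] at hsum
    · rw [← hxd'] at hsum hdS
      obtain ⟨s, hs⟩ := Γ.isHom_eq_smul hyx.symm hne.symm (S.isHom_mat _ _)
      have hs0 : s ≠ 0 := by
        rintro rfl
        exact hS.mat_ne_zero hyx.symm hdS hyJ (by rw [hs, zero_smul])
      rw [hs, ht, smul_mul_smul_comm, Γ.path_mul_path_self hyx.symm hne.symm] at hsum
      have := (smul_eq_zero.1 hsum).resolve_right (Γ.run_per_ne_zero K x')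
      rw [ht, (mul_eq_zero.1 this).resolve_left hs0, zero_smul]
    · intro z hz hzy
      by_contra h0
      have h0' := right_ne_zero_of_mul h0
      obtain ⟨a, b, hab, rfl, hb⟩ := Γ.exists_darts_of_isHom_ne_zero (hM _ hz _ hdT) h0'
      rcases Γ.src_eq_src_iff.1 hb with rfl | rfl
      · exact h0' (hd a b hab rfl hz hdT)
      · exact hzy (by rw [hS.zigzag.unique_right a y (hab.trans hy.symm) hz hyJ])
  · exact absurd hdT (hopp' _ hdS)
  · exact absurd hdT (hopp _ hdS)
  · have hyd : y = d.symm := hS.zigzag.unique_right _ _ hy hyJ (hsrc ▸ hdS)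
    have hyd' : Γ.src y = Γ.src d := by rw [hyd, hsrc]
    have hsum := h1 _ hdS _ hdT
    rw [Finset.sum_eq_single_of_mem _ hxI] at hsum
    · rw [← hyd'] at hsum hdT
      obtain ⟨s, hs⟩ := Γ.isHom_eq_smul hyx.symm hne.symm (T.isHom_mat _ _)
      have hs0 : s ≠ 0 := by
        rintro rfl
        exact hT.mat_ne_zero hyx.symm hxI hdT (by rw [hs, zero_smul])
      rw [hs, ht, smul_mul_smul_comm, Γ.path_mul_path_self hyx hne] at hsum
      have := (smul_eq_zero.1 hsum).resolve_right (Γ.run_per_ne_zero K y)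
      rw [ht, (mul_eq_zero.1 this).resolve_right hs0, zero_smul]
    · intro z hz hzx
      by_contra h0
      have h0' := left_ne_zero_of_mul h0
      obtain ⟨a, b, hab, ha, rfl⟩ := Γ.exists_darts_of_isHom_ne_zero (hM _ hdS _ hz) h0'
      rcases Γ.src_eq_src_iff.1 ha with rfl | rfl
      · exact h0' (hd a b rfl hab.symm hdS hz)
      · exact hzx (by rw [hT.zigzag.unique_left b x' (hab.symm.trans hx'.symm) hz hxI])

section

variable [HasDerivedCategory.{w} (ModuleCat.{max u v} (Γ.Alg K))]

lemma homZero_of_not_good (hS : S.IsString) (hT : T.IsString)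
    (hopp : ∀ x ∈ S.J, x ∉ T.I) (hopp' : ∀ x ∈ S.I, x ∉ T.J) {v : V} (hv : v ∈ S.meet T)
    (hg : ¬ S.Good T v) : S.HomZero T (-1) := by
  rw [homZero_neg_one_iff_matrix]
  intro M hM h1 h2 y hy x hx
  by_contra h0
  obtain ⟨a, b, hab, rfl, rfl⟩ := Γ.exists_darts_of_isHom_ne_zero (hM _ hy _ hx) h0
  refine h0 (hS.edgeConnected.induction_common hT.edgeConnected
    (P := fun w => ∀ y x' : Γ.Arrow, y.fst = w → x'.fst = w → Γ.src y ∈ S.J → Γ.src x' ∈ T.I →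
      M (Γ.src y) (Γ.src x') = 0) hv ?_ ?_ a.fst ?_ a b rfl hab.symm hy hx)
  · exact fun y x' hy hx' hyJ hxI => vanish_of_not_good hS hT hopp hM h1 h2 hg hy hx' hyJ hxI
  · exact fun d hdS hdT hd y x' hy hx' hyJ hxI =>
      vanish_step hS hT hopp hopp' hM h1 h2 hdS hdT hd hy hx' hyJ hxI
  · exact ⟨mem_ends (Or.inr hy), hab ▸ mem_ends (Or.inl hx)⟩

open scoped Classical in
lemma not_homZero_of_good (hS : S.IsString) (hT : T.IsString)
    (hopp : ∀ x ∈ S.J, x ∉ T.I) (hne : (S.meet T).Nonempty)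
    (hg : ∀ v ∈ S.meet T, S.Good T v) : ¬ S.HomZero T (-1) := by
  rw [homZero_neg_one_iff_matrix]
  intro hall
  choose Y X hY hX hYJ hXI hgx hgy using fun v : S.meet T => hg v v.2
  have hYX : ∀ v, (Y v).fst = (X v).fst := fun v => (hY v).trans (hX v).symm
  have hne' : ∀ v, Y v ≠ X v := fun v h => hopp _ (hYJ v) (h ▸ hXI v)
  -- the coefficients of the socle elements
  have exT : ∀ v, ∃ g : K, Γ.path K (Y v) (X v) * T.mat (Γ.src (X v)) (Γ.src (Y v)) =
      g • Γ.run K (Y v) (Γ.per (Y v)) := by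
    intro v
    obtain ⟨s, hs⟩ := Γ.isHom_eq_smul (hYX v).symm (hne' v).symm
      (T.isHom_mat (Γ.src (X v)) (Γ.src (Y v)))
    exact ⟨s, by rw [hs, mul_smul_comm, Γ.path_mul_path_self (hYX v) (hne' v)]⟩
  have exS : ∀ v, ∃ g : K, S.mat (Γ.src (X v)) (Γ.src (Y v)) * Γ.path K (Y v) (X v) =
      g • Γ.run K (X v) (Γ.per (X v)) := by
    intro v
    obtain ⟨s, hs⟩ := Γ.isHom_eq_smul (hYX v).symm (hne' v).symm
      (S.isHom_mat (Γ.src (X v)) (Γ.src (Y v)))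
    exact ⟨s, by rw [hs, smul_mul_assoc, Γ.path_mul_path_self (hYX v).symm (hne' v).symm]⟩
  choose gT hgT using exT
  choose gS hgS using exS
  let L : (S.meet T → K) →ₗ[K] (↥(S.marked ∩ T.marked) → K) :=
    { toFun := fun ψ e => if e.1 ∈ S.J then ∑ v, (if Γ.src (Y v) = e.1 then gT v * ψ v else 0)
        else ∑ v, (if Γ.src (X v) = e.1 then gS v * ψ v else 0)
      map_add' := fun a b => by
        ext e
        simp only [Pi.add_apply]
        split_ifs <;> simp [mul_add, ← Finset.sum_add_distrib, ite_add_zero]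
      map_smul' := fun c a => by
        ext e
        simp only [Pi.smul_apply, RingHom.id_apply, smul_eq_mul]
        split_ifs <;> simp [Finset.mul_sum, mul_left_comm, mul_ite] }
  have hker : LinearMap.ker L ≠ ⊥ := by
    apply LinearMap.ker_ne_bot_of_finrank_lt
    rw [Module.finrank_fintype_fun_eq_card, Module.finrank_fintype_fun_eq_card]
    have := hS.edgeConnected.card_lt hT.edgeConnected hne
    simp only [← Nat.card_eq_fintype_card] at this ⊢
    exact this
  obtain ⟨ψ, hψL, hψ0⟩ := (Submodule.ne_bot_iff _).1 hker
  rw [LinearMap.mem_ker] at hψL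
  let M : Γ.Edge → Γ.Edge → Γ.Alg K := fun y x =>
    ∑ v, if Γ.src (Y v) = y ∧ Γ.src (X v) = x then ψ v • Γ.path K (Y v) (X v) else 0
  have hMhom : ∀ y x, Γ.IsHom K y x (M y x) := by
    intro y x
    refine ⟨?_, ?_⟩
    · simp only [M, Finset.mul_sum]
      refine Finset.sum_congr rfl fun v _ => ?_
      split_ifs with h
      · rw [← h.1]; exact ((Γ.isHom_path (hYX v)).smul _).1
      · rw [mul_zero]
    · simp only [M, Finset.sum_mul]
      refine Finset.sum_congr rfl fun v _ => ?_
      split_ifs with h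
      · rw [← h.2]; exact ((Γ.isHom_path (hYX v)).smul _).2
      · rw [zero_mul]
  have hres := hall M (fun y _ x _ => hMhom y x) (by
      intro y hy y' hy'
      have h1 : ∑ x ∈ T.I, M y x * T.mat x y' =
          ∑ v, if Γ.src (Y v) = y then
            ψ v • (Γ.path K (Y v) (X v) * T.mat (Γ.src (X v)) y') else 0 := by
        simp only [M, Finset.sum_mul]
        rw [Finset.sum_comm]
        refine Finset.sum_congr rfl fun v _ => ?_
        rw [Finset.sum_eq_single_of_mem _ (hXI v)]
        · simp only [and_true, ite_mul, zero_mul, smul_mul_assoc]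
        · intro z _ hz
          rw [if_neg (fun h => hz h.2.symm), zero_mul]
      rw [h1]
      by_cases hyy : y = y'
      · subst hyy
        have h2 := congrFun hψL ⟨y, Or.inr hy, Or.inr hy'⟩
        simp only [L, LinearMap.coe_mk, AddHom.coe_mk, hy, if_true, Pi.zero_apply] at h2
        obtain ⟨d, rfl⟩ := Γ.exists_src_eq y
        have h3 : ∀ v, (if Γ.src (Y v) = Γ.src d then
            ψ v • (Γ.path K (Y v) (X v) * T.mat (Γ.src (X v)) (Γ.src d)) else 0) =
            (if Γ.src (Y v) = Γ.src d then gT v * ψ v else 0) • Γ.run K d (Γ.per d) := by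
          intro v
          split_ifs with h
          · rw [← h, hgT, smul_smul, mul_comm]
            congr 1
            rcases Γ.src_eq_src_iff.1 h with h' | h'
            · rw [h']
            · rw [h', Γ.run_per_symm]
          · rw [zero_smul]
        simp only [h3]
        rw [← Finset.sum_smul, h2, zero_smul]
      · refine Finset.sum_eq_zero fun v _ => ?_
        split_ifs with h
        · by_contra h0
          have h0' : Γ.path K (Y v) (X v) * T.mat (Γ.src (X v)) y' ≠ 0 :=
            fun h' => h0 (by rw [h', smul_zero])
          obtain ⟨a, b, c, hab, hbc, ha, hb, rfl⟩ := Γ.exists_darts_of_mul_ne_zero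
            (fun h' : Γ.src (Y v) = Γ.src (X v) => hopp _ (hYJ v) (h' ▸ hXI v)) (hT.ne (hXI v) hy')
            (Γ.isHom_path (hYX v)) (T.isHom_mat _ _) h0'
          obtain ⟨rfl, rfl⟩ := Γ.darts_unique (hYX v) (hne' v) hab ha hb
          have hcY : c ≠ Y v := by rintro rfl; exact hyy h.symm
          have hgap := (hgy v c (by rw [← hbc, hX]) hy').resolve_left hcY
          obtain ⟨s, hs⟩ := Γ.isHom_eq_smul hbc (fun h' => hT.ne (hXI v) hy' (by rw [h']))
            (T.isHom_mat _ _)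
          exact h0' (by rw [hs, mul_smul_comm,
            Γ.path_mul_path_eq_zero (hYX v) hbc hcY.symm hgap, smul_zero])
        · rfl)
    (by
      intro x hx x' hx'
      have h1 : ∑ y ∈ S.J, S.mat x y * M y x' =
          ∑ v, if Γ.src (X v) = x' then
            ψ v • (S.mat x (Γ.src (Y v)) * Γ.path K (Y v) (X v)) else 0 := by
        simp only [M, Finset.mul_sum]
        rw [Finset.sum_comm]
        refine Finset.sum_congr rfl fun v _ => ?_
        rw [Finset.sum_eq_single_of_mem _ (hYJ v)]
        · simp only [true_and, mul_ite, mul_zero, mul_smul_comm]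
        · intro z _ hz
          rw [if_neg (fun h => hz h.1.symm), mul_zero]
      rw [h1]
      by_cases hxx : x = x'
      · subst hxx
        have h2 := congrFun hψL ⟨x, Or.inl hx, Or.inl hx'⟩
        simp only [L, LinearMap.coe_mk, AddHom.coe_mk, hS.zigzag.disjoint x hx, if_false,
          Pi.zero_apply] at h2
        obtain ⟨d, rfl⟩ := Γ.exists_src_eq x
        have h3 : ∀ v, (if Γ.src (X v) = Γ.src d then
            ψ v • (S.mat (Γ.src d) (Γ.src (Y v)) * Γ.path K (Y v) (X v)) else 0) =
            (if Γ.src (X v) = Γ.src d then gS v * ψ v else 0) • Γ.run K d (Γ.per d) := by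
          intro v
          split_ifs with h
          · rw [← h, hgS, smul_smul, mul_comm]
            congr 1
            rcases Γ.src_eq_src_iff.1 h with h' | h'
            · rw [h']
            · rw [h', Γ.run_per_symm]
          · rw [zero_smul]
        simp only [h3]
        rw [← Finset.sum_smul, h2, zero_smul]
      · refine Finset.sum_eq_zero fun v _ => ?_
        split_ifs with h
        · by_contra h0
          have h0' : S.mat x (Γ.src (Y v)) * Γ.path K (Y v) (X v) ≠ 0 :=
            fun h' => h0 (by rw [h', smul_zero])
          obtain ⟨a, b, c, hab, hbc, rfl, hb, hc⟩ := Γ.exists_darts_of_mul_ne_zero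
            (hS.ne hx (hYJ v)) (fun h' => hopp _ (hYJ v) (h' ▸ hXI v))
            (S.isHom_mat _ _) (Γ.isHom_path (hYX v)) h0'
          obtain ⟨rfl, rfl⟩ := Γ.darts_unique (hYX v) (hne' v) hbc hb hc
          have haX : a ≠ X v := by rintro rfl; exact hxx h
          have hgap := (hgx v a (by rw [hab, hY]) hx).resolve_left haX
          obtain ⟨s, hs⟩ := Γ.isHom_eq_smul hab (fun h' => hS.ne hx (hYJ v) (by rw [h']))
            (S.isHom_mat _ _)
          exact h0' (by rw [hs, smul_mul_assoc, Γ.path_mul_path_eq_zero hab (hYX v) haX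
            (by rw [Γ.per_eq hab]; exact hgap), smul_zero])
        · rfl)
  apply hψ0
  ext v
  have h1 := hres _ (hYJ v) _ (hXI v)
  simp only [M] at h1
  rw [Finset.sum_eq_single_of_mem v (Finset.mem_univ _), if_pos ⟨rfl, rfl⟩] at h1
  · exact (smul_eq_zero.1 h1).resolve_right (Γ.path_ne_zero (hYX v))
  · intro w _ hwv
    rw [if_neg]
    rintro ⟨e1, e2⟩
    have := Γ.darts_unique (hYX v) (hne' v) (hYX w) e1 e2
    exact hwv (Subtype.ext (by rw [← hY w, this.1, hY v]))

lemma homZero_iff_exists_not_good (hS : S.IsString) (hT : T.IsString)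
    (hopp : ∀ x ∈ S.J, x ∉ T.I) (hopp' : ∀ x ∈ S.I, x ∉ T.J) (hne : (S.meet T).Nonempty) :
    S.HomZero T (-1) ↔ ∃ v ∈ S.meet T, ¬ S.Good T v := by
  constructor
  · intro h
    by_contra hcon
    push Not at hcon
    exact not_homZero_of_good hS hT hopp hne hcon h
  · rintro ⟨v, hv, hg⟩
    exact homZero_of_not_good hS hT hopp hopp' hv hg

end

end TwoTermComplex

/-! ### Diagrams and restrictions of alternating paths -/

namespace BrauerTree

variable {V : Type v} [Fintype V] {Γ : BrauerTree V}

lemma onPath_iff {a b d : Γ.Arrow} (hab : a.fst = b.fst) (hne : a ≠ b) :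
    Γ.OnPath (Γ.src a) (Γ.src b) d ↔ a.fst = d.fst ∧ Γ.gap a d < Γ.gap a b := by
  constructor
  · rintro ⟨d₀, r, h1, h2, h3, k, hk, rfl⟩
    obtain ⟨rfl, h4⟩ := Γ.darts_unique hab hne (Γ.iterate_next_fst d₀ r).symm h1 h2
    refine ⟨(Γ.iterate_next_fst d₀ k).symm, ?_⟩
    have h5 : r ≤ Γ.gap d₀ b := by
      by_contra hlt
      exact h3 _ (not_le.1 hlt) (by rw [Γ.iterate_gap hab])
    rw [Γ.gap_iterate]
    exact lt_of_le_of_lt (Nat.mod_le _ _) (lt_of_lt_of_le hk h5)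
  · rintro ⟨had, hlt⟩
    refine ⟨a, Γ.gap a b, rfl, by rw [Γ.iterate_gap hab], fun k hk h => ?_, Γ.gap a d, hlt,
      (Γ.iterate_gap had).symm⟩
    have h1 : Γ.next^[k] a = b := Γ.eq_of_src_eq h (by rw [Γ.iterate_next_fst, hab])
    have h2 := Γ.gap_iterate a k
    rw [h1] at h2
    have := Nat.mod_le k (Γ.per a)
    omega

end BrauerTree

namespace TwoTermComplex

variable {V : Type v} [Fintype V] {Γ : BrauerTree V} {K : Type u} [Field K]
variable {S T : TwoTermComplex Γ K}

/-- The arrow `x` starts at a source of the diagram on the cycle at `v`. -/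
def Src (S : TwoTermComplex Γ K) (v : V) (x : Γ.Arrow) : Prop := x.fst = v ∧ Γ.src x ∈ S.I

/-- The arrow `y` starts at a sink of the diagram on the cycle at `v`. -/
def Snk (S : TwoTermComplex Γ K) (v : V) (y : Γ.Arrow) : Prop := y.fst = v ∧ Γ.src y ∈ S.J

lemma IsString.src_unique (hS : S.IsString) {v : V} {a b : Γ.Arrow} (ha : S.Src v a)
    (hb : S.Src v b) : a = b :=
  hS.zigzag.unique_left a b (ha.1.trans hb.1.symm) ha.2 hb.2

lemma IsString.snk_unique (hS : S.IsString) {v : V} {a b : Γ.Arrow} (ha : S.Snk v a)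
    (hb : S.Snk v b) : a = b :=
  hS.zigzag.unique_right a b (ha.1.trans hb.1.symm) ha.2 hb.2

lemma IsString.src_ne_snk (hS : S.IsString) {v : V} {a b : Γ.Arrow} (ha : S.Src v a)
    (hb : S.Snk v b) : a ≠ b := fun h => hS.ne ha.2 hb.2 (by rw [h])

lemma IsString.mem_diagramArrows (hS : S.IsString) {d : Γ.Arrow} : d ∈ S.diagramArrows ↔
    ∃ a b : Γ.Arrow, S.Src d.fst a ∧ S.Snk d.fst b ∧ Γ.gap a d < Γ.gap a b := by
  constructor
  · rintro ⟨i, j, hij, hon⟩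
    rw [comp_ne_zero_iff] at hij
    obtain ⟨a, b, hab, ha, hb⟩ := Γ.exists_darts_of_isHom_ne_zero (S.isHom_mat _ _) hij
    have hi := i.2
    have hj := j.2
    rw [← ha] at hi hon
    rw [← hb] at hj hon
    have hne : a ≠ b := fun h => hS.ne hi hj (by rw [h])
    rw [BrauerTree.onPath_iff hab hne] at hon
    exact ⟨a, b, ⟨hon.1, hi⟩, ⟨hab.symm.trans hon.1, hj⟩, hon.2⟩
  · rintro ⟨a, b, ha, hb, hlt⟩
    have hab : a.fst = b.fst := ha.1.trans hb.1.symm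
    refine ⟨⟨_, ha.2⟩, ⟨_, hb.2⟩, ?_, ?_⟩
    · rw [comp_ne_zero_iff]
      exact hS.mat_ne_zero hab ha.2 hb.2
    · exact (BrauerTree.onPath_iff hab (hS.src_ne_snk ha hb)).2 ⟨ha.1, hlt⟩

lemma IsString.mem_diagramArrows_iff (hS : S.IsString) {v : V} {a b d : Γ.Arrow} (ha : S.Src v a)
    (hb : S.Snk v b) (hd : d.fst = v) : d ∈ S.diagramArrows ↔ Γ.gap a d < Γ.gap a b := by
  subst hd
  rw [hS.mem_diagramArrows]
  constructor
  · rintro ⟨a', b', ha', hb', hlt⟩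
    rwa [hS.src_unique ha ha', hS.snk_unique hb hb']
  · exact fun h => ⟨a, b, ha, hb, h⟩

lemma IsString.gap_pos (hS : S.IsString) {v : V} {a b : Γ.Arrow} (ha : S.Src v a)
    (hb : S.Snk v b) : 0 < Γ.gap a b :=
  Nat.pos_of_ne_zero ((Γ.gap_eq_zero (ha.1.trans hb.1.symm)).not.2 (hS.src_ne_snk ha hb))

/-- The first arrow on the cycle at `v` of the diagram. -/
lemma IsString.src_mem_diagramArrows (hS : S.IsString) {v : V} {a b : Γ.Arrow} (ha : S.Src v a)
    (hb : S.Snk v b) : a ∈ S.diagramArrows := by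
  rw [hS.mem_diagramArrows_iff ha hb ha.1, Γ.gap_self]
  exact hS.gap_pos ha hb

/-- The last arrow on the cycle at `v` of the diagram. -/
lemma IsString.prev_snk_mem_diagramArrows (hS : S.IsString) {v : V} {a b d : Γ.Arrow}
    (ha : S.Src v a) (hb : S.Snk v b) (hd : Γ.next d = b) : d ∈ S.diagramArrows := by
  have hdv : d.fst = v := by rw [← hb.1, ← hd, Γ.next_fst]
  rw [hS.mem_diagramArrows_iff ha hb hdv]
  have := Γ.gap_next (ha.1.trans hdv.symm) (by rw [hd]; exact (hS.src_ne_snk ha hb).symm)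
  rw [hd] at this
  omega

lemma IsString.next_mem_or (hS : S.IsString) {d : Γ.Arrow} (hd : d ∈ S.diagramArrows) :
    Γ.next d ∈ S.diagramArrows ∨ Γ.src (Γ.next d) ∈ S.J := by
  obtain ⟨a, b, ha, hb, hlt⟩ := hS.mem_diagramArrows.1 hd
  have hab : a.fst = b.fst := ha.1.trans hb.1.symm
  have hper := Γ.gap_lt_per hab
  have hna : Γ.next d ≠ a := fun h => by
    have := Γ.gap_of_next_eq h
    omega
  have h1 := Γ.gap_next ha.1 hna
  by_cases h2 : Γ.next d = b
  · right; rw [h2]; exact hb.2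
  · left
    rw [hS.mem_diagramArrows_iff ha hb (Γ.next_fst d)]
    have h3 : Γ.gap a (Γ.next d) ≠ Γ.gap a b :=
      fun h => h2 (Γ.gap_inj (by rw [Γ.next_fst, ha.1]) hab h)
    omega

lemma IsString.mem_or_of_next (hS : S.IsString) {d : Γ.Arrow} (hd : Γ.next d ∈ S.diagramArrows) :
    d ∈ S.diagramArrows ∨ Γ.src (Γ.next d) ∈ S.I := by
  obtain ⟨a, b, ha, hb, hlt⟩ := hS.mem_diagramArrows.1 hd
  rw [Γ.next_fst] at ha hb
  by_cases h2 : Γ.next d = a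
  · right; rw [h2]; exact ha.2
  · left
    rw [hS.mem_diagramArrows_iff ha hb rfl]
    have h1 := Γ.gap_next ha.1 h2
    omega

lemma IsString.src_notMem_right (hS : S.IsString) {d : Γ.Arrow} (hd : d ∈ S.diagramArrows) :
    Γ.src d ∉ S.J := by
  intro h
  obtain ⟨a, b, ha, hb, hlt⟩ := hS.mem_diagramArrows.1 hd
  rw [hS.snk_unique hb ⟨rfl, h⟩] at hlt
  exact lt_irrefl _ hlt

lemma IsString.tgt_notMem_left (hS : S.IsString) {d : Γ.Arrow} (hd : d ∈ S.diagramArrows) :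
    Γ.tgt d ∉ S.I := by
  intro h
  obtain ⟨a, b, ha, hb, hlt⟩ := hS.mem_diagramArrows.1 hd
  have h1 : Γ.next d = a := hS.src_unique (v := d.fst) ⟨Γ.next_fst d, h⟩ ha
  have h2 := Γ.gap_of_next_eq h1
  have h3 := Γ.gap_lt_per (ha.1.trans hb.1.symm)
  omega

lemma IsString.next_ne (hS : S.IsString) {d : Γ.Arrow} (hd : d ∈ S.diagramArrows) :
    Γ.next d ≠ d := by
  intro h
  obtain ⟨a, b, ha, hb, hlt⟩ := hS.mem_diagramArrows.1 hd
  have h1 : Γ.per d = 1 := Function.minimalPeriod_eq_one_iff_isFixedPt.2 h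
  have h3 := Γ.gap_lt_per (ha.1.trans hb.1.symm)
  rw [Γ.per_eq ha.1] at h3
  omega

lemma IsString.fst_mem_ends (hS : S.IsString) {d : Γ.Arrow} (hd : d ∈ S.diagramArrows) :
    d.fst ∈ Γ.ends S.marked := by
  obtain ⟨a, b, ha, hb, hlt⟩ := hS.mem_diagramArrows.1 hd
  rw [← ha.1]
  exact mem_ends (Or.inl ha.2)

lemma exists_isACycle_iff {x : Γ.Edge} : (∃ l, Γ.IsACycle K l ∧
    (∃ d ∈ l, Γ.src d ∈ T.marked) ∧ ∃ d ∈ l, Γ.src d = x) ↔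
      ∃ v ∈ Γ.ends T.marked, Γ.Inc v x := by
  constructor
  · rintro ⟨l, hl, ⟨d, hd, hdT⟩, d', hd', rfl⟩
    exact ⟨d.fst, mem_ends hdT, hl.fst_eq hd hd' ▸ Γ.inc_fst d'⟩
  · rintro ⟨v, ⟨z, hz, hvz⟩, hvx⟩
    obtain ⟨d, rfl, rfl⟩ := Γ.inc_iff.1 hvz
    obtain ⟨d', hd', rfl⟩ := Γ.inc_iff.1 hvx
    obtain ⟨l, hl, hall⟩ := Γ.exists_isACycle (K := K) d
    exact ⟨l, hl, ⟨d, hall d rfl, hz⟩, d', hall d' hd', rfl⟩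

lemma exists_isACycle_arrow_iff {a : Γ.Arrow} : (∃ l, Γ.IsACycle K l ∧
    (∃ d ∈ l, Γ.src d ∈ T.marked) ∧ a ∈ l) ↔ a.fst ∈ Γ.ends T.marked := by
  constructor
  · rintro ⟨l, hl, ⟨d, hd, hdT⟩, ha⟩
    rw [hl.fst_eq ha hd]
    exact mem_ends hdT
  · rintro ⟨z, hz, hvz⟩
    obtain ⟨d, hd, rfl⟩ := Γ.inc_iff.1 hvz
    obtain ⟨l, hl, hall⟩ := Γ.exists_isACycle (K := K) d
    exact ⟨l, hl, ⟨d, hall d rfl, hz⟩, hall a hd.symm⟩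

/-- On the cycle at `v`, the diagram of `S` is contained in the diagram of `T`. -/
def Sub (S T : TwoTermComplex Γ K) (v : V) : Prop :=
  ∀ d : Γ.Arrow, d.fst = v → d ∈ S.diagramArrows → d ∈ T.diagramArrows

lemma contained_iff (hS : S.IsString) (hT : T.IsString) (hne : (S.meet T).Nonempty)
    (hshare : ∀ v ∈ S.meet T, (∃ d : Γ.Arrow, d.fst = v ∧ Γ.src d ∈ S.marked ∩ T.marked) ∨
      ∃ a b : Γ.Arrow, S.Src v a ∧ S.Snk v b) :
    (S.restriction T).Contained (T.restriction S) ↔ ∀ v ∈ S.meet T, S.Sub T v := by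
  constructor
  · rintro ⟨-, h⟩ v hv d hd hdS
    exact (h ⟨hdS, exists_isACycle_arrow_iff.2 (hd ▸ hv.2)⟩).1
  · intro h
    have harr : ∀ d ∈ S.diagramArrows, d.fst ∈ Γ.ends T.marked → d ∈ T.diagramArrows :=
      fun d hd hdT => h d.fst ⟨hS.fst_mem_ends hd, hdT⟩ d rfl hd
    have hmarked : ∀ (x : Γ.Edge) (t : V), x ∈ S.marked → t ∈ Γ.ends T.marked → Γ.Inc t x →
        x ∈ T.diagram.verts ∧ ∃ v ∈ Γ.ends S.marked, Γ.Inc v x := by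
      intro x t hx ht htx
      have htS : t ∈ Γ.ends S.marked := ⟨x, hx, htx⟩
      refine ⟨?_, t, htS, htx⟩
      obtain ⟨z, rfl, rfl⟩ := Γ.inc_iff.1 htx
      have hboth : ∀ a b : Γ.Arrow, S.Src z.fst a → S.Snk z.fst b →
          Γ.src z ∈ T.diagram.verts := by
        intro a b ha hb
        rcases hx with hx | hx
        · rw [← hS.src_unique ha ⟨rfl, hx⟩]
          exact Or.inr ⟨a, harr a (hS.src_mem_diagramArrows ha hb) (ha.1 ▸ ht), Or.inl rfl⟩
        · have hzb : z = b := hS.snk_unique ⟨rfl, hx⟩ hb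
          obtain ⟨d, hd⟩ := Γ.next.surjective b
          have hdv : d.fst = z.fst := by rw [← hb.1, ← hd, Γ.next_fst]
          refine Or.inr ⟨d, harr d (hS.prev_snk_mem_diagramArrows ha hb hd) (hdv ▸ ht), Or.inr ?_⟩
          rw [hzb, ← hd]; rfl
      rcases hshare z.fst ⟨htS, ht⟩ with ⟨d, hd, hdS, hdT⟩ | ⟨a, b, ha, hb⟩
      · by_cases hzd : z = d
        · rw [hzd]; exact Or.inl hdT
        · rcases hx with hx | hx <;> rcases hdS with hdS | hdS
          · exact absurd (hS.src_unique (v := z.fst) ⟨rfl, hx⟩ ⟨hd, hdS⟩) hzd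
          · exact hboth z d ⟨rfl, hx⟩ ⟨hd, hdS⟩
          · exact hboth d z ⟨hd, hdS⟩ ⟨rfl, hx⟩
          · exact absurd (hS.snk_unique (v := z.fst) ⟨rfl, hx⟩ ⟨hd, hdS⟩) hzd
      · exact hboth a b ha hb
    refine ⟨?_, ?_⟩
    · rintro x ⟨hx, hl⟩
      obtain ⟨t, ht, htx⟩ := exists_isACycle_iff.1 hl
      suffices hsuf : x ∈ T.diagram.verts ∧ ∃ v ∈ Γ.ends S.marked, Γ.Inc v x from
        ⟨hsuf.1, exists_isACycle_iff.2 hsuf.2⟩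
      rcases hx with hx | ⟨d, hd, hdx⟩
      · exact hmarked x t hx ht htx
      · have hux : Γ.Inc d.fst x := by
          rcases hdx with rfl | rfl
          · exact Γ.inc_fst d
          · exact Γ.inc_tgt d
        have huS := hS.fst_mem_ends hd
        by_cases huT : d.fst ∈ Γ.ends T.marked
        · exact ⟨Or.inr ⟨d, harr d hd huT, hdx⟩, d.fst, huS, hux⟩
        · have hut : d.fst ≠ t := fun h => huT (h ▸ ht)
          obtain ⟨e, rfl, he1, rfl⟩ := Γ.inc_eq_of_ne hux htx hut
          rw [← he1] at huS huT
          by_cases htS : e.snd ∈ Γ.ends S.marked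
          · exact hmarked _ _ (hS.edgeConnected.src_mem huS htS) ht htx
          · obtain ⟨c, hc⟩ := hne
            exact absurd (hS.edgeConnected.mem_ends_of_adj hT.edgeConnected hc huS ht htS) huT
    · rintro d ⟨hd, hl⟩
      exact ⟨harr d hd (exists_isACycle_arrow_iff.1 hl),
        exists_isACycle_arrow_iff.2 (hS.fst_mem_ends hd)⟩

/-- Containment of two arcs of a cycle. -/
lemma sub_iff (hS : S.IsString) (hT : T.IsString) {v : V} {x y x' y' : Γ.Arrow}
    (hx : S.Src v x) (hy : S.Snk v y) (hx' : T.Src v x') (hy' : T.Snk v y') :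
    S.Sub T v ↔ Γ.gap x' x + Γ.gap x y ≤ Γ.gap x' y' := by
  have f1 : x'.fst = x.fst := hx'.1.trans hx.1.symm
  constructor
  · intro h
    have h1 := h x hx.1 (hS.src_mem_diagramArrows hx hy)
    rw [hT.mem_diagramArrows_iff hx' hy' hx.1] at h1
    by_contra hlt
    have hxy' : x.fst = y'.fst := hx.1.trans hy'.1.symm
    have h2 := Γ.gap_add_gap f1 hxy'
    have h3 := Γ.gap_lt_per hxy'
    rw [← Γ.per_eq f1] at h3
    have h4 : y' ∈ S.diagramArrows := by
      rw [hS.mem_diagramArrows_iff hx hy hy'.1]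
      omega
    exact hT.src_notMem_right (h y' hy'.1 h4) hy'.2
  · intro h d hd hdS
    rw [hS.mem_diagramArrows_iff hx hy hd] at hdS
    rw [hT.mem_diagramArrows_iff hx' hy' hd]
    have h2 := Γ.gap_add_gap f1 (hx.1.trans hd.symm)
    omega

lemma sub_of_no_source (hS : S.IsString) {v : V} (h : ∀ x, ¬ S.Src v x) : S.Sub T v := by
  rintro d rfl hd
  obtain ⟨a, -, ha, -⟩ := hS.mem_diagramArrows.1 hd
  exact absurd ha (h a)

lemma sub_of_no_sink (hS : S.IsString) {v : V} (h : ∀ x, ¬ S.Snk v x) : S.Sub T v := by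
  rintro d rfl hd
  obtain ⟨-, b, -, hb, -⟩ := hS.mem_diagramArrows.1 hd
  exact absurd hb (h b)

lemma good_iff (hS : S.IsString) (hT : T.IsString) {v : V} {y x' : Γ.Arrow}
    (hy : S.Snk v y) (hx' : T.Src v x') : S.Good T v ↔
      (∀ x, S.Src v x → x = x' ∨ Γ.per y ≤ Γ.gap x y + Γ.gap y x') ∧
        ∀ y', T.Snk v y' → y' = y ∨ Γ.per y ≤ Γ.gap y x' + Γ.gap x' y' := by
  constructor
  · rintro ⟨y₁, x₁, h1, h2, h3, h4, h5, h6⟩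
    obtain rfl := hS.snk_unique hy ⟨h1, h3⟩
    obtain rfl := hT.src_unique hx' ⟨h2, h4⟩
    exact ⟨fun x hx => h5 x hx.1 hx.2, fun y' hy' => h6 y' hy'.1 hy'.2⟩
  · rintro ⟨h5, h6⟩
    exact ⟨y, x', hy.1, hx'.1, hy.2, hx'.2, fun x h1 h2 => h5 x ⟨h1, h2⟩,
      fun y' h1 h2 => h6 y' ⟨h1, h2⟩⟩

lemma not_good_of_no_sink {v : V} (h : ∀ y, ¬ S.Snk v y) : ¬ S.Good T v := by
  rintro ⟨y, -, h1, -, h3, -⟩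
  exact h y ⟨h1, h3⟩

lemma not_good_of_no_source {v : V} (h : ∀ y, ¬ T.Src v y) : ¬ S.Good T v := by
  rintro ⟨-, x, -, h1, -, h3, -⟩
  exact h x ⟨h1, h3⟩

/-! ### The ends of the common part -/

/-- The common part of the diagrams ends at `v` in a sink. -/
def SinkType (S T : TwoTermComplex Γ K) (v : V) : Prop :=
  (∃ x y y', S.Src v x ∧ T.Src v x ∧ S.Snk v y ∧ T.Snk v y' ∧ y ≠ y') ∨
    ∃ y, S.Snk v y ∧ T.Snk v y ∧ ((∀ x, ¬ S.Src v x) ∨ ∀ x, ¬ T.Src v x)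

/-- The common part of the diagrams ends at `v` in a source. -/
def SourceType (S T : TwoTermComplex Γ K) (v : V) : Prop :=
  (∃ y x x', S.Snk v y ∧ T.Snk v y ∧ S.Src v x ∧ T.Src v x' ∧ x ≠ x') ∨
    ∃ x, S.Src v x ∧ T.Src v x ∧ ((∀ y, ¬ S.Snk v y) ∨ ∀ y, ¬ T.Snk v y)

/-- The two diagrams agree on the cycle at `v`. -/
def Inner (S T : TwoTermComplex Γ K) (v : V) : Prop :=
  ∃ x y, S.Src v x ∧ T.Src v x ∧ S.Snk v y ∧ T.Snk v y

lemma SinkType.symm {v : V} (h : S.SinkType T v) : T.SinkType S v := by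
  rcases h with ⟨x, y, y', h1, h2, h3, h4, h5⟩ | ⟨y, h1, h2, h3⟩
  · exact Or.inl ⟨x, y', y, h2, h1, h4, h3, h5.symm⟩
  · exact Or.inr ⟨y, h2, h1, h3.symm⟩

lemma SourceType.symm {v : V} (h : S.SourceType T v) : T.SourceType S v := by
  rcases h with ⟨x, y, y', h1, h2, h3, h4, h5⟩ | ⟨y, h1, h2, h3⟩
  · exact Or.inl ⟨x, y', y, h2, h1, h4, h3, h5.symm⟩
  · exact Or.inr ⟨y, h2, h1, h3.symm⟩

lemma SinkType.not_sourceType (hS : S.IsString) (hT : T.IsString) {v : V}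
    (h : S.SinkType T v) : ¬ S.SourceType T v := by
  rcases h with ⟨x, y, y', h1, h2, h3, h4, h5⟩ | ⟨y, h1, h2, h3⟩
  · rintro (⟨y₁, -, -, g1, g2, -⟩ | ⟨-, -, -, g3⟩)
    · exact h5 ((hS.snk_unique h3 g1).trans (hT.snk_unique g2 h4))
    · rcases g3 with g3 | g3
      · exact g3 _ h3
      · exact g3 _ h4
  · rintro (⟨-, x, x', -, -, g1, g2, -⟩ | ⟨x, g1, g2, -⟩)
    · rcases h3 with h3 | h3
      · exact h3 _ g1
      · exact h3 _ g2
    · rcases h3 with h3 | h3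
      · exact h3 _ g1
      · exact h3 _ g2

lemma Inner.not_sinkType (hS : S.IsString) (hT : T.IsString) {v : V} (h : S.Inner T v) :
    ¬ S.SinkType T v := by
  obtain ⟨x, y, h1, h2, h3, h4⟩ := h
  rintro (⟨-, y₁, y₂, -, -, g1, g2, g3⟩ | ⟨-, -, -, g⟩)
  · exact g3 ((hS.snk_unique g1 h3).trans (hT.snk_unique h4 g2))
  · rcases g with g | g
    · exact g _ h1
    · exact g _ h2

lemma Inner.not_sourceType (hS : S.IsString) (hT : T.IsString) {v : V} (h : S.Inner T v) :
    ¬ S.SourceType T v := by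
  obtain ⟨x, y, h1, h2, h3, h4⟩ := h
  rintro (⟨-, y₁, y₂, -, -, g1, g2, g3⟩ | ⟨-, -, -, g⟩)
  · exact g3 ((hS.src_unique g1 h1).trans (hT.src_unique h2 g2))
  · rcases g with g | g
    · exact g _ h3
    · exact g _ h4

lemma Inner.sub_and_good (hS : S.IsString) (hT : T.IsString) {v : V} (h : S.Inner T v) :
    S.Sub T v ∧ S.Good T v := by
  obtain ⟨x, y, h1, h2, h3, h4⟩ := h
  refine ⟨?_, ?_⟩
  · rw [sub_iff hS hT h1 h3 h2 h4, Γ.gap_self, zero_add]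
  · rw [good_iff hS hT h3 h2]
    exact ⟨fun x' hx' => Or.inl (hS.src_unique hx' h1), fun y' hy' => Or.inl (hT.snk_unique hy' h4)⟩

lemma Inner.symm {v : V} (h : S.Inner T v) : T.Inner S v := by
  obtain ⟨x, y, h1, h2, h3, h4⟩ := h
  exact ⟨x, y, h2, h1, h4, h3⟩

lemma gap_symm_eq {x y : Γ.Arrow} (h : x.fst = y.fst) (hne : x ≠ y) :
    Γ.gap y x + Γ.gap x y = Γ.per y := by
  rw [Γ.gap_add_gap_self h.symm hne.symm]

/-- Comparison of the two diagrams at a sink end of the common part. -/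
lemma SinkType.cases (hS : S.IsString) (hT : T.IsString) {v : V} (h : S.SinkType T v) :
    (S.Sub T v ∧ ¬ T.Sub S v ∧ S.Good T v ∧ ¬ T.Good S v) ∨
      (T.Sub S v ∧ ¬ S.Sub T v ∧ T.Good S v ∧ ¬ S.Good T v) ∨
      (S.Sub T v ∧ T.Sub S v ∧ ¬ S.Good T v ∧ ¬ T.Good S v) := by
  rcases h with ⟨x, y, y', h1, h2, h3, h4, h5⟩ | ⟨y, h1, h2, h3⟩
  · have key : ∀ (S T : TwoTermComplex Γ K) (hS : S.IsString) (hT : T.IsString) (y y' : Γ.Arrow),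
        S.Src v x → T.Src v x → S.Snk v y → T.Snk v y' → Γ.gap x y < Γ.gap x y' →
        (S.Sub T v ∧ ¬ T.Sub S v ∧ S.Good T v ∧ ¬ T.Good S v) := by
      intro S T hS hT y y' h1 h2 h3 h4 hlt
      have e1 := gap_symm_eq (h1.1.trans h3.1.symm) (hS.src_ne_snk h1 h3)
      have e2 := gap_symm_eq (h2.1.trans h4.1.symm) (hT.src_ne_snk h2 h4)
      rw [sub_iff hS hT h1 h3 h2 h4, sub_iff hT hS h2 h4 h1 h3, Γ.gap_self,
        good_iff hS hT h3 h2, good_iff hT hS h4 h1]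
      refine ⟨by omega, by omega, ⟨fun x' hx' => Or.inl (hS.src_unique hx' h1), fun z hz => ?_⟩, ?_⟩
      · obtain rfl := hT.snk_unique h4 hz
        right; omega
      · rintro ⟨-, h⟩
        rcases h y h3 with rfl | h
        · omega
        · omega
    have hne : Γ.gap x y ≠ Γ.gap x y' :=
      fun h => h5 (Γ.gap_inj (h1.1.trans h3.1.symm) (h1.1.trans h4.1.symm) h)
    rcases lt_or_gt_of_ne hne with hlt | hlt
    · exact Or.inl (key S T hS hT y y' h1 h2 h3 h4 hlt)
    · exact Or.inr (Or.inl (key T S hT hS y' y h2 h1 h4 h3 hlt))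
  · have key : ∀ (S T : TwoTermComplex Γ K) (hS : S.IsString) (hT : T.IsString) (x' : Γ.Arrow),
        S.Snk v y → T.Snk v y → (∀ x, ¬ S.Src v x) → T.Src v x' →
        (S.Sub T v ∧ ¬ T.Sub S v ∧ S.Good T v ∧ ¬ T.Good S v) := by
      intro S T hS hT x' h1 h2 h3 h4
      refine ⟨sub_of_no_source hS h3, fun h => ?_, ?_, not_good_of_no_source h3⟩
      · obtain ⟨a, -, ha, -⟩ := hS.mem_diagramArrows.1 (h x' h4.1 (hT.src_mem_diagramArrows h4 h2))
        exact h3 a (h4.1 ▸ ha)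
      · rw [good_iff hS hT h1 h4]
        exact ⟨fun x hx => absurd hx (h3 x), fun z hz => Or.inl (hT.snk_unique hz h2)⟩
    by_cases hxS : ∃ x, S.Src v x
    · obtain ⟨x, hx⟩ := hxS
      exact Or.inr (Or.inl (key T S hT hS x h2 h1 (h3.resolve_left fun h => h x hx) hx))
    · push Not at hxS
      by_cases hxT : ∃ x, T.Src v x
      · obtain ⟨x, hx⟩ := hxT
        exact Or.inl (key S T hS hT x h1 h2 hxS hx)
      · push Not at hxT
        exact Or.inr (Or.inr ⟨sub_of_no_source hS hxS, sub_of_no_source hT hxT,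
          not_good_of_no_source hxT, not_good_of_no_source hxS⟩)

/-- Comparison of the two diagrams at a source end of the common part. -/
lemma SourceType.cases (hS : S.IsString) (hT : T.IsString) {v : V} (h : S.SourceType T v) :
    (S.Sub T v ∧ ¬ T.Sub S v ∧ T.Good S v ∧ ¬ S.Good T v) ∨
      (T.Sub S v ∧ ¬ S.Sub T v ∧ S.Good T v ∧ ¬ T.Good S v) ∨
      (S.Sub T v ∧ T.Sub S v ∧ ¬ S.Good T v ∧ ¬ T.Good S v) := by
  rcases h with ⟨y, x, x', h1, h2, h3, h4, h5⟩ | ⟨x, h1, h2, h3⟩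
  · have key : ∀ (S T : TwoTermComplex Γ K) (hS : S.IsString) (hT : T.IsString) (x x' : Γ.Arrow),
        S.Snk v y → T.Snk v y → S.Src v x → T.Src v x' → Γ.gap x y < Γ.gap x' y →
        (S.Sub T v ∧ ¬ T.Sub S v ∧ T.Good S v ∧ ¬ S.Good T v) := by
      intro S T hS hT x x' h1 h2 h3 h4 hlt
      have e1 := gap_symm_eq (h3.1.trans h1.1.symm) (hS.src_ne_snk h3 h1)
      have e2 := gap_symm_eq (h4.1.trans h2.1.symm) (hT.src_ne_snk h4 h2)
      have f1 : x'.fst = x.fst := h4.1.trans h3.1.symm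
      have e3 := Γ.gap_add_gap f1 (h3.1.trans h1.1.symm)
      have e4 := Γ.gap_lt_per f1
      rw [sub_iff hS hT h3 h1 h4 h2, sub_iff hT hS h4 h2 h3 h1,
        good_iff hS hT h1 h4, good_iff hT hS h2 h3]
      refine ⟨by omega, by omega, ⟨fun z hz => ?_, fun y' hy' => Or.inl (hS.snk_unique hy' h1)⟩, ?_⟩
      · obtain rfl := hT.src_unique h4 hz
        right; omega
      · rintro ⟨h, -⟩
        rcases h x h3 with rfl | h
        · omega
        · omega
    have hne : Γ.gap x y ≠ Γ.gap x' y := by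
      intro h
      have e1 := gap_symm_eq (h3.1.trans h1.1.symm) (hS.src_ne_snk h3 h1)
      have e2 := gap_symm_eq (h4.1.trans h2.1.symm) (hT.src_ne_snk h4 h2)
      exact h5 (Γ.gap_inj (h1.1.trans h3.1.symm) (h1.1.trans h4.1.symm) (by omega))
    rcases lt_or_gt_of_ne hne with hlt | hlt
    · exact Or.inl (key S T hS hT x x' h1 h2 h3 h4 hlt)
    · exact Or.inr (Or.inl (key T S hT hS x' x h2 h1 h4 h3 hlt))
  · have key : ∀ (S T : TwoTermComplex Γ K) (hS : S.IsString) (hT : T.IsString) (y' : Γ.Arrow),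
        S.Src v x → T.Src v x → (∀ y, ¬ S.Snk v y) → T.Snk v y' →
        (S.Sub T v ∧ ¬ T.Sub S v ∧ T.Good S v ∧ ¬ S.Good T v) := by
      intro S T hS hT y' h1 h2 h3 h4
      refine ⟨sub_of_no_sink hS h3, fun h => ?_, ?_, not_good_of_no_sink h3⟩
      · obtain ⟨-, b, -, hb, -⟩ :=
          hS.mem_diagramArrows.1 (h x h2.1 (hT.src_mem_diagramArrows h2 h4))
        exact h3 b (h2.1 ▸ hb)
      · rw [good_iff hT hS h4 h1]
        exact ⟨fun z hz => Or.inl (hT.src_unique hz h2), fun z hz => absurd hz (h3 z)⟩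
    by_cases hyS : ∃ y, S.Snk v y
    · obtain ⟨y, hy⟩ := hyS
      exact Or.inr (Or.inl (key T S hT hS y h2 h1 (h3.resolve_left fun h => h y hy) hy))
    · push Not at hyS
      by_cases hyT : ∃ y, T.Snk v y
      · obtain ⟨y, hy⟩ := hyT
        exact Or.inl (key S T hS hT y h1 h2 hyS hy)
      · push Not at hyT
        exact Or.inr (Or.inr ⟨sub_of_no_sink hS hyS, sub_of_no_sink hT hyT,
          not_good_of_no_sink hyS, not_good_of_no_sink hyT⟩)

/-- The case of a cycle without common marked vertices: two overlapping arcs. -/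
lemma not_good_iff_sub (hS : S.IsString) (hT : T.IsString) {v : V}
    (hno : ∀ d : Γ.Arrow, Γ.src d ∈ S.marked → Γ.src d ∉ T.marked)
    {d : Γ.Arrow} (hdv : d.fst = v) (hdS : d ∈ S.diagramArrows) (hdT : d ∈ T.diagramArrows) :
    (¬ S.Good T v ∧ ¬ T.Good S v) ↔ (S.Sub T v ∨ T.Sub S v) := by
  subst hdv
  obtain ⟨x, y, hx, hy, h1⟩ := hS.mem_diagramArrows.1 hdS
  obtain ⟨x', y', hx', hy', h2⟩ := hT.mem_diagramArrows.1 hdT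
  have nxx : x ≠ x' := by rintro rfl; exact hno _ (Or.inl hx.2) (Or.inl hx'.2)
  have nxy : x ≠ y' := by rintro rfl; exact hno _ (Or.inl hx.2) (Or.inr hy'.2)
  have nyx : y ≠ x' := by rintro rfl; exact hno _ (Or.inr hy.2) (Or.inl hx'.2)
  have nyy : y ≠ y' := by rintro rfl; exact hno _ (Or.inr hy.2) (Or.inr hy'.2)
  rw [sub_iff hS hT hx hy hx' hy', sub_iff hT hS hx' hy' hx hy, good_iff hS hT hy hx',
    good_iff hT hS hy' hx]
  have g1 : ((∀ z, S.Src d.fst z → z = x' ∨ Γ.per y ≤ Γ.gap z y + Γ.gap y x') ∧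
      ∀ z, T.Snk d.fst z → z = y ∨ Γ.per y ≤ Γ.gap y x' + Γ.gap x' z) ↔
      (Γ.per y ≤ Γ.gap x y + Γ.gap y x' ∧ Γ.per y ≤ Γ.gap y x' + Γ.gap x' y') := by
    constructor
    · exact fun h => ⟨(h.1 x hx).resolve_left nxx, (h.2 y' hy').resolve_left nyy.symm⟩
    · exact fun h => ⟨fun z hz => hS.src_unique hx hz ▸ Or.inr h.1,
        fun z hz => hT.snk_unique hy' hz ▸ Or.inr h.2⟩
  have g2 : ((∀ z, T.Src d.fst z → z = x ∨ Γ.per y' ≤ Γ.gap z y' + Γ.gap y' x) ∧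
      ∀ z, S.Snk d.fst z → z = y' ∨ Γ.per y' ≤ Γ.gap y' x + Γ.gap x z) ↔
      (Γ.per y' ≤ Γ.gap x' y' + Γ.gap y' x ∧ Γ.per y' ≤ Γ.gap y' x + Γ.gap x y) := by
    constructor
    · exact fun h => ⟨(h.1 x' hx').resolve_left nxx.symm, (h.2 y hy).resolve_left nyy⟩
    · exact fun h => ⟨fun z hz => hT.src_unique hx' hz ▸ Or.inr h.1,
        fun z hz => hS.snk_unique hy hz ▸ Or.inr h.2⟩
  rw [g1, g2]
  have fxy : x.fst = y.fst := hx.1.trans hy.1.symm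
  have fxx : x.fst = x'.fst := hx.1.trans hx'.1.symm
  have fxy' : x.fst = y'.fst := hx.1.trans hy'.1.symm
  have fyx' : y.fst = x'.fst := hy.1.trans hx'.1.symm
  have fx'y' : x'.fst = y'.fst := hx'.1.trans hy'.1.symm
  have fxd : x.fst = d.fst := hx.1
  have p1 := Γ.per_eq fxy
  have p2 := Γ.per_eq fxy'
  have p3 := Γ.per_eq fxx
  have b1 := Γ.gap_lt_per fxy
  have b2 := Γ.gap_lt_per fxx
  have b3 := Γ.gap_lt_per fxy'
  have b4 := Γ.gap_lt_per fyx'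
  have b5 := Γ.gap_lt_per fx'y'
  have b6 := Γ.gap_lt_per fxd
  have b7 := Γ.gap_lt_per (fxx.symm.trans fxd)
  have z1 := (Γ.gap_eq_zero fxy).not.2 (hS.src_ne_snk hx hy)
  have z2 := (Γ.gap_eq_zero fxx).not.2 nxx
  have z3 := (Γ.gap_eq_zero fxy').not.2 nxy
  have n1 : Γ.gap x y ≠ Γ.gap x x' := fun h => nyx (Γ.gap_inj fxy fxx h)
  have n2 : Γ.gap x y ≠ Γ.gap x y' := fun h => nyy (Γ.gap_inj fxy fxy' h)
  have n3 : Γ.gap x x' ≠ Γ.gap x y' :=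
    fun h => hT.src_ne_snk hx' hy' (Γ.gap_inj fxx fxy' h)
  have t1 := Γ.gap_add_gap fxy fyx'
  have t2 := Γ.gap_add_gap fxx fx'y'
  have t3 := Γ.gap_add_gap_self fxx nxx
  have t4 := Γ.gap_add_gap_self fxy' nxy
  have t5 := Γ.gap_add_gap fxx (fxx.symm.trans fxd)
  omega

end TwoTermComplex

/-! ### Two diagrams with a connected intersection -/

namespace BrauerTree.Part

variable {V : Type v} {Γ : BrauerTree V}

lemma inter_comm (D D' : Γ.Part) : D.inter D' = D'.inter D := by
  ext : 1
  · exact Set.inter_comm _ _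
  · exact Set.inter_comm _ _

lemma Connected.exists_arrow {D : Γ.Part} (hD : D.Connected) (hD' : D.verts.Nontrivial)
    {x : Γ.Edge} (hx : x ∈ D.verts) : ∃ d ∈ D.arrows, Γ.src d = x ∨ Γ.tgt d = x := by
  by_contra hno
  push Not at hno
  obtain ⟨z, hz, hzx⟩ := hD'.exists_ne x
  have key : ∀ a b, Relation.EqvGen (fun x y => ∃ d ∈ D.arrows, Γ.src d = x ∧ Γ.tgt d = y) a b →
      (a = x ↔ b = x) := by
    intro a b h
    induction h with
    | rel a b h =>
      obtain ⟨d, hd, rfl, rfl⟩ := h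
      exact iff_of_false (hno d hd).1 (hno d hd).2
    | refl => exact Iff.rfl
    | symm _ _ _ ih => exact ih.symm
    | trans _ _ _ _ _ ih1 ih2 => exact ih1.trans ih2
  exact hzx ((key x z (hD.2 x hx z hz)).1 rfl)

end BrauerTree.Part

namespace TwoTermComplex

variable {V : Type v} [Fintype V] {Γ : BrauerTree V} {K : Type u} [Field K]
variable {S T : TwoTermComplex Γ K}

lemma isString (hT : T.IsPresentation)
    [HasDerivedCategory.{w} (ModuleCat.{max u v} (Γ.Alg K))] (h : T.HomZero T 1) : T.IsString :=
  ⟨T.isZigzag hT.1 h hT.2.1, fun hcd hc hd => T.mat_ne_zero hT.1 h hT.2.1 hcd hc hd⟩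

lemma meet_comm (S T : TwoTermComplex Γ K) : S.meet T = T.meet S := Set.inter_comm _ _

/-- A common marked vertex is not a sink of one diagram and a source of the other. -/
lemma right_notMem_left (hS : S.IsString) (hT : T.IsString)
    (hconn : (S.diagram.inter T.diagram).Connected)
    (hmore : (S.diagram.inter T.diagram).verts.Nontrivial) : ∀ x ∈ S.J, x ∉ T.I := by
  intro x hxS hxT
  obtain ⟨d, hd, rfl | rfl⟩ := hconn.exists_arrow hmore (x := x)
    ⟨Or.inl (Or.inr hxS), Or.inl (Or.inl hxT)⟩
  · exact hS.src_notMem_right hd.1 hxS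
  · exact hT.tgt_notMem_left hd.2 hxT

lemma meet_subset_singleton (hS : S.IsString) (hT : T.IsString)
    (hno : ∀ d : Γ.Arrow, Γ.src d ∈ S.marked → Γ.src d ∉ T.marked) {u : V}
    (hu : u ∈ S.meet T) : ∀ w ∈ S.meet T, w = u :=
  hS.edgeConnected.induction_common hT.edgeConnected hu rfl
    fun d h1 h2 => absurd h2 (hno d h1)

lemma exists_common_dart (hS : S.IsString) (hT : T.IsString) {z : Γ.Arrow}
    (hzS : Γ.src z ∈ S.marked) (hzT : Γ.src z ∈ T.marked) :
    ∀ v ∈ S.meet T, ∃ d : Γ.Arrow, d.fst = v ∧ Γ.src d ∈ S.marked ∩ T.marked :=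
  hS.edgeConnected.induction_common hT.edgeConnected (u := z.fst) ⟨mem_ends hzS, mem_ends hzT⟩
    ⟨z, rfl, hzS, hzT⟩
    fun d h1 h2 _ => ⟨d.symm, rfl, by rw [Γ.src_symm]; exact ⟨h1, h2⟩⟩

lemma common_src_or_snk (hopp : ∀ x ∈ S.J, x ∉ T.I) (hopp' : ∀ x ∈ T.J, x ∉ S.I)
    {c : Γ.Arrow} (hc : Γ.src c ∈ S.marked ∩ T.marked) :
    (S.Src c.fst c ∧ T.Src c.fst c) ∨ (S.Snk c.fst c ∧ T.Snk c.fst c) := by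
  obtain ⟨h1 | h1, h2 | h2⟩ := hc
  · exact Or.inl ⟨⟨rfl, h1⟩, ⟨rfl, h2⟩⟩
  · exact absurd h1 (hopp' _ h2)
  · exact absurd h2 (hopp _ h1)
  · exact Or.inr ⟨⟨rfl, h1⟩, ⟨rfl, h2⟩⟩

lemma exists_sinkType (hS : S.IsString) (hT : T.IsString)
    (hcom : ∀ v ∈ S.meet T, ∃ c, (S.Src v c ∧ T.Src v c) ∨ (S.Snk v c ∧ T.Snk v c))
    {e : Γ.Edge} (he : (S.diagram.inter T.diagram).IsSinkEnd e) :
    ∃ v ∈ S.meet T, S.SinkType T v := by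
  obtain ⟨d, ⟨hdS, hdT⟩, rfl, huniq⟩ := he
  have hmeet : d.fst ∈ S.meet T := ⟨hS.fst_mem_ends hdS, hT.fst_mem_ends hdT⟩
  have hor : Γ.src (Γ.next d) ∈ S.J ∨ Γ.src (Γ.next d) ∈ T.J := by
    by_contra hno
    push Not at hno
    exact hS.next_ne hdS (huniq _ ⟨(hS.next_mem_or hdS).resolve_right hno.1,
      (hT.next_mem_or hdT).resolve_right hno.2⟩ (Or.inl rfl))
  by_cases hboth : Γ.src (Γ.next d) ∈ S.J ∧ Γ.src (Γ.next d) ∈ T.J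
  · have hb := Γ.src_symm (Γ.next d)
    have hbS : S.Snk (Γ.next d).symm.fst (Γ.next d).symm := ⟨rfl, hb ▸ hboth.1⟩
    have hbT : T.Snk (Γ.next d).symm.fst (Γ.next d).symm := ⟨rfl, hb ▸ hboth.2⟩
    refine ⟨_, ⟨mem_ends (Or.inr hbS.2), mem_ends (Or.inr hbT.2)⟩, Or.inr ⟨_, hbS, hbT, ?_⟩⟩
    by_contra hno
    push Not at hno
    obtain ⟨⟨x, hx⟩, x', hx'⟩ := hno
    obtain ⟨d', hd'⟩ := Γ.next.surjective (Γ.next d).symm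
    have h1 : d' = d := huniq d' ⟨hS.prev_snk_mem_diagramArrows hx hbS hd',
      hT.prev_snk_mem_diagramArrows hx' hbT hd'⟩ (Or.inr (by rw [BrauerTree.tgt, hd', hb]; rfl))
    exact Γ.ne_symm _ (h1 ▸ hd')
  · have key : ∀ (S T : TwoTermComplex Γ K) (hS : S.IsString) (hT : T.IsString),
        (∃ c, (S.Src d.fst c ∧ T.Src d.fst c) ∨ (S.Snk d.fst c ∧ T.Snk d.fst c)) →
        d ∈ T.diagramArrows → Γ.src (Γ.next d) ∈ S.J → Γ.src (Γ.next d) ∉ T.J →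
        S.SinkType T d.fst := by
      rintro S T hS hT ⟨c, ⟨h1, h2⟩ | ⟨h1, h2⟩⟩ hdT hb hb'
      · obtain ⟨-, y, -, hy, -⟩ := hT.mem_diagramArrows.1 hdT
        refine Or.inl ⟨c, Γ.next d, y, h1, h2, ⟨Γ.next_fst d, hb⟩, hy, ?_⟩
        rintro rfl
        exact hb' hy.2
      · rw [hS.snk_unique h1 ⟨Γ.next_fst d, hb⟩] at h2
        exact absurd h2.2 hb'
    refine ⟨d.fst, hmeet, ?_⟩
    rcases hor with hb | hb
    · exact key S T hS hT (hcom _ hmeet) hdT hb fun h => hboth ⟨hb, h⟩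
    · refine (key T S hT hS ?_ hdS hb fun h => hboth ⟨h, hb⟩).symm
      obtain ⟨c, hc⟩ := hcom _ hmeet
      exact ⟨c, hc.imp And.symm And.symm⟩

lemma exists_sourceType (hS : S.IsString) (hT : T.IsString)
    (hcom : ∀ v ∈ S.meet T, ∃ c, (S.Src v c ∧ T.Src v c) ∨ (S.Snk v c ∧ T.Snk v c))
    {e : Γ.Edge} (he : (S.diagram.inter T.diagram).IsSourceEnd e) :
    ∃ v ∈ S.meet T, S.SourceType T v := by
  obtain ⟨d, ⟨hdS, hdT⟩, rfl, huniq⟩ := he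
  have hmeet : d.fst ∈ S.meet T := ⟨hS.fst_mem_ends hdS, hT.fst_mem_ends hdT⟩
  have hor : Γ.src d ∈ S.I ∨ Γ.src d ∈ T.I := by
    by_contra hno
    push Not at hno
    obtain ⟨d', rfl⟩ := Γ.next.surjective d
    have h1 := (hS.mem_or_of_next hdS).resolve_right hno.1
    exact hS.next_ne h1
      (huniq _ ⟨h1, (hT.mem_or_of_next hdT).resolve_right hno.2⟩ (Or.inr rfl)).symm
  by_cases hboth : Γ.src d ∈ S.I ∧ Γ.src d ∈ T.I
  · have hb := Γ.src_symm d
    have hbS : S.Src d.symm.fst d.symm := ⟨rfl, hb ▸ hboth.1⟩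
    have hbT : T.Src d.symm.fst d.symm := ⟨rfl, hb ▸ hboth.2⟩
    refine ⟨_, ⟨mem_ends (Or.inl hbS.2), mem_ends (Or.inl hbT.2)⟩, Or.inr ⟨_, hbS, hbT, ?_⟩⟩
    by_contra hno
    push Not at hno
    obtain ⟨⟨y, hy⟩, y', hy'⟩ := hno
    exact Γ.ne_symm d (huniq d.symm ⟨hS.src_mem_diagramArrows hbS hy,
      hT.src_mem_diagramArrows hbT hy'⟩ (Or.inl hb)).symm
  · have key : ∀ (S T : TwoTermComplex Γ K) (hS : S.IsString) (hT : T.IsString),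
        (∃ c, (S.Src d.fst c ∧ T.Src d.fst c) ∨ (S.Snk d.fst c ∧ T.Snk d.fst c)) →
        d ∈ T.diagramArrows → Γ.src d ∈ S.I → Γ.src d ∉ T.I → S.SourceType T d.fst := by
      rintro S T hS hT ⟨c, ⟨h1, h2⟩ | ⟨h1, h2⟩⟩ hdT hb hb'
      · rw [hS.src_unique h1 ⟨rfl, hb⟩] at h2
        exact absurd h2.2 hb'
      · obtain ⟨x, -, hx, -⟩ := hT.mem_diagramArrows.1 hdT
        refine Or.inl ⟨c, d, x, h1, h2, ⟨rfl, hb⟩, hx, ?_⟩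
        rintro rfl
        exact hb' hx.2
    refine ⟨d.fst, hmeet, ?_⟩
    rcases hor with hb | hb
    · exact key S T hS hT (hcom _ hmeet) hdT hb fun h => hboth ⟨hb, h⟩
    · refine (key T S hT hS ?_ hdS hb fun h => hboth ⟨h, hb⟩).symm
      obtain ⟨c, hc⟩ := hcom _ hmeet
      exact ⟨c, hc.imp And.symm And.symm⟩

open scoped Classical in
/-- The common part has no ends besides a given sink end and a given source end. -/
lemma inner_or_eq_or_eq (hS : S.IsString) (hT : T.IsString)
    (hopp : ∀ x ∈ S.J, x ∉ T.I) (hopp' : ∀ x ∈ T.J, x ∉ S.I)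
    {s r : V} (hs : s ∈ S.meet T) (hr : r ∈ S.meet T) (hs' : S.SinkType T s)
    (hr' : S.SourceType T r) : ∀ v ∈ S.meet T, S.Inner T v ∨ v = s ∨ v = r := by
  intro v hv
  by_contra hno
  push Not at hno
  have hleaf : ∀ u, ¬ S.Inner T u → ∀ d d' : Γ.Arrow, d.fst = u → d'.fst = u →
      Γ.src d ∈ S.marked ∩ T.marked → Γ.src d' ∈ S.marked ∩ T.marked → d = d' := by
    rintro u hu d d' rfl hd' h h'
    have h1 := common_src_or_snk hopp hopp' h
    have h2 := common_src_or_snk hopp hopp' h'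
    rw [hd'] at h2
    rcases h1 with h1 | h1 <;> rcases h2 with h2 | h2
    · exact hS.src_unique h1.1 h2.1
    · exact absurd ⟨d, d', h1.1, h1.2, h2.1, h2.2⟩ hu
    · exact absurd ⟨d', d, h2.1, h2.2, h1.1, h1.2⟩ hu
    · exact hS.snk_unique h1.1 h2.1
  have hcard := hS.edgeConnected.no_three_leaves hT.edgeConnected
    (c := fun _ e => decide (e ∈ S.I)) (s := {s, r, v}) (by
      intro d d' hdd h h' hcc
      rw [decide_eq_decide] at hcc
      by_cases hd : Γ.src d ∈ S.I
      · exact hS.src_unique (v := d.fst) ⟨rfl, hd⟩ ⟨hdd.symm, hcc.1 hd⟩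
      · exact hS.snk_unique (v := d.fst) ⟨rfl, h.1.resolve_left hd⟩
          ⟨hdd.symm, h'.1.resolve_left fun h => hd (hcc.2 h)⟩)
    (by
      intro u hu
      simp only [Finset.mem_insert, Finset.mem_singleton] at hu
      rcases hu with rfl | rfl | rfl
      · exact ⟨hs, hleaf _ fun h => h.not_sinkType hS hT hs'⟩
      · exact ⟨hr, hleaf _ fun h => h.not_sourceType hS hT hr'⟩
      · exact ⟨hv, hleaf _ hno.1⟩)
  have hsr : s ≠ r := fun h => hs'.not_sourceType hS hT (h ▸ hr')
  rw [Finset.card_eq_three.2 ⟨s, r, v, hsr, hno.2.1.symm, hno.2.2.symm, rfl⟩] at hcard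
  omega

lemma exists_meet_iff {s r : V} (hs : s ∈ S.meet T) (hr : r ∈ S.meet T)
    (hall : ∀ v ∈ S.meet T, S.Inner T v ∨ v = s ∨ v = r) {P : V → Prop}
    (hP : ∀ v, S.Inner T v → ¬ P v) : (∃ v ∈ S.meet T, P v) ↔ P s ∨ P r := by
  constructor
  · rintro ⟨v, hv, h⟩
    rcases hall v hv with h' | rfl | rfl
    · exact absurd h (hP v h')
    · exact Or.inl h
    · exact Or.inr h
  · rintro (h | h)
    · exact ⟨s, hs, h⟩
    · exact ⟨r, hr, h⟩

lemma forall_meet_iff {s r : V} (hs : s ∈ S.meet T) (hr : r ∈ S.meet T)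
    (hall : ∀ v ∈ S.meet T, S.Inner T v ∨ v = s ∨ v = r) {P : V → Prop}
    (hP : ∀ v, S.Inner T v → P v) : (∀ v ∈ S.meet T, P v) ↔ P s ∧ P r := by
  constructor
  · exact fun h => ⟨h s hs, h r hr⟩
  · rintro ⟨h1, h2⟩ v hv
    rcases hall v hv with h' | rfl | rfl
    · exact hP v h'
    · exact h1
    · exact h2

/-- The criterion for two alternating paths. -/
theorem homZero_and_homZero_iff (hS : S.IsString) (hT : T.IsString)
    [HasDerivedCategory.{w} (ModuleCat.{max u v} (Γ.Alg K))]
    (hconn : (S.diagram.inter T.diagram).Connected)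
    (hmore : (S.diagram.inter T.diagram).verts.Nontrivial)
    {x y : Γ.Edge} (hx : (S.diagram.inter T.diagram).IsSinkEnd x)
    (hy : (S.diagram.inter T.diagram).IsSourceEnd y) :
    (S.HomZero T (-1) ∧ T.HomZero S (-1)) ↔
      ((S.restriction T).Contained (T.restriction S) ∨
        (T.restriction S).Contained (S.restriction T)) := by
  have hopp := right_notMem_left hS hT hconn hmore
  have hopp' : ∀ x ∈ T.J, x ∉ S.I := by
    rw [BrauerTree.Part.inter_comm] at hconn hmore
    exact right_notMem_left hT hS hconn hmore
  obtain ⟨d, ⟨hdS, hdT⟩, -⟩ := id hx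
  have hmeet : d.fst ∈ S.meet T := ⟨hS.fst_mem_ends hdS, hT.fst_mem_ends hdT⟩
  rw [homZero_iff_exists_not_good hS hT hopp (fun x h h' => hopp' x h' h) ⟨_, hmeet⟩,
    homZero_iff_exists_not_good hT hS hopp' (fun x h h' => hopp x h' h) (meet_comm S T ▸ ⟨_, hmeet⟩)]
  by_cases hno : ∀ d : Γ.Arrow, Γ.src d ∈ S.marked → Γ.src d ∉ T.marked
  · have hsing : S.meet T = {d.fst} := Set.eq_singleton_iff_unique_mem.2
      ⟨hmeet, meet_subset_singleton hS hT hno hmeet⟩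
    have hsing' : T.meet S = {d.fst} := meet_comm S T ▸ hsing
    obtain ⟨a, b, ha, hb, -⟩ := hS.mem_diagramArrows.1 hdS
    obtain ⟨a', b', ha', hb', -⟩ := hT.mem_diagramArrows.1 hdT
    rw [contained_iff hS hT ⟨_, hmeet⟩ (by
        rw [hsing]; rintro _ rfl; exact Or.inr ⟨a, b, ha, hb⟩),
      contained_iff hT hS (meet_comm S T ▸ ⟨_, hmeet⟩) (by
        rw [hsing']; rintro _ rfl; exact Or.inr ⟨a', b', ha', hb'⟩), hsing, hsing']
    simpa using not_good_iff_sub hS hT hno rfl hdS hdT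
  · push Not at hno
    obtain ⟨z, hzS, hzT⟩ := hno
    have hdart := exists_common_dart hS hT hzS hzT
    have hcom : ∀ v ∈ S.meet T, ∃ c, (S.Src v c ∧ T.Src v c) ∨ (S.Snk v c ∧ T.Snk v c) := by
      intro v hv
      obtain ⟨c, rfl, hc⟩ := hdart v hv
      exact ⟨c, common_src_or_snk hopp hopp' hc⟩
    obtain ⟨s, hs, hs'⟩ := exists_sinkType hS hT hcom hx
    obtain ⟨r, hr, hr'⟩ := exists_sourceType hS hT hcom hy
    have hall := inner_or_eq_or_eq hS hT hopp hopp' hs hr hs' hr'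
    rw [contained_iff hS hT ⟨_, hmeet⟩ fun v hv => Or.inl (hdart v hv),
      contained_iff hT hS (meet_comm S T ▸ ⟨_, hmeet⟩) fun v hv => Or.inl (by
        rw [Set.inter_comm]; exact hdart v (meet_comm S T ▸ hv)),
      meet_comm T S, exists_meet_iff hs hr hall fun v h => not_not.2 (h.sub_and_good hS hT).2,
      exists_meet_iff hs hr hall fun v h => not_not.2 (h.symm.sub_and_good hT hS).2,
      forall_meet_iff hs hr hall fun v h => (h.sub_and_good hS hT).1,
      forall_meet_iff hs hr hall fun v h => (h.symm.sub_and_good hT hS).1]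
    have h1 := hs'.cases hS hT
    have h2 := hr'.cases hS hT
    tauto

end TwoTermComplex

theorem hom_vanishes_iff_nested_restrictions_sink_source
    {K : Type u} [Field K] [IsAlgClosed K] {V : Type v} [Fintype V] (Γ : BrauerTree V)
    [HasDerivedCategory.{w} (ModuleCat.{max u v} (Γ.Alg K))]
    (Ti Tj : TwoTermComplex Γ K)
    (hi : Ti.IsIndecPartialTilting) (hj : Tj.IsIndecPartialTilting)
    (hpi : Ti.IsPresentation) (hpj : Tj.IsPresentation)
    (hconn : (Ti.diagram.inter Tj.diagram).Connected)
    (hmore : (Ti.diagram.inter Tj.diagram).verts.Nontrivial)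
    (hends : ∃ x y, (Ti.diagram.inter Tj.diagram).IsSinkEnd x ∧
      (Ti.diagram.inter Tj.diagram).IsSourceEnd y) :
    (Ti.HomZero Tj (-1) ∧ Tj.HomZero Ti (-1)) ↔
      ((Ti.restriction Tj).Contained (Tj.restriction Ti) ∨
        (Tj.restriction Ti).Contained (Ti.restriction Tj)) := by
  obtain ⟨x, y, hx, hy⟩ := hends
  exact TwoTermComplex.homZero_and_homZero_iff (TwoTermComplex.isString hpi (hi.2 1 one_ne_zero))
    (TwoTermComplex.isString hpj (hj.2 1 one_ne_zero)) hconn hmore hx hy
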